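/- Let k ≥ 2 be an integer, let ϱ₁, …, ϱ_n ∈ ℍ be points lying in pairwise distinct SL₂(ℤ)-orbits, and let α₁, …, α_n ∈ ℝ. Then there exists exactly one function f : ℍ → ℂ with the following properties: (i) f is holomorphic on ℍ ∖ ⋃ᵢ SL₂(ℤ)ϱᵢ; (ii) f(γz) = (cz+d)^{2k}·f(z) for all γ = (a b; c d) ∈ SL₂(ℤ) and all z ∈ ℍ ∖ ⋃ᵢ SL₂(ℤ)ϱᵢ; (iii) f(z) → 0 as Im(z) → ∞, uniformly in Re(z); (iv) for each i the function z ↦ f(z) − αᵢ·((z−ϱᵢ)(z−conj(ϱᵢ))/(ϱᵢ−conj(ϱᵢ)))^{−k} is bounded on a punctured neighborhood of ϱᵢ; (v) for every primitive hyperbolic γ ∈ SL₂(ℤ), every z₀ ∈ ℍ ∖ ⋃ᵢ SL₂(ℤ)ϱᵢ, and every piecewise continuously differentiable path σ in ℍ ∖ ⋃ᵢ SL₂(ℤ)ϱᵢ from z₀ to γz₀, one has Re( (i/√(d_γ))^{k−1} ∫_σ f(z)·Q_γ(z,1)^{k−1} dz ) = 0. (This function f is the canonical meromorphic modular form of weight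 2k associated with the divisor ∑ᵢ αᵢ[ϱᵢ].) -/

import Mathlib

open Complex ComplexConjugate Metric Set MeasureTheory

noncomputable section

/-- The upper half-plane, as a subset of `ℂ`. -/
def UH : Set ℂ := {z | 0 < z.im}

abbrev SL2Z := Matrix.SpecialLinearGroup (Fin 2) ℤ

/-- The Möbius action `γz = (az+b)/(cz+d)` of `SL₂(ℤ)` on the upper half-plane
(written as a map on `ℂ`). -/
def moeb (γ : SL2Z) (z : ℂ) : ℂ :=
  ((γ.1 0 0 : ℂ) * z + (γ.1 0 1 : ℂ)) / ((γ.1 1 0 : ℂ) * z + (γ.1 1 1 : ℂ))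

/-- The `SL₂(ℤ)`-orbit of a point `ϱ`. -/
def orbit (ϱ : ℂ) : Set ℂ := {z | ∃ γ : SL2Z, z = moeb γ ϱ}

/-- `γ ∈ SL₂(ℤ)` is hyperbolic if `|a + d| > 2`. -/
def IsHyperbolic (γ : SL2Z) : Prop := 2 < |γ.1 0 0 + γ.1 1 1|

/-- `γ ∈ SL₂(ℤ)` is primitive if it is not a power `γ₀^m`, `m ≥ 2`, of another element. -/
def IsPrimitive (γ : SL2Z) : Prop := ¬∃ (γ₀ : SL2Z) (m : ℕ), 2 ≤ m ∧ γ = γ₀ ^ m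

/-- The binary quadratic form `Q_γ(z,1) = cz² + (d−a)z − b` attached to `γ`. -/
def Qpoly (γ : SL2Z) (z : ℂ) : ℂ :=
  (γ.1 1 0 : ℂ) * z ^ 2 + ((γ.1 1 1 - γ.1 0 0 : ℤ) : ℂ) * z - (γ.1 0 1 : ℂ)

/-- The discriminant `d_γ = (a+d)² − 4` of `Q_γ`. -/
def discr (γ : SL2Z) : ℝ := ((γ.1 0 0 + γ.1 1 1 : ℤ) : ℝ) ^ 2 - 4

/-- The factor `(i/√(d_γ))^(k−1)` appearing in the geodesic pairing. -/
def geodFactor (k : ℕ) (γ : SL2Z) : ℂ := (Complex.I / (Real.sqrt (discr γ) : ℂ)) ^ (k - 1)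

/-- Complex line integral of `f` along the path `σ : [0,1] → ℂ`. -/
def pathInt (f : ℂ → ℂ) (σ : ℝ → ℂ) : ℂ := ∫ t in (0 : ℝ)..1, f (σ t) * deriv σ t

/-- `σ : [0,1] → ℂ` is a piecewise continuously differentiable path. -/
def PiecewiseC1 (σ : ℝ → ℂ) : Prop :=
  ContinuousOn σ (Set.Icc 0 1) ∧
    ∃ (n : ℕ) (t : ℕ → ℝ), 0 < n ∧ t 0 = 0 ∧ t n = 1 ∧ (∀ i < n, t i ≤ t (i + 1)) ∧
      ∀ i < n, ContDiffOn ℝ 1 σ (Set.Icc (t i) (t (i + 1)))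

/-- The elliptic pole term `((z−ϱ)(z−conj ϱ)/(ϱ−conj ϱ))^(−k)`. -/
def polePart (k : ℕ) (ϱ z : ℂ) : ℂ :=
  ((z - ϱ) * (z - conj ϱ) / (ϱ - conj ϱ)) ^ (-(k : ℤ))

/-- The union of the `SL₂(ℤ)`-orbits of the points `ϱ i`. -/
def orbitUnion {n : ℕ} (ϱ : Fin n → ℂ) : Set ℂ := ⋃ i, orbit (ϱ i)

/-- The defining properties of the canonical meromorphic modular form of weight `2k`
associated with the divisor `∑ᵢ αᵢ[ϱᵢ]`:
(i) holomorphy on `ℍ ∖ ⋃ᵢ SL₂(ℤ)ϱᵢ`; (ii) weight `2k` modularity; (iii) vanishing at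
the cusp, uniformly in `Re z`; (iv) poles of order `k` at the `ϱᵢ` with elliptic leading
coefficients `αᵢ`; (v) vanishing of the real parts of all cycle integrals along closed
geodesics. -/
def IsCanonicalForm (k : ℕ) {n : ℕ} (ϱ : Fin n → ℂ) (α : Fin n → ℝ) (f : ℂ → ℂ) : Prop :=
  DifferentiableOn ℂ f (UH \ orbitUnion ϱ) ∧
  (∀ γ : SL2Z, ∀ z ∈ UH \ orbitUnion ϱ,
    f (moeb γ z) = ((γ.1 1 0 : ℂ) * z + (γ.1 1 1 : ℂ)) ^ (2 * k) * f z) ∧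
  (∀ ε > 0, ∃ T : ℝ, ∀ z ∈ UH \ orbitUnion ϱ, T < z.im → ‖f z‖ < ε) ∧
  (∀ i, ∃ δ > 0, ∃ Cb : ℝ, ∀ z ∈ (Metric.ball (ϱ i) δ \ {ϱ i}) ∩ (UH \ orbitUnion ϱ),
    ‖f z - (α i : ℂ) * polePart k (ϱ i) z‖ ≤ Cb) ∧
  (∀ γ : SL2Z, IsHyperbolic γ → IsPrimitive γ →
    ∀ z₀ ∈ UH \ orbitUnion ϱ, ∀ σ : ℝ → ℂ, PiecewiseC1 σ → σ 0 = z₀ →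
      σ 1 = moeb γ z₀ → (∀ t ∈ Set.Icc (0 : ℝ) 1, σ t ∈ UH \ orbitUnion ϱ) →
      (geodFactor k γ * pathInt (fun z => f z * Qpoly γ z ^ (k - 1)) σ).re = 0)

/-! Existence: `∑ αᵢ ∑_{o ∈ SL₂(ℤ)ϱᵢ} polePart k o` is a Poincaré series with the prescribed poles.
In the Cayley coordinate `w = (z - o) / (z - conj o)`, the integrand of a cycle integral becomes,
up to a constant, a Laurent polynomial in `w` with conjugation-symmetric coefficients. Its residue
contributes a multiple of `log ‖w‖` to the real primitive, so that primitive is single-valued.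
Normalised to vanish on `‖w‖ = 1`, it is canonical, hence equivariant, and small enough to be summed
over the orbit. The resulting primitive takes the same value at `z₀` and `γ z₀`.

Uniqueness: the difference of two canonical forms has removable singularities, so it is a cusp form
`g` whose real periods over primitive hyperbolic elements vanish. Expressing these periods for words
`S Tᵃ S Tᵇ S Tᶜ` by the coefficients of the period polynomial of `g`, and letting `a, b, c` vary,
forces all but the extreme coefficients to vanish. Then the real part of the Eichler integral of `g`
against the `K`-th power of the form with root `z`, suitably normalised, is a modular invariant
eigenfunction of the hyperbolic Laplacian with eigenvalue `K (K + 1) > 0` which tends to `0` at the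
cusp. By the maximum principle it vanishes, and then so do the iterated primitives of `g`. -/

/-! ### The action of `SL₂(ℤ)` on the upper half-plane -/

/-- The automorphy factor `cz + d` of the Möbius action, extended to all `z : ℂ` so that it can
also be evaluated at conjugates of points of the upper half-plane. -/
def autFactor (γ : SL2Z) (z : ℂ) : ℂ := (γ.1 1 0 : ℂ) * z + (γ.1 1 1 : ℂ)

theorem SL2Z_det (γ : SL2Z) : γ.1 0 0 * γ.1 1 1 - γ.1 0 1 * γ.1 1 0 = 1 :=
  (Matrix.det_fin_two _).symm.trans γ.det_coe

theorem SL2Z_det_complex (γ : SL2Z) :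
    (γ.1 0 0 : ℂ) * γ.1 1 1 - (γ.1 0 1 : ℂ) * γ.1 1 0 = 1 := mod_cast SL2Z_det γ

theorem moeb_eq (γ : SL2Z) (z : ℂ) :
    moeb γ z = ((γ.1 0 0 : ℂ) * z + (γ.1 0 1 : ℂ)) / autFactor γ z := rfl

theorem moeb_conj (γ : SL2Z) (z : ℂ) : moeb γ (conj z) = conj (moeb γ z) := by simp [moeb]

theorem autFactor_conj (γ : SL2Z) (z : ℂ) : autFactor γ (conj z) = conj (autFactor γ z) := by
  simp [autFactor]

theorem moeb_one (z : ℂ) : moeb 1 z = z := by simp [moeb]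

theorem coe_smul_eq_moeb (γ : SL2Z) (z : UpperHalfPlane) : ((γ • z : UpperHalfPlane) : ℂ) =
    moeb γ z :=
  UpperHalfPlane.coe_specialLinearGroup_apply γ z

theorem denom_eq_autFactor (γ : SL2Z) (z : UpperHalfPlane) :
    UpperHalfPlane.denom γ z = autFactor γ z := ModularGroup.denom_apply γ z

section MoebiusAction

variable {z w : ℂ} {γ δ : SL2Z}

theorem im_ne_zero_of_mem_UH (hz : z ∈ UH) : z.im ≠ 0 := ne_of_gt hz

theorem conj_im_ne_zero_of_mem_UH (hz : z ∈ UH) : (conj z).im ≠ 0 := by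
  simpa using im_ne_zero_of_mem_UH hz

theorem autFactor_ne_zero (hz : z.im ≠ 0) : autFactor γ z ≠ 0 := by
  rcases hz.lt_or_gt with hz | hz
  · lift conj z to UpperHalfPlane using by simpa using hz with τ hτ
    have := UpperHalfPlane.denom_ne_zero γ τ
    rwa [denom_eq_autFactor, hτ, autFactor_conj, map_ne_zero] at this
  · lift z to UpperHalfPlane using hz
    exact denom_eq_autFactor γ z ▸ UpperHalfPlane.denom_ne_zero γ z

theorem moeb_mem_UH (hz : z ∈ UH) : moeb γ z ∈ UH := by
  lift z to UpperHalfPlane using hz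
  exact coe_smul_eq_moeb γ z ▸ (γ • z).im_pos

theorem moeb_mul (hz : z ∈ UH) : moeb (γ * δ) z = moeb γ (moeb δ z) := by
  lift z to UpperHalfPlane using hz
  simp only [← coe_smul_eq_moeb, mul_smul]

theorem moeb_im (hz : z ∈ UH) : (moeb γ z).im = z.im / ‖autFactor γ z‖ ^ 2 := by
  lift z to UpperHalfPlane using hz
  rw [← coe_smul_eq_moeb, ← denom_eq_autFactor, ← normSq_eq_norm_sq]
  exact ModularGroup.im_smul_eq_div_normSq γ z

theorem moeb_sub (hz : z.im ≠ 0) (hw : w.im ≠ 0) :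
    moeb γ z - moeb γ w = (z - w) / (autFactor γ z * autFactor γ w) := by
  rw [moeb_eq, moeb_eq, div_sub_div _ _ (autFactor_ne_zero hz) (autFactor_ne_zero hw)]
  congr 1
  simp only [autFactor]
  linear_combination (z - w) * SL2Z_det_complex γ

theorem moeb_inv_moeb (hz : z ∈ UH) : moeb γ⁻¹ (moeb γ z) = z := by
  rw [← moeb_mul hz, inv_mul_cancel, moeb_one]

theorem moeb_moeb_inv (hz : z ∈ UH) : moeb γ (moeb γ⁻¹ z) = z := by
  rw [← moeb_mul hz, mul_inv_cancel, moeb_one]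

theorem isOpen_UH : IsOpen UH := isOpen_lt continuous_const continuous_im

end MoebiusAction

section Orbit

variable {ϱ z : ℂ}

theorem mem_orbit_self (ϱ : ℂ) : ϱ ∈ orbit ϱ := ⟨1, (moeb_one _).symm⟩

theorem orbit_subset_UH (hϱ : ϱ ∈ UH) : orbit ϱ ⊆ UH := by
  rintro _ ⟨γ, rfl⟩
  exact moeb_mem_UH hϱ

theorem moeb_mem_orbit (hϱ : ϱ ∈ UH) {o : ℂ} (ho : o ∈ orbit ϱ) (γ : SL2Z) :
    moeb γ o ∈ orbit ϱ := by
  obtain ⟨δ, rfl⟩ := ho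
  exact ⟨γ * δ, (moeb_mul hϱ).symm⟩

theorem moeb_mem_orbit_iff (hϱ : ϱ ∈ UH) (hz : z ∈ UH) (γ : SL2Z) :
    moeb γ z ∈ orbit ϱ ↔ z ∈ orbit ϱ := by
  refine ⟨fun h => ?_, fun h => moeb_mem_orbit hϱ h γ⟩
  rw [← moeb_inv_moeb (γ := γ) hz]
  exact moeb_mem_orbit hϱ h γ⁻¹

end Orbit

/-- The weight `Im o / (1 + |o|²)` of a point of the upper half-plane: it is square-summable over
every `SL₂(ℤ)`-orbit and controls all the orbit sums below. -/
def orbitWeight (o : ℂ) : ℝ := o.im / (1 + ‖o‖ ^ 2)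

section OrbitWeight

variable {ϱ z o : ℂ}

theorem orbitWeight_pos (ho : o ∈ UH) : 0 < orbitWeight o :=
  div_pos ho (by positivity)

theorem orbitWeight_le_one (o : ℂ) : orbitWeight o ≤ 1 := by
  rw [orbitWeight, div_le_one (by positivity)]
  nlinarith [sq_nonneg (‖o‖ - 1), (le_abs_self o.im).trans (abs_im_le_norm o)]

theorem orbitWeight_pow_le_sq (ho : o ∈ UH) {k : ℕ} (hk : 2 ≤ k) :
    orbitWeight o ^ k ≤ orbitWeight o ^ 2 :=
  pow_le_pow_of_le_one (orbitWeight_pos ho).le (orbitWeight_le_one o) hk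

theorem summable_inv_one_add_int_sq : Summable fun n : ℤ => (1 + (n : ℝ) ^ 2)⁻¹ := by
  refine (Real.summable_one_div_int_pow (p := 2)).mpr one_lt_two
    |>.of_norm_bounded_eventually ?_
  filter_upwards [(finite_singleton (0 : ℤ)).compl_mem_cofinite] with n (hn : n ≠ 0)
  rw [Real.norm_of_nonneg (by positivity), ← one_div]
  exact one_div_le_one_div_of_le (by positivity) (by linarith)

theorem exists_int_moeb_eq_add {γ δ : SL2Z} (hz : z.im ≠ 0) (hc : γ.1 1 0 = δ.1 1 0)
    (hd : γ.1 1 1 = δ.1 1 1) : ∃ m : ℤ, moeb γ z = moeb δ z + m := by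
  have hj : autFactor γ z = autFactor δ z := by simp only [autFactor, hc, hd]
  have hγ := SL2Z_det_complex γ
  rw [hc, hd] at hγ
  refine ⟨γ.1 0 1 * δ.1 0 0 - γ.1 0 0 * δ.1 0 1, ?_⟩
  rw [moeb_eq, moeb_eq, hj, div_eq_iff (autFactor_ne_zero hz), add_mul,
    div_mul_cancel₀ _ (autFactor_ne_zero hz), autFactor]
  push_cast
  linear_combination (-γ.1 0 0 * z - γ.1 0 1 : ℂ) * SL2Z_det_complex δ +
    (δ.1 0 0 * z + δ.1 0 1 : ℂ) * hγ

theorem one_add_floor_sq_le (x : ℝ) : 1 + (⌊x⌋ : ℝ) ^ 2 ≤ 3 * (1 + x ^ 2) := by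
  have h₁ := Int.floor_le x
  have h₂ := Int.lt_floor_add_one x
  nlinarith [sq_nonneg ((⌊x⌋ : ℝ) - 2 * x)]

theorem orbitWeight_sq_le (ho : o ∈ UH) :
    orbitWeight o ^ 2 ≤ 9 * (o.im ^ 2 * (1 + (⌊o.re⌋ : ℝ) ^ 2)⁻¹) := by
  have ho' : 0 < o.im := ho
  have hre : 1 + (⌊o.re⌋ : ℝ) ^ 2 ≤ 3 * (1 + ‖o‖ ^ 2) := by
    refine (one_add_floor_sq_le _).trans ?_
    linarith [sq_le_sq.mpr ((abs_re_le_norm o).trans (le_abs_self _))]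
  calc orbitWeight o ^ 2 ≤ (o.im / ((1 + (⌊o.re⌋ : ℝ) ^ 2) / 3)) ^ 2 := by
        unfold orbitWeight; gcongr; linarith
    _ = 9 * (o.im ^ 2 * ((1 + (⌊o.re⌋ : ℝ) ^ 2)⁻¹) ^ 2) := by field_simp; norm_num
    _ ≤ _ := by
        gcongr
        exact pow_le_of_le_one (by positivity) (inv_le_one_of_one_le₀ (by nlinarith)) two_ne_zero

/-- Points of an orbit are determined by the bottom row `(c, d)` of a transporting matrix and an
integer part; `Im o = Im ϱ / |cϱ + d|²` then compares the sum with an Eisenstein series. -/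
theorem summable_orbitWeight_sq (hϱ : ϱ ∈ UH) :
    Summable fun o : orbit ϱ => orbitWeight o ^ 2 := by
  choose g hg using fun o : orbit ϱ => o.2
  let F : orbit ϱ → (Fin 2 → ℤ) × ℤ := fun o => (![(g o).1 1 0, (g o).1 1 1], ⌊(o : ℂ).re⌋)
  have hF : F.Injective := by
    intro o p hop
    obtain ⟨hrow, hfloor⟩ := Prod.mk.inj hop
    obtain ⟨m, hm⟩ := exists_int_moeb_eq_add (im_ne_zero_of_mem_UH hϱ)
      (by simpa using congrFun hrow 0) (by simpa using congrFun hrow 1)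
    rw [← hg, ← hg] at hm
    have hm0 : m = 0 := by simpa [hm] using hfloor
    exact Subtype.ext (by simpa [hm0] using hm)
  lift ϱ to UpperHalfPlane using hϱ
  have hsum := (EisensteinSeries.summable_norm_eisSummand (k := 4) (by norm_num) ϱ).mul_of_nonneg
    summable_inv_one_add_int_sq (fun _ => norm_nonneg _) fun _ => by positivity
  refine .of_nonneg_of_le (fun _ => sq_nonneg _) (fun o => ?_)
    ((hsum.comp_injective hF).mul_left (9 * ϱ.im ^ 2))
  have him : (o : ℂ).im = ϱ.im / ‖autFactor (g o) ϱ‖ ^ 2 := by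
    conv_lhs => rw [hg o, moeb_im ϱ.im_pos]
    rfl
  have heis : ‖EisensteinSeries.eisSummand 4 (F o).1 ϱ‖ = (‖autFactor (g o) ϱ‖ ^ 4)⁻¹ := by
    rw [← norm_pow, ← norm_inv]; rfl
  refine (orbitWeight_sq_le (orbit_subset_UH ϱ.im_pos o.2)).trans_eq ?_
  rw [Function.comp_apply, heis, him]
  ring

theorem finite_orbit_inter_le_orbitWeight (hϱ : ϱ ∈ UH) {ε : ℝ} (hε : 0 < ε) :
    (orbit ϱ ∩ {o | ε ≤ orbitWeight o}).Finite := by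
  have hlt := (summable_orbitWeight_sq hϱ).tendsto_cofinite_zero.eventually_lt_const
    (show 0 < ε ^ 2 by positivity)
  refine ((Filter.eventually_cofinite.mp hlt).image ((↑) : orbit ϱ → ℂ)).subset ?_
  rintro o ⟨ho, hεo⟩
  exact ⟨⟨o, ho⟩, not_lt.mpr (pow_le_pow_left₀ hε.le hεo 2), rfl⟩

open Filter Topology in
theorem eventually_notMem_orbit (hϱ : ϱ ∈ UH) (hz : z ∈ UH) : ∀ᶠ w in 𝓝[≠] z, w ∉ orbit ϱ := by
  have hcont : ContinuousAt orbitWeight z := by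
    unfold orbitWeight
    exact ContinuousAt.div (by fun_prop) (by fun_prop) (by positivity)
  have hpos := orbitWeight_pos hz
  have hbig : ∀ᶠ w in 𝓝[≠] z, orbitWeight z / 2 < orbitWeight w :=
    (hcont.eventually_const_lt (half_lt_self hpos)).filter_mono nhdsWithin_le_nhds
  have hfin := (finite_orbit_inter_le_orbitWeight hϱ (half_pos hpos)).subset
    (sdiff_subset (t := {z}))
  have hother := hfin.isClosed.isOpen_compl.mem_nhds (x := z) fun h => h.2 rfl
  filter_upwards [hbig, nhdsWithin_le_nhds hother, self_mem_nhdsWithin] with w hw hnot hne hwo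
  exact hnot ⟨⟨hwo, hw.le⟩, hne⟩

end OrbitWeight

/-! ### Poincaré series with elliptic poles -/

/-- The Poincaré series of the elliptic pole term `polePart k ϱ`: the sum over the orbit of `ϱ`
itself, so that every pole is counted once whatever the stabilizer of `ϱ`. -/
def poincareSeries (k : ℕ) (ϱ z : ℂ) : ℂ := ∑' o : orbit ϱ, polePart k o z

section PolePart

variable {k : ℕ} {z o : ℂ}

theorem ne_conj_of_mem_UH (hz : z ∈ UH) (ho : o ∈ UH) : z ≠ conj o := by
  rintro rfl
  have hz' : 0 < (conj o).im := hz
  have ho' : 0 < o.im := ho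
  rw [conj_im] at hz'
  linarith

theorem norm_sub_le_norm_sub_conj (hz : z ∈ UH) (ho : o ∈ UH) : ‖z - o‖ ≤ ‖z - conj o‖ := by
  have hz' : 0 < z.im := hz
  have ho' : 0 < o.im := ho
  rw [norm_def, norm_def, normSq_apply, normSq_apply]
  apply Real.sqrt_le_sqrt
  simp only [sub_re, sub_im, conj_re, conj_im]
  nlinarith [mul_pos hz' ho']

theorem norm_polePart (ho : o ∈ UH) :
    ‖polePart k o z‖ = (2 * o.im / (‖z - o‖ * ‖z - conj o‖)) ^ k := by
  have ho' : 0 < o.im := ho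
  rw [polePart, zpow_neg, zpow_natCast, norm_inv, norm_pow, norm_div, norm_mul, sub_conj,
    norm_mul, norm_I, mul_one, norm_real, Real.norm_of_nonneg (by positivity), ← inv_pow, inv_div]

theorem im_div_norm_mul_norm_le {C : ℝ} (ho : o ∈ UH) (hz : z ∈ UH)
    (h : 1 + ‖o‖ ≤ C * ‖z - o‖) :
    o.im / (‖z - o‖ * ‖z - conj o‖) ≤ C ^ 2 * orbitWeight o := by
  have ho' : 0 < o.im := ho
  have hprod : 1 + ‖o‖ ^ 2 ≤ C ^ 2 * (‖z - o‖ * ‖z - conj o‖) :=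
    calc 1 + ‖o‖ ^ 2 ≤ (1 + ‖o‖) ^ 2 := by nlinarith [norm_nonneg o]
      _ ≤ (C * ‖z - o‖) ^ 2 := by gcongr
      _ = C ^ 2 * (‖z - o‖ * ‖z - o‖) := by ring
      _ ≤ _ := by gcongr; exact norm_sub_le_norm_sub_conj hz ho
  have hpos : 0 < ‖z - o‖ * ‖z - conj o‖ :=
    pos_of_mul_pos_right (lt_of_lt_of_le (by positivity) hprod) (sq_nonneg C)
  rw [orbitWeight, mul_div_assoc', div_le_div_iff₀ hpos (by positivity)]
  nlinarith

theorem norm_polePart_le {C : ℝ} (hk : 2 ≤ k) (ho : o ∈ UH) (hz : z ∈ UH)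
    (h : 1 + ‖o‖ ≤ C * ‖z - o‖) :
    ‖polePart k o z‖ ≤ (2 * C ^ 2) ^ k * orbitWeight o ^ 2 := by
  have ho' : 0 < o.im := ho
  calc ‖polePart k o z‖ = (2 * (o.im / (‖z - o‖ * ‖z - conj o‖))) ^ k := by
        rw [norm_polePart ho, mul_div_assoc]
    _ ≤ (2 * (C ^ 2 * orbitWeight o)) ^ k := by
        gcongr
        exact im_div_norm_mul_norm_le ho hz h
    _ = (2 * C ^ 2) ^ k * orbitWeight o ^ k := by rw [← mul_assoc, mul_pow]
    _ ≤ _ := mul_le_mul_of_nonneg_left (orbitWeight_pow_le_sq ho hk) (by positivity)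

theorem differentiableAt_polePart (ho : o ∈ UH) (hz : z ∈ UH) (hzo : z ≠ o) :
    DifferentiableAt ℂ (polePart k o) z := by
  have hbase : (z - o) * (z - conj o) / (o - conj o) ≠ 0 :=
    div_ne_zero (mul_ne_zero (sub_ne_zero.mpr hzo) (sub_ne_zero.mpr (ne_conj_of_mem_UH hz ho)))
      (sub_ne_zero.mpr (ne_conj_of_mem_UH ho ho))
  unfold polePart
  exact DifferentiableAt.zpow (by fun_prop) (Or.inl hbase)

theorem polePart_moeb (ho : o ∈ UH) (hz : z ∈ UH) (γ : SL2Z) :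
    polePart k (moeb γ o) (moeb γ z) = autFactor γ z ^ (2 * k) * polePart k o z := by
  have hzi := im_ne_zero_of_mem_UH hz
  have hoi := im_ne_zero_of_mem_UH ho
  have hci := conj_im_ne_zero_of_mem_UH ho
  have hjz : autFactor γ z ≠ 0 := autFactor_ne_zero hzi
  have hjo : autFactor γ o ≠ 0 := autFactor_ne_zero hoi
  have hjc : autFactor γ (conj o) ≠ 0 := autFactor_ne_zero hci
  have hd : o - conj o ≠ 0 := sub_ne_zero.mpr (ne_conj_of_mem_UH ho ho)
  have hbase : (moeb γ z - moeb γ o) * (moeb γ z - conj (moeb γ o)) /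
      (moeb γ o - conj (moeb γ o)) =
      (autFactor γ z ^ 2)⁻¹ * ((z - o) * (z - conj o) / (o - conj o)) := by
    rw [← moeb_conj, moeb_sub hzi hoi, moeb_sub hzi hci, moeb_sub hoi hci]
    field_simp
  rw [polePart, hbase, mul_zpow, zpow_neg, zpow_natCast, inv_pow, inv_inv, ← pow_mul, polePart]

open Filter Topology in
theorem tendsto_polePart_cobounded (hk : k ≠ 0) (ho : o ∈ UH) :
    Tendsto (polePart k o) (Bornology.cobounded ℂ) (𝓝 0) := by
  have hinv (w : ℂ) : Tendsto (fun z => ‖z - w‖⁻¹) (Bornology.cobounded ℂ) (𝓝 0) :=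
    (tendsto_norm_cobounded_atTop.comp (tendsto_sub_const_cobounded w)).inv_tendsto_atTop
  rw [tendsto_zero_iff_norm_tendsto_zero]
  convert ((hinv o).mul (hinv (conj o)) |>.const_mul (2 * o.im)).pow k using 2 with z
  · rw [norm_polePart ho, div_eq_mul_inv, mul_inv]
  · simp [hk]

end PolePart

section PoincareSeries

variable {k : ℕ} {ϱ z z₀ : ℂ}

theorem exists_ball_one_add_norm_le (hϱ : ϱ ∈ UH) (hz₀ : z₀ ∈ UH) :
    ∃ r > 0, ∃ C > 0, ball z₀ r ⊆ UH ∧ ∀ z ∈ ball z₀ r, ∀ o ∈ orbit ϱ, o ≠ z₀ →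
      1 + ‖o‖ ≤ C * ‖z - o‖ := by
  obtain ⟨ε, hε, hball⟩ := Metric.isOpen_iff.mp isOpen_UH z₀ hz₀
  obtain ⟨δ, hδ, hsep⟩ := Metric.mem_nhdsWithin_iff.mp (eventually_notMem_orbit hϱ hz₀)
  refine ⟨min ε (δ / 2), by positivity, (1 + (‖z₀‖ + δ)) / (δ / 2) + 1, by positivity,
    (ball_subset_ball (min_le_left _ _)).trans hball, fun z hz o ho hne => ?_⟩
  have hzδ : ‖z - z₀‖ < δ / 2 := (mem_ball_iff_norm.mp hz).trans_le (min_le_right _ _)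
  have hoδ : δ ≤ ‖o - z₀‖ := by
    by_contra! h
    exact hsep ⟨mem_ball_iff_norm.mpr h, hne⟩ ho
  have htri : ‖o - z₀‖ ≤ ‖z - o‖ + ‖z - z₀‖ := by
    rw [norm_sub_rev z o]; exact norm_sub_le_norm_sub_add_norm_sub _ _ _
  have hz : ‖z‖ ≤ ‖z₀‖ + ‖z - z₀‖ := norm_le_norm_add_norm_sub' _ _
  have ho : ‖o‖ ≤ ‖z‖ + ‖z - o‖ := norm_le_norm_add_norm_sub _ _
  have hquot : 1 + (‖z₀‖ + δ) ≤ (1 + (‖z₀‖ + δ)) / (δ / 2) * ‖z - o‖ := by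
    rw [div_mul_eq_mul_div, le_div_iff₀ (by positivity)]
    gcongr
    linarith
  linarith

theorem exists_ball_norm_polePart_le (hk : 2 ≤ k) (hϱ : ϱ ∈ UH) (hz₀ : z₀ ∈ UH) :
    ∃ r > 0, ∃ C ≥ 0, ball z₀ r ⊆ UH ∧ ∀ z ∈ ball z₀ r, ∀ o ∈ orbit ϱ, o ≠ z₀ →
      z ≠ o ∧ ‖polePart k o z‖ ≤ C * orbitWeight o ^ 2 := by
  obtain ⟨r, hr, C, -, hU, hC⟩ := exists_ball_one_add_norm_le hϱ hz₀
  refine ⟨r, hr, (2 * C ^ 2) ^ k, by positivity, hU, fun z hz o ho hne => ⟨?_, ?_⟩⟩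
  · rintro rfl
    have := hC z hz z ho hne
    rw [sub_self, norm_zero, mul_zero] at this
    linarith [norm_nonneg z]
  · exact norm_polePart_le hk (orbit_subset_UH hϱ ho) (hU hz) (hC z hz o ho hne)

theorem summable_polePart (hk : 2 ≤ k) (hϱ : ϱ ∈ UH) (hz : z ∈ UH) :
    Summable fun o : orbit ϱ => polePart k o z := by
  obtain ⟨r, hr, C, -, -, hC⟩ := exists_ball_norm_polePart_le hk hϱ hz
  refine ((summable_orbitWeight_sq hϱ).mul_left C).of_norm_bounded_eventually ?_
  have hfin : {o : orbit ϱ | (o : ℂ) = z}.Finite :=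
    (finite_singleton z).preimage Subtype.val_injective.injOn
  filter_upwards [hfin.compl_mem_cofinite] with o ho
  exact (hC z (mem_ball_self hr) o o.2 ho).2

theorem differentiableAt_poincareSeries (hk : 2 ≤ k) (hϱ : ϱ ∈ UH) (hz : z ∈ UH)
    (hzo : z ∉ orbit ϱ) : DifferentiableAt ℂ (poincareSeries k ϱ) z := by
  obtain ⟨r, hr, C, -, hU, hC⟩ := exists_ball_norm_polePart_le hk hϱ hz
  have hne (o : orbit ϱ) : (o : ℂ) ≠ z := fun h => hzo (h ▸ o.2)
  have hball : DifferentiableOn ℂ (poincareSeries k ϱ) (ball z r) :=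
    differentiableOn_tsum_of_summable_norm ((summable_orbitWeight_sq hϱ).mul_left C)
      (fun o w hw => (differentiableAt_polePart (orbit_subset_UH hϱ o.2) (hU hw)
        (hC w hw o o.2 (hne o)).1).differentiableWithinAt) isOpen_ball
      fun o w hw => (hC w hw o o.2 (hne o)).2
  exact hball.differentiableAt (ball_mem_nhds z hr)

theorem exists_ball_norm_poincareSeries_sub_le (hk : 2 ≤ k) (hϱ : ϱ ∈ UH) (hz₀ : z₀ ∈ UH) :
    ∃ r > 0, ∃ B, ∀ z ∈ ball z₀ r,
      ‖poincareSeries k ϱ z - (orbit ϱ).indicator (fun o => polePart k o z) z₀‖ ≤ B := by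
  classical
  obtain ⟨r, hr, C, hC0, hU, hC⟩ := exists_ball_norm_polePart_le hk hϱ hz₀
  have hw := (summable_orbitWeight_sq hϱ).mul_left C
  refine ⟨r, hr, ∑' o : orbit ϱ, C * orbitWeight o ^ 2, fun z hz => ?_⟩
  by_cases hmem : z₀ ∈ orbit ϱ
  · rw [indicator_of_mem hmem, poincareSeries,
      (summable_polePart hk hϱ (hU hz)).tsum_eq_add_tsum_ite ⟨z₀, hmem⟩, add_sub_cancel_left]
    refine tsum_of_norm_bounded hw.hasSum fun o => ?_
    split_ifs with ho
    · rw [norm_zero]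
      positivity
    · exact (hC z hz o o.2 fun h => ho (Subtype.ext h)).2
  · rw [indicator_of_notMem hmem, sub_zero]
    exact tsum_of_norm_bounded hw.hasSum fun o => (hC z hz o o.2 fun h => hmem (h ▸ o.2)).2

/-- The permutation of an orbit induced by a group element. -/
def orbitEquiv (hϱ : ϱ ∈ UH) (γ : SL2Z) : orbit ϱ ≃ orbit ϱ where
  toFun o := ⟨moeb γ o, moeb_mem_orbit hϱ o.2 γ⟩
  invFun o := ⟨moeb γ⁻¹ o, moeb_mem_orbit hϱ o.2 γ⁻¹⟩
  left_inv o := Subtype.ext (moeb_inv_moeb (orbit_subset_UH hϱ o.2))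
  right_inv o := Subtype.ext (moeb_moeb_inv (orbit_subset_UH hϱ o.2))

theorem poincareSeries_moeb (hϱ : ϱ ∈ UH) (hz : z ∈ UH) (γ : SL2Z) :
    poincareSeries k ϱ (moeb γ z) = autFactor γ z ^ (2 * k) * poincareSeries k ϱ z := by
  rw [poincareSeries, poincareSeries, ← tsum_mul_left, ← (orbitEquiv hϱ γ).tsum_eq]
  exact tsum_congr fun o => polePart_moeb (orbit_subset_UH hϱ o.2) hz γ

theorem exists_orbit_im_le (hϱ : ϱ ∈ UH) : ∃ M, ∀ o ∈ orbit ϱ, o.im ≤ M := by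
  lift ϱ to UpperHalfPlane using hϱ
  obtain ⟨g, hg⟩ := ModularGroup.exists_max_im ϱ
  refine ⟨(g • ϱ).im, ?_⟩
  rintro _ ⟨γ, rfl⟩
  rw [← coe_smul_eq_moeb]
  exact hg γ

theorem moeb_T_zpow (m : ℤ) (z : ℂ) : moeb (ModularGroup.T ^ m) z = z + m := by
  simp [moeb, ModularGroup.coe_T_zpow]

theorem autFactor_T_zpow (m : ℤ) (z : ℂ) : autFactor (ModularGroup.T ^ m) z = 1 := by
  simp [autFactor, ModularGroup.coe_T_zpow]

theorem one_add_norm_le_of_abs_re_le_one {o : ℂ} {M : ℝ} (ho : o ∈ UH) (hM : o.im ≤ M)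
    (hre : |z.re| ≤ 1) (him : M + 1 ≤ z.im) : 1 + ‖o‖ ≤ (3 + M) * ‖z - o‖ := by
  have ho' : 0 < o.im := ho
  have hone : 1 ≤ ‖z - o‖ := by
    have := (le_abs_self _).trans (abs_im_le_norm (z - o))
    rw [sub_im] at this
    linarith
  have hore : |o.re| ≤ 1 + ‖z - o‖ := by
    have := abs_re_le_norm (z - o)
    rw [sub_re] at this
    linarith [abs_sub_abs_le_abs_sub o.re z.re, abs_sub_comm o.re z.re]
  have ho := norm_le_abs_re_add_abs_im o
  rw [abs_of_pos ho'] at ho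
  nlinarith

open Filter Topology in
theorem tendsto_poincareSeries_of_abs_re_le_one (hk : 2 ≤ k) (hϱ : ϱ ∈ UH) :
    Tendsto (poincareSeries k ϱ) (comap im atTop ⊓ 𝓟 {z | |z.re| ≤ 1}) (𝓝 0) := by
  obtain ⟨M, hM⟩ := exists_orbit_im_le hϱ
  have hM0 : 0 < M := lt_of_lt_of_le hϱ (hM ϱ (mem_orbit_self ϱ))
  have hcob : comap im atTop ≤ Bornology.cobounded ℂ := by
    rw [← tendsto_id', ← tendsto_norm_atTop_iff_cobounded]
    exact tendsto_atTop_mono (fun z => (le_abs_self _).trans (abs_im_le_norm z)) tendsto_comap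
  rw [← tsum_zero (α := ℂ) (β := orbit ϱ)]
  refine tendsto_tsum_of_dominated_convergence
    ((summable_orbitWeight_sq hϱ).mul_left ((2 * (3 + M) ^ 2) ^ k)) (fun o => ?_) ?_
  · exact (tendsto_polePart_cobounded (by lia) (orbit_subset_UH hϱ o.2)).mono_left
      (inf_le_left.trans hcob)
  · filter_upwards [mem_inf_of_left (preimage_mem_comap (Ici_mem_atTop (M + 1))),
      mem_inf_of_right (mem_principal_self _)] with z (him : M + 1 ≤ z.im) hre o
    have ho := orbit_subset_UH hϱ o.2
    exact norm_polePart_le hk ho (lt_of_lt_of_le (by linarith) him)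
      (one_add_norm_le_of_abs_re_le_one ho (hM o o.2) hre him)

theorem exists_forall_norm_poincareSeries_lt (hk : 2 ≤ k) (hϱ : ϱ ∈ UH) {ε : ℝ} (hε : 0 < ε) :
    ∃ T : ℝ, ∀ z ∈ UH, T < z.im → ‖poincareSeries k ϱ z‖ < ε := by
  have hsmall := (tendsto_poincareSeries_of_abs_re_le_one hk hϱ).norm.eventually_lt_const
    (norm_zero.trans_lt hε)
  rw [Filter.eventually_inf_principal, Filter.eventually_comap] at hsmall
  obtain ⟨T, hT⟩ := Filter.eventually_atTop.mp hsmall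
  refine ⟨T, fun z hz hTz => ?_⟩
  have hshift : poincareSeries k ϱ (z + (-⌊z.re⌋ : ℤ)) = poincareSeries k ϱ z := by
    rw [← moeb_T_zpow, poincareSeries_moeb hϱ hz, autFactor_T_zpow, one_pow, one_mul]
  rw [← hshift]
  refine hT z.im hTz.le _ (by simp) (mem_ofPred.mpr (abs_le.mpr ⟨?_, ?_⟩)) <;>
    simp only [add_re, intCast_re, Int.cast_neg, neg_re]
  · linarith [Int.floor_le z.re]
  · linarith [Int.lt_floor_add_one z.re]

end PoincareSeries

/-! ### A single-valued real primitive in the Cayley coordinate -/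

open Finset.HasAntidiagonal (antidiagonal)

/-- The real-linear form `v ↦ Re (c v)`, depending linearly on `c`. It is the differential of
`Re F` when `F` has complex derivative `c`. -/
def reMulCLM : ℂ →L[ℝ] ℂ →L[ℝ] ℝ :=
  (ContinuousLinearMap.compL ℝ ℂ ℂ ℝ Complex.reCLM).comp (ContinuousLinearMap.mul ℝ ℂ)

theorem reMulCLM_apply (c v : ℂ) : reMulCLM c v = (c * v).re := rfl

theorem norm_reMulCLM_le (c : ℂ) : ‖reMulCLM c‖ ≤ ‖c‖ :=
  ContinuousLinearMap.opNorm_le_bound _ (norm_nonneg _) fun v =>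
    (Complex.abs_re_le_norm _).trans_eq (norm_mul c v)

theorem reMulCLM_comp_complex {F : ℂ → ℂ} {P : ℂ → ℝ} {c d z : ℂ}
    (hP : HasFDerivAt P (reMulCLM d) (F z)) (hF : HasDerivAt F c z) :
    HasFDerivAt (fun z => P (F z)) (reMulCLM (d * c)) z := by
  refine (hP.comp z (hF.hasFDerivAt.restrictScalars ℝ)).congr_fderiv ?_
  ext v
  simp [reMulCLM_apply, mul_comm, mul_left_comm]

theorem hasFDerivAt_re_of_hasDerivAt {F : ℂ → ℂ} {c z : ℂ} (hF : HasDerivAt F c z) :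
    HasFDerivAt (fun z => (F z).re) (reMulCLM c) z := by
  have hre : HasFDerivAt (fun w : ℂ => w.re) (reMulCLM 1) (F z) :=
    Complex.reCLM.hasFDerivAt.congr_fderiv (by ext v; simp [reMulCLM_apply])
  simpa only [one_mul] using reMulCLM_comp_complex hre hF

theorem hasFDerivAt_log_norm {w : ℂ} (hw : w ≠ 0) :
    HasFDerivAt (fun v : ℂ => Real.log ‖v‖) (reMulCLM w⁻¹) w := by
  have hlog : HasDerivAt (fun v : ℂ => Complex.log (v / w)) w⁻¹ w := by
    simpa [div_self hw] using ((hasDerivAt_id w).div_const w).clog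
      (by rw [id, div_self hw]; exact Complex.one_mem_slitPlane)
  refine ((hasFDerivAt_re_of_hasDerivAt hlog).add_const (Real.log ‖w‖)).congr_of_eventuallyEq ?_
  filter_upwards [isOpen_ne.mem_nhds hw] with v hv
  rw [Complex.log_re, norm_div, Real.log_div (norm_ne_zero_iff.mpr hv) (norm_ne_zero_iff.mpr hw),
    sub_add_cancel]

/-- The monomial `(q/w)^a (q̄w)^b` with `(a, b) = p`. -/
def pairTerm (q w : ℂ) (p : ℕ × ℕ) : ℂ := (q / w) ^ p.1 * (conj q * w) ^ p.2

/-- A real primitive of `Re (pairTerm q w p dw / w)`: the logarithm arising for `a = b` has a real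
coefficient, so it is single-valued. -/
def pairPrimitive (q w : ℂ) (p : ℕ × ℕ) : ℝ :=
  (pairTerm q w p).re * if p.1 = p.2 then Real.log ‖w‖ else ((p.2 : ℝ) - p.1)⁻¹

theorem pairTerm_eq_zpow (q : ℂ) {w : ℂ} (hw : w ≠ 0) (p : ℕ × ℕ) :
    pairTerm q w p = q ^ p.1 * conj q ^ p.2 * w ^ ((p.2 : ℤ) - p.1) := by
  rw [pairTerm, zpow_sub₀ hw, div_pow, mul_pow, zpow_natCast, zpow_natCast]
  ring

theorem pairTerm_diag (q : ℂ) {w : ℂ} (hw : w ≠ 0) (a : ℕ) :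
    pairTerm q w (a, a) = ((‖q‖ ^ 2) ^ a : ℝ) := by
  rw [pairTerm_eq_zpow q hw, sub_self, zpow_zero, mul_one, ← mul_pow, Complex.mul_conj,
    Complex.normSq_eq_norm_sq]
  norm_cast

theorem hasDerivAt_pairTerm (q : ℂ) {w : ℂ} (hw : w ≠ 0) (p : ℕ × ℕ) :
    HasDerivAt (fun w => pairTerm q w p)
      ((((p.2 : ℝ) - p.1 : ℝ) : ℂ) * (pairTerm q w p / w)) w := by
  have hzpow := (hasDerivAt_zpow ((p.2 : ℤ) - p.1) w (Or.inl hw)).const_mul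
    (q ^ p.1 * conj q ^ p.2)
  refine (hzpow.congr_of_eventuallyEq ?_).congr_deriv ?_
  · filter_upwards [isOpen_ne.mem_nhds hw] with v hv using pairTerm_eq_zpow q hv p
  · rw [pairTerm_eq_zpow q hw, zpow_sub_one₀ hw]
    push_cast
    ring

theorem hasFDerivAt_pairPrimitive (q : ℂ) {w : ℂ} (hw : w ≠ 0) (p : ℕ × ℕ) :
    HasFDerivAt (fun w => pairPrimitive q w p) (reMulCLM (pairTerm q w p / w)) w := by
  obtain ⟨a, b⟩ := p
  unfold pairPrimitive
  rcases eq_or_ne a b with rfl | hab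
  · simp only [if_pos]
    have hconst := ((hasFDerivAt_log_norm hw).const_mul ((‖q‖ ^ 2) ^ a)).congr_of_eventuallyEq
      (f₁ := fun w => (pairTerm q w (a, a)).re * Real.log ‖w‖) (by
        filter_upwards [isOpen_ne.mem_nhds hw] with v hv
        rw [pairTerm_diag q hv, Complex.ofReal_re])
    refine hconst.congr_fderiv ?_
    rw [pairTerm_diag q hw, div_eq_mul_inv, ← Complex.real_smul, map_smul]
  · simp only [if_neg hab]
    have hab' : (b : ℝ) - a ≠ 0 := sub_ne_zero.mpr (by exact_mod_cast hab.symm)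
    have hderiv := hasFDerivAt_re_of_hasDerivAt (hasDerivAt_pairTerm q hw (a, b))
    refine (hderiv.mul_const ((b : ℝ) - a)⁻¹).congr_fderiv ?_
    rw [← Complex.real_smul, map_smul, smul_smul, inv_mul_cancel₀ hab', one_smul]

theorem pairPrimitive_swap (q : ℂ) {w : ℂ} (hw : ‖w‖ = 1) (p : ℕ × ℕ) :
    pairPrimitive q w p.swap = -pairPrimitive q w p := by
  have hterm : pairTerm q w p.swap = conj (pairTerm q w p) := by
    simp only [pairTerm, Prod.fst_swap, Prod.snd_swap, map_mul, map_pow, map_div₀,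
      Complex.conj_conj, ← Complex.inv_eq_conj hw, div_inv_eq_mul]
    ring
  unfold pairPrimitive
  rw [hterm, Complex.conj_re, Prod.fst_swap, Prod.snd_swap]
  by_cases hp : p.1 = p.2
  · simp only [hp, if_true, hw, Real.log_one, mul_zero, neg_zero]
  · rw [if_neg hp, if_neg (Ne.symm hp), ← neg_sub, inv_neg, mul_neg]

theorem pairPrimitive_mul (q w : ℂ) {e : ℂ} (he : ‖e‖ = 1) (p : ℕ × ℕ) :
    pairPrimitive (q * e) (w * e) p = pairPrimitive q w p := by
  have he0 : e ≠ 0 := norm_ne_zero_iff.mp (he ▸ one_ne_zero)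
  have hconj : conj (q * e) * (w * e) = conj q * w := by
    rw [map_mul, ← Complex.inv_eq_conj he]
    field_simp
  simp only [pairPrimitive, pairTerm, mul_div_mul_right _ _ he0, hconj, norm_mul, he, mul_one]

/-- The Laurent polynomial `q/w + s + q̄w`, which is real on the unit circle when `s` is. -/
def cayleyForm (q : ℂ) (s : ℝ) (w : ℂ) : ℂ := q / w + s + conj q * w

theorem cayleyForm_mul (q : ℂ) (s : ℝ) (w : ℂ) {e : ℂ} (he : ‖e‖ = 1) :
    cayleyForm (q * e) s (w * e) = cayleyForm q s w := by
  have he0 : e ≠ 0 := norm_ne_zero_iff.mp (he ▸ one_ne_zero)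
  rw [cayleyForm, mul_div_mul_right _ _ he0, map_mul, ← Complex.inv_eq_conj he, cayleyForm]
  field_simp

/-- The real primitive of `Re (cayleyForm q s w ^ K dw / w)` obtained by expanding the power. -/
def cayleyPrimitive (K : ℕ) (q : ℂ) (s : ℝ) (w : ℂ) : ℝ :=
  ∑ m ∈ antidiagonal K, (K.choose m.1 * s ^ m.2) *
    ∑ p ∈ antidiagonal m.1, m.1.choose p.1 * pairPrimitive q w p

theorem cayleyForm_pow_div (K : ℕ) (q : ℂ) (s : ℝ) (w : ℂ) :
    cayleyForm q s w ^ K / w = ∑ m ∈ antidiagonal K, (K.choose m.1 * s ^ m.2 : ℝ) •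
      ∑ p ∈ antidiagonal m.1, (m.1.choose p.1 : ℝ) • (pairTerm q w p / w) := by
  have hsum : cayleyForm q s w = (q / w + conj q * w) + s := by unfold cayleyForm; ring
  simp only [hsum, (Commute.all (_ : ℂ) _).add_pow', Finset.sum_div, nsmul_eq_mul,
    Complex.real_smul, pairTerm]
  refine Finset.sum_congr rfl fun m _ => ?_
  rw [Finset.sum_mul, Finset.mul_sum, Finset.sum_div, Finset.mul_sum]
  refine Finset.sum_congr rfl fun p _ => ?_
  push_cast
  ring

theorem hasFDerivAt_cayleyPrimitive (K : ℕ) (q : ℂ) (s : ℝ) {w : ℂ} (hw : w ≠ 0) :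
    HasFDerivAt (cayleyPrimitive K q s) (reMulCLM (cayleyForm q s w ^ K / w)) w := by
  simp only [cayleyForm_pow_div, map_sum, map_smul]
  exact HasFDerivAt.fun_sum fun m _ => (HasFDerivAt.fun_sum fun p _ =>
    (hasFDerivAt_pairPrimitive q hw p).const_mul _).const_mul _

theorem cayleyPrimitive_of_norm_eq_one (K : ℕ) (q : ℂ) (s : ℝ) {w : ℂ} (hw : ‖w‖ = 1) :
    cayleyPrimitive K q s w = 0 := by
  refine Finset.sum_eq_zero fun m _ => mul_eq_zero_of_right _ (self_eq_neg.mp ?_)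
  rw [← Finset.sum_neg_distrib, ← Finset.Nat.sum_antidiagonal_swap]
  refine Finset.sum_congr rfl fun p hp => ?_
  rw [pairPrimitive_swap q hw, Prod.fst_swap,
    ← Nat.choose_symm_of_eq_add (Finset.HasAntidiagonal.mem_antidiagonal.mp hp).symm, mul_neg]

theorem cayleyPrimitive_mul (K : ℕ) (q : ℂ) (s : ℝ) (w : ℂ) {e : ℂ} (he : ‖e‖ = 1) :
    cayleyPrimitive K (q * e) s (w * e) = cayleyPrimitive K q s w := by
  simp only [cayleyPrimitive, pairPrimitive_mul q w he]

section RadialEstimate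

variable {K : ℕ} {q w : ℂ} {r s t : ℝ}

theorem cayleyForm_ofReal_re (q : ℂ) (s t : ℝ) :
    (cayleyForm q s t).re = q.re * (t⁻¹ + t) + s := by
  simp only [cayleyForm, add_re, div_ofReal_re, ofReal_re, re_mul_ofReal, conj_re]
  ring

theorem cayleyForm_ofReal_im (q : ℂ) (s t : ℝ) :
    (cayleyForm q s t).im = q.im * (t⁻¹ - t) := by
  simp only [cayleyForm, add_im, div_ofReal_im, ofReal_im, im_mul_ofReal, conj_im]
  ring

theorem abs_cayleyForm_im_le (hr : 0 < r) (hrt : r ≤ t) (ht : t ≤ 1) :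
    |(cayleyForm q s t).im| ≤ |(cayleyForm q s r).im| := by
  have ht0 : 0 < t := hr.trans_le hrt
  have hinv : t⁻¹ ≤ r⁻¹ := inv_anti₀ hr hrt
  have hone : 1 ≤ t⁻¹ := one_le_inv₀ ht0 |>.mpr ht
  rw [cayleyForm_ofReal_im, cayleyForm_ofReal_im, abs_mul, abs_mul,
    abs_of_nonneg (a := t⁻¹ - t) (by linarith), abs_of_nonneg (a := r⁻¹ - r) (by linarith)]
  gcongr

theorem abs_cayleyForm_re_le (hr : 0 < r) (hrt : r ≤ t) (ht : t ≤ 1) :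
    |(cayleyForm q s t).re| ≤ |(cayleyForm q s r).re| + ‖q‖ * ((1 - r) ^ 2 / r) := by
  have ht0 : 0 < t := hr.trans_le hrt
  have hnonneg : 0 ≤ (r⁻¹ + r) - (t⁻¹ + t) := by
    have : (r⁻¹ + r) - (t⁻¹ + t) = (t - r) * (1 - r * t) / (r * t) := by field_simp; ring
    rw [this]
    exact div_nonneg (mul_nonneg (by linarith) (by nlinarith)) (by positivity)
  have hle : (r⁻¹ + r) - (t⁻¹ + t) ≤ (1 - r) ^ 2 / r := by
    have hr2 : (1 - r) ^ 2 / r = r⁻¹ + r - 2 := by field_simp; ring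
    have ht2 : (1 - t) ^ 2 / t = t⁻¹ + t - 2 := by field_simp; ring
    have : 0 ≤ (1 - t) ^ 2 / t := by positivity
    linarith
  calc |(cayleyForm q s t).re|
      = |(cayleyForm q s r).re - q.re * ((r⁻¹ + r) - (t⁻¹ + t))| := by
        rw [cayleyForm_ofReal_re, cayleyForm_ofReal_re]; ring_nf
    _ ≤ |(cayleyForm q s r).re| + |q.re| * ((r⁻¹ + r) - (t⁻¹ + t)) := by
        rw [← abs_of_nonneg hnonneg, ← abs_mul, abs_of_nonneg hnonneg]
        exact abs_sub _ _
    _ ≤ _ := by gcongr; exact abs_re_le_norm q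

theorem norm_cayleyForm_ofReal_le (hr : 0 < r) (hrt : r ≤ t) (ht : t ≤ 1) :
    ‖cayleyForm q s t‖ ≤ 2 * ‖cayleyForm q s r‖ + ‖q‖ * ((1 - r) ^ 2 / r) := by
  have hre := abs_cayleyForm_re_le (q := q) (s := s) hr hrt ht
  have him := abs_cayleyForm_im_le (q := q) (s := s) hr hrt ht
  linarith [norm_le_abs_re_add_abs_im (cayleyForm q s t), abs_re_le_norm (cayleyForm q s r),
    abs_im_le_norm (cayleyForm q s r)]

theorem abs_cayleyPrimitive_ofReal_le (hr : 0 < r) (hr1 : r ≤ 1) :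
    |cayleyPrimitive K q s r| ≤
      (2 * ‖cayleyForm q s r‖ + ‖q‖ * ((1 - r) ^ 2 / r)) ^ K * r⁻¹ * (1 - r) := by
  have hderiv (t : ℝ) (ht : t ∈ Icc r 1) :
      HasDerivWithinAt (fun t : ℝ => cayleyPrimitive K q s t)
        (cayleyForm q s t ^ K / t).re (Icc r 1) t := by
    have ht0 : (t : ℂ) ≠ 0 := ofReal_ne_zero.mpr (hr.trans_le ht.1).ne'
    have := (hasFDerivAt_cayleyPrimitive K q s ht0).comp_hasDerivAt t
      (ofRealCLM.hasDerivAt (x := t))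
    exact this.hasDerivWithinAt.congr_deriv (by simp [reMulCLM_apply])
  have hbound (t : ℝ) (ht : t ∈ Icc r 1) : ‖(cayleyForm q s t ^ K / t).re‖ ≤
      (2 * ‖cayleyForm q s r‖ + ‖q‖ * ((1 - r) ^ 2 / r)) ^ K * r⁻¹ := by
    refine (abs_re_le_norm _).trans ?_
    rw [norm_div, norm_pow, norm_real, Real.norm_of_nonneg (hr.le.trans ht.1), div_eq_mul_inv]
    have hinv : t⁻¹ ≤ r⁻¹ := inv_anti₀ hr ht.1
    have hform := norm_cayleyForm_ofReal_le (q := q) (s := s) hr ht.1 ht.2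
    have ht0 : 0 ≤ t⁻¹ := inv_nonneg.mpr (hr.le.trans ht.1)
    gcongr
  have hmvt := (convex_Icc r 1).norm_image_sub_le_of_norm_hasDerivWithin_le hderiv hbound
    (right_mem_Icc.mpr hr1) (left_mem_Icc.mpr hr1)
  rwa [cayleyPrimitive_of_norm_eq_one K q s (w := (1 : ℝ)) (by simp), sub_zero, Real.norm_eq_abs,
    Real.norm_eq_abs, abs_sub_comm, abs_of_nonneg (sub_nonneg.mpr hr1)] at hmvt

theorem abs_cayleyPrimitive_le (hw : w ≠ 0) (hw1 : ‖w‖ ≤ 1) :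
    |cayleyPrimitive K q s w| ≤
      (2 * ‖cayleyForm q s w‖ + ‖q‖ * ((1 - ‖w‖) ^ 2 / ‖w‖)) ^ K * ‖w‖⁻¹ * (1 - ‖w‖) := by
  have hnorm : (‖w‖ : ℂ) ≠ 0 := ofReal_ne_zero.mpr (norm_ne_zero_iff.mpr hw)
  set e : ℂ := w / ‖w‖
  have he : ‖e‖ = 1 := by simp [e, hw]
  have hwe : w = ‖w‖ * e := (mul_div_cancel₀ _ hnorm).symm
  have he0 : e ≠ 0 := norm_ne_zero_iff.mp (he ▸ one_ne_zero)
  have hprim : cayleyPrimitive K q s w = cayleyPrimitive K (q / e) s ‖w‖ := by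
    rw [← cayleyPrimitive_mul K (q / e) s _ he, div_mul_cancel₀ _ he0, ← hwe]
  have hform : cayleyForm q s w = cayleyForm (q / e) s ‖w‖ := by
    rw [← cayleyForm_mul (q / e) s _ he, div_mul_cancel₀ _ he0, ← hwe]
  have hq : ‖q‖ = ‖q / e‖ := by rw [norm_div, he, div_one]
  rw [hprim, hform, hq]
  exact abs_cayleyPrimitive_ofReal_le (norm_pos_iff.mpr hw) hw1

end RadialEstimate

/-- The Hermitian companion `c|z|² + (d - a) Re z - b` of the quadratic form `Q_γ`. -/
def hermForm (γ : SL2Z) (z : ℂ) : ℝ :=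
  γ.1 1 0 * ‖z‖ ^ 2 + (γ.1 1 1 - γ.1 0 0) * z.re - γ.1 0 1

/-- The Cayley coordinate centred at `o`, mapping the upper half-plane onto the unit disc. -/
def cayleyCoord (o z : ℂ) : ℂ := (z - o) / (z - conj o)

/-- A real primitive on `UH \ {o}` of `Re (i^K polePart (K + 1) o z Q_γ(z)^K dz)`, vanishing on the
real line: in the Cayley coordinate at `o` the form `Q_γ` becomes a `cayleyForm`. -/
def polePrimitive (K : ℕ) (γ : SL2Z) (o z : ℂ) : ℝ :=
  cayleyPrimitive K (Qpoly γ o / (2 * o.im : ℝ)) (-hermForm γ o / o.im) (cayleyCoord o z)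

section PolePrimitive

variable {K : ℕ} {γ : SL2Z} {o z : ℂ}

theorem sub_ne_zero_and_sub_conj_ne_zero (ho : o ∈ UH) (hz : z ∈ UH) (hzo : z ≠ o) :
    z - o ≠ 0 ∧ z - conj o ≠ 0 :=
  ⟨sub_ne_zero.mpr hzo, sub_ne_zero.mpr (ne_conj_of_mem_UH hz ho)⟩

theorem hermForm_eq (γ : SL2Z) (z : ℂ) : (hermForm γ z : ℂ) =
    γ.1 1 0 * (z * conj z) + (γ.1 1 1 - γ.1 0 0) * ((z + conj z) / 2) - γ.1 0 1 := by
  rw [mul_conj, normSq_eq_norm_sq, add_conj, hermForm]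
  push_cast
  ring

theorem conj_Qpoly (γ : SL2Z) (z : ℂ) : conj (Qpoly γ z) = Qpoly γ (conj z) := by simp [Qpoly]

theorem Qpoly_moeb (hz : z.im ≠ 0) :
    Qpoly γ (moeb γ z) = Qpoly γ z / autFactor γ z ^ 2 := by
  have hj : autFactor γ z ≠ 0 := autFactor_ne_zero hz
  rw [eq_div_iff (pow_ne_zero 2 hj), Qpoly, moeb_eq]
  field_simp
  simp only [Qpoly, autFactor, Int.cast_sub]
  linear_combination ((γ.1 1 0 : ℂ) * z ^ 2 + (γ.1 1 1 - γ.1 0 0) * z - γ.1 0 1) *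
    SL2Z_det_complex γ

theorem hermForm_moeb (hz : z ∈ UH) :
    hermForm γ (moeb γ z) = hermForm γ z / ‖autFactor γ z‖ ^ 2 := by
  have hj : autFactor γ z ≠ 0 := autFactor_ne_zero (im_ne_zero_of_mem_UH hz)
  have hjc : autFactor γ (conj z) ≠ 0 := autFactor_ne_zero (conj_im_ne_zero_of_mem_UH hz)
  apply ofReal_injective
  rw [← normSq_eq_norm_sq, ofReal_div, ← mul_conj, hermForm_eq, hermForm_eq, ← moeb_conj,
    ← autFactor_conj, eq_div_iff (mul_ne_zero hj hjc), moeb_eq, moeb_eq]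
  field_simp
  simp only [autFactor]
  linear_combination (2 * (γ.1 1 0 : ℂ) * z * conj z + (γ.1 1 1 - γ.1 0 0) * (z + conj z) -
    2 * γ.1 0 1) * SL2Z_det_complex γ

theorem cayleyCoord_moeb (ho : o ∈ UH) (hz : z ∈ UH) : cayleyCoord (moeb γ o) (moeb γ z) =
    cayleyCoord o z * (conj (autFactor γ o) / autFactor γ o) := by
  have hzi := im_ne_zero_of_mem_UH hz
  have hoi := im_ne_zero_of_mem_UH ho
  have hci := conj_im_ne_zero_of_mem_UH ho
  have hjz : autFactor γ z ≠ 0 := autFactor_ne_zero hzi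
  have hjo : autFactor γ o ≠ 0 := autFactor_ne_zero hoi
  have hjc : autFactor γ (conj o) ≠ 0 := autFactor_ne_zero hci
  have hzc : z - conj o ≠ 0 := sub_ne_zero.mpr (ne_conj_of_mem_UH hz ho)
  rw [cayleyCoord, ← moeb_conj, moeb_sub hzi hoi, moeb_sub hzi hci, cayleyCoord, ← autFactor_conj]
  field_simp

theorem polePrimitive_moeb (ho : o ∈ UH) (hz : z ∈ UH) :
    polePrimitive K γ (moeb γ o) (moeb γ z) = polePrimitive K γ o z := by
  have hj : autFactor γ o ≠ 0 := autFactor_ne_zero (im_ne_zero_of_mem_UH ho)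
  have hnorm : ‖autFactor γ o‖ ≠ 0 := norm_ne_zero_iff.mpr hj
  have him : (o.im : ℂ) ≠ 0 := ofReal_ne_zero.mpr (im_ne_zero_of_mem_UH ho)
  have hunit : ‖conj (autFactor γ o) / autFactor γ o‖ = 1 := by
    rw [norm_div, norm_conj, div_self hnorm]
  have hq : Qpoly γ (moeb γ o) / (2 * (moeb γ o).im : ℝ) =
      Qpoly γ o / (2 * o.im : ℝ) * (conj (autFactor γ o) / autFactor γ o) := by
    rw [Qpoly_moeb (im_ne_zero_of_mem_UH ho), moeb_im ho, ← normSq_eq_norm_sq]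
    push_cast
    rw [← mul_conj]
    field_simp
  have hs : -hermForm γ (moeb γ o) / (moeb γ o).im = -hermForm γ o / o.im := by
    rw [hermForm_moeb ho, moeb_im ho]
    field_simp
  rw [polePrimitive, hq, hs, cayleyCoord_moeb ho hz, cayleyPrimitive_mul _ _ _ _ hunit,
    polePrimitive]

theorem cayleyForm_cayleyCoord (ho : o ∈ UH) (hz : z ∈ UH) (hzo : z ≠ o) :
    cayleyForm (Qpoly γ o / (2 * o.im : ℝ)) (-hermForm γ o / o.im) (cayleyCoord o z) =
      -(2 * o.im : ℝ) * Qpoly γ z / ((z - o) * (z - conj o)) := by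
  obtain ⟨hzo', hzc⟩ := sub_ne_zero_and_sub_conj_ne_zero ho hz hzo
  have hd : o - conj o ≠ 0 := sub_ne_zero.mpr (ne_conj_of_mem_UH ho ho)
  have him : (o.im : ℂ) = (o - conj o) / (2 * I) := by
    rw [sub_conj]; field_simp [I_ne_zero]; push_cast; ring
  rw [cayleyForm, cayleyCoord, map_div₀, conj_Qpoly, conj_ofReal, ofReal_div, ofReal_neg,
    hermForm_eq, ofReal_mul, him]
  simp only [Qpoly]
  push_cast
  field_simp
  rw [I_sq]
  ring

theorem hasDerivAt_cayleyCoord (ho : o ∈ UH) (hz : z ∈ UH) :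
    HasDerivAt (cayleyCoord o) ((2 * o.im : ℝ) * I / (z - conj o) ^ 2) z := by
  have hzc : z - conj o ≠ 0 := sub_ne_zero.mpr (ne_conj_of_mem_UH hz ho)
  refine (((hasDerivAt_id z).sub_const o).fun_div
    ((hasDerivAt_id z).sub_const (conj o)) hzc).congr_deriv ?_
  rw [← sub_conj]
  simp

theorem hasFDerivAt_polePrimitive (ho : o ∈ UH) (hz : z ∈ UH) (hzo : z ≠ o) :
    HasFDerivAt (polePrimitive K γ o)
      (reMulCLM (I ^ K * (polePart (K + 1) o z * Qpoly γ z ^ K))) z := by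
  obtain ⟨hzo', hzc⟩ := sub_ne_zero_and_sub_conj_ne_zero ho hz hzo
  have him : (o.im : ℂ) ≠ 0 := ofReal_ne_zero.mpr (im_ne_zero_of_mem_UH ho)
  have hw : cayleyCoord o z ≠ 0 := div_ne_zero hzo' hzc
  have hprim := reMulCLM_comp_complex (hasFDerivAt_cayleyPrimitive K
    (Qpoly γ o / (2 * o.im : ℝ)) (-hermForm γ o / o.im) hw) (hasDerivAt_cayleyCoord ho hz)
  refine hprim.congr_fderiv (congrArg reMulCLM ?_)
  rw [cayleyForm_cayleyCoord ho hz hzo, polePart, zpow_neg, zpow_natCast, sub_conj,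
    cayleyCoord, div_pow, div_pow, inv_div]
  simp only [mul_pow, pow_succ]
  field_simp
  rw [neg_pow, ← I_sq]
  ring

end PolePrimitive

section PolePrimitiveBound

variable {K : ℕ} {γ : SL2Z} {o z : ℂ} {C : ℝ}

theorem norm_Qpoly_le (γ : SL2Z) (z : ℂ) : ‖Qpoly γ z‖ ≤
    (‖(γ.1 1 0 : ℂ)‖ + ‖((γ.1 1 1 - γ.1 0 0 : ℤ) : ℂ)‖ + ‖(γ.1 0 1 : ℂ)‖) * (1 + ‖z‖ ^ 2) := by
  have hz : ‖z‖ ≤ 1 + ‖z‖ ^ 2 := by nlinarith [sq_nonneg (‖z‖ - 1)]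
  have hz2 : ‖z‖ ^ 2 ≤ 1 + ‖z‖ ^ 2 := by linarith
  have h1 : 1 ≤ 1 + ‖z‖ ^ 2 := by linarith [sq_nonneg ‖z‖]
  calc ‖Qpoly γ z‖ ≤ ‖(γ.1 1 0 : ℂ)‖ * ‖z‖ ^ 2 + ‖((γ.1 1 1 - γ.1 0 0 : ℤ) : ℂ)‖ * ‖z‖ +
        ‖(γ.1 0 1 : ℂ)‖ * 1 := by
        rw [← norm_pow, ← norm_mul, ← norm_mul, mul_one]
        exact (norm_sub_le _ _).trans (add_le_add_left (norm_add_le _ _) _)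
    _ ≤ ‖(γ.1 1 0 : ℂ)‖ * (1 + ‖z‖ ^ 2) + ‖((γ.1 1 1 - γ.1 0 0 : ℤ) : ℂ)‖ * (1 + ‖z‖ ^ 2) +
        ‖(γ.1 0 1 : ℂ)‖ * (1 + ‖z‖ ^ 2) := by gcongr
    _ = _ := by ring

theorem norm_cayleyCoord_le_one (ho : o ∈ UH) (hz : z ∈ UH) : ‖cayleyCoord o z‖ ≤ 1 := by
  rw [cayleyCoord, norm_div]
  exact div_le_one_of_le₀ (norm_sub_le_norm_sub_conj hz ho) (norm_nonneg _)

theorem one_sub_norm_cayleyCoord_le (ho : o ∈ UH) (hz : z ∈ UH) (h : 1 + ‖o‖ ≤ C * ‖z - o‖)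
    (hzo : z ≠ o) : 1 - ‖cayleyCoord o z‖ ≤ 4 * z.im * C ^ 2 * orbitWeight o := by
  have ho' : 0 < o.im := ho
  have hz' : 0 < z.im := hz
  have hzo' : 0 < ‖z - o‖ := norm_pos_iff.mpr (sub_ne_zero.mpr hzo)
  have hzc : 0 < ‖z - conj o‖ := hzo'.trans_le (norm_sub_le_norm_sub_conj hz ho)
  have hsq : ‖z - conj o‖ ^ 2 - ‖z - o‖ ^ 2 = 4 * z.im * o.im := by
    simp only [← normSq_eq_norm_sq, normSq_apply, sub_re, sub_im, conj_re, conj_im]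
    ring
  calc 1 - ‖cayleyCoord o z‖ ≤ 1 - ‖cayleyCoord o z‖ ^ 2 := by
        nlinarith [norm_nonneg (cayleyCoord o z), norm_cayleyCoord_le_one ho hz]
    _ = 4 * z.im * (o.im / (‖z - conj o‖ * ‖z - conj o‖)) := by
        rw [cayleyCoord, norm_div, ← mul_div_assoc, ← hsq]
        field_simp
    _ ≤ 4 * z.im * (o.im / (‖z - o‖ * ‖z - conj o‖)) := by
        gcongr
        exact norm_sub_le_norm_sub_conj hz ho
    _ ≤ 4 * z.im * (C ^ 2 * orbitWeight o) := by
        gcongr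
        exact im_div_norm_mul_norm_le ho hz h
    _ = _ := by ring

theorem inv_norm_cayleyCoord_le (h : 1 + ‖o‖ ≤ C * ‖z - o‖) (hzo : z ≠ o) :
    ‖cayleyCoord o z‖⁻¹ ≤ (1 + ‖z‖) * C := by
  have hzo' : 0 < ‖z - o‖ := norm_pos_iff.mpr (sub_ne_zero.mpr hzo)
  rw [cayleyCoord, norm_div, inv_div, div_le_iff₀ hzo']
  calc ‖z - conj o‖ ≤ ‖z‖ + ‖o‖ := (norm_sub_le _ _).trans_eq (by rw [norm_conj])
    _ ≤ (1 + ‖z‖) * (1 + ‖o‖) := by nlinarith [norm_nonneg z, norm_nonneg o]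
    _ ≤ (1 + ‖z‖) * (C * ‖z - o‖) := by gcongr
    _ = _ := (mul_assoc _ _ _).symm

theorem norm_cayleyForm_cayleyCoord_le (ho : o ∈ UH) (hz : z ∈ UH) (h : 1 + ‖o‖ ≤ C * ‖z - o‖)
    (hzo : z ≠ o) :
    ‖cayleyForm (Qpoly γ o / (2 * o.im : ℝ)) (-hermForm γ o / o.im) (cayleyCoord o z)‖ ≤
      2 * ‖Qpoly γ z‖ * C ^ 2 * orbitWeight o := by
  have ho' : 0 < o.im := ho
  rw [cayleyForm_cayleyCoord ho hz hzo, norm_div, norm_mul, norm_mul, norm_neg, norm_real,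
    Real.norm_of_nonneg (by positivity)]
  calc _ = 2 * ‖Qpoly γ z‖ * (o.im / (‖z - o‖ * ‖z - conj o‖)) := by ring
    _ ≤ 2 * ‖Qpoly γ z‖ * (C ^ 2 * orbitWeight o) := by
        gcongr
        exact im_div_norm_mul_norm_le ho hz h
    _ = _ := by ring

theorem exists_norm_Qpoly_div_le (γ : SL2Z) : ∃ N ≥ 0, ∀ o ∈ UH,
    ‖Qpoly γ o / (2 * o.im : ℝ)‖ ≤ N / orbitWeight o := by
  refine ⟨‖(γ.1 1 0 : ℂ)‖ + ‖((γ.1 1 1 - γ.1 0 0 : ℤ) : ℂ)‖ + ‖(γ.1 0 1 : ℂ)‖, by positivity,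
    fun o ho => ?_⟩
  have ho' : 0 < o.im := ho
  rw [norm_div, norm_real, Real.norm_of_nonneg (by positivity), orbitWeight, div_div_eq_mul_div]
  exact div_le_div₀ (by positivity) (norm_Qpoly_le γ o) ho' (by linarith)

theorem exists_abs_polePrimitive_le (hK : 1 ≤ K) (γ : SL2Z) (hz : z ∈ UH) (hC : 0 ≤ C) :
    ∃ M, ∀ o ∈ UH, 1 + ‖o‖ ≤ C * ‖z - o‖ → |polePrimitive K γ o z| ≤ M * orbitWeight o ^ 2 := by
  obtain ⟨N, hN0, hN⟩ := exists_norm_Qpoly_div_le γ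
  have hz' : 0 < z.im := hz
  set R := (1 + ‖z‖) * C
  set X := 4 * z.im * C ^ 2
  set Y := 2 * ‖Qpoly γ z‖ * C ^ 2
  refine ⟨(2 * Y + N * X ^ 2 * R) ^ K * R * X, fun o ho h => ?_⟩
  have hzo : z ≠ o := by
    rintro rfl
    rw [sub_self, norm_zero, mul_zero] at h
    linarith [norm_nonneg z]
  obtain ⟨hzo', hzc⟩ := sub_ne_zero_and_sub_conj_ne_zero ho hz hzo
  have hwt := orbitWeight_pos ho
  have hX := one_sub_norm_cayleyCoord_le ho hz h hzo
  have hX0 : 0 ≤ 1 - ‖cayleyCoord o z‖ := sub_nonneg.mpr (norm_cayleyCoord_le_one ho hz)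
  have hR := inv_norm_cayleyCoord_le h hzo
  have hY := norm_cayleyForm_cayleyCoord_le (γ := γ) ho hz h hzo
  have hsecond : ‖Qpoly γ o / (2 * o.im : ℝ)‖ *
      ((1 - ‖cayleyCoord o z‖) ^ 2 / ‖cayleyCoord o z‖) ≤ N * X ^ 2 * R * orbitWeight o :=
    calc _ ≤ N / orbitWeight o * ((X * orbitWeight o) ^ 2 * R) := by
          rw [div_eq_mul_inv _ ‖cayleyCoord o z‖]
          gcongr
          exact hN o ho
      _ = _ := by field_simp
  calc |polePrimitive K γ o z| ≤ _ :=
        abs_cayleyPrimitive_le (div_ne_zero hzo' hzc) (norm_cayleyCoord_le_one ho hz)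
    _ ≤ (2 * (Y * orbitWeight o) + N * X ^ 2 * R * orbitWeight o) ^ K * R *
        (X * orbitWeight o) := by gcongr
    _ = (2 * Y + N * X ^ 2 * R) ^ K * R * X * orbitWeight o ^ (K + 1) := by
        rw [← mul_assoc 2, ← add_mul, mul_pow]
        ring
    _ ≤ _ := mul_le_mul_of_nonneg_left (orbitWeight_pow_le_sq ho (by lia)) (by positivity)

end PolePrimitiveBound

/-- A real primitive of `Re (i^K poincareSeries (K + 1) ϱ z Q_γ(z)^K dz)` off the poles. -/
def orbitPrimitive (K : ℕ) (γ : SL2Z) (ϱ z : ℂ) : ℝ := ∑' o : orbit ϱ, polePrimitive K γ o z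

section OrbitPrimitive

variable {K : ℕ} {γ : SL2Z} {ϱ z : ℂ}

theorem orbitPrimitive_moeb (hϱ : ϱ ∈ UH) (hz : z ∈ UH) :
    orbitPrimitive K γ ϱ (moeb γ z) = orbitPrimitive K γ ϱ z := by
  rw [orbitPrimitive, orbitPrimitive, ← (orbitEquiv hϱ γ).tsum_eq]
  exact tsum_congr fun o => polePrimitive_moeb (orbit_subset_UH hϱ o.2) hz

theorem summable_polePrimitive (hK : 1 ≤ K) (hϱ : ϱ ∈ UH) (hz : z ∈ UH) (hzo : z ∉ orbit ϱ) :
    Summable fun o : orbit ϱ => polePrimitive K γ o z := by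
  obtain ⟨r, hr, C, hC0, -, hC⟩ := exists_ball_one_add_norm_le hϱ hz
  obtain ⟨M, hM⟩ := exists_abs_polePrimitive_le hK γ hz hC0.le
  exact ((summable_orbitWeight_sq hϱ).mul_left M).of_norm_bounded fun o =>
    hM o (orbit_subset_UH hϱ o.2) (hC z (mem_ball_self hr) o o.2 fun h => hzo (h ▸ o.2))

theorem hasFDerivAt_orbitPrimitive (hK : 1 ≤ K) (hϱ : ϱ ∈ UH) (hz : z ∈ UH) (hzo : z ∉ orbit ϱ) :
    HasFDerivAt (orbitPrimitive K γ ϱ)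
      (reMulCLM (I ^ K * (poincareSeries (K + 1) ϱ z * Qpoly γ z ^ K))) z := by
  have hne : ∀ o ∈ orbit ϱ, o ≠ z := fun o ho h => hzo (h ▸ ho)
  obtain ⟨r, hr, C, hC0, hU, hC⟩ :=
    exists_ball_norm_polePart_le (k := K + 1) (by lia) hϱ hz
  obtain ⟨N, hN⟩ : ∃ N, ∀ w ∈ ball z r, ‖Qpoly γ w‖ ≤ N := by
    have hcont : Continuous (Qpoly γ) := by unfold Qpoly; fun_prop
    obtain ⟨N, hN⟩ := ((isCompact_closedBall z r).image hcont).isBounded.exists_norm_le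
    exact ⟨N, fun w hw => hN _ ⟨w, ball_subset_closedBall hw, rfl⟩⟩
  have hsum := (((summable_polePart (k := K + 1) (by lia) hϱ hz).hasSum.mul_right
    (Qpoly γ z ^ K)).mul_left (I ^ K)).mapL reMulCLM
  rw [poincareSeries, ← hsum.tsum_eq]
  refine hasFDerivAt_tsum_of_isPreconnected (x₀ := z)
    (u := fun o : orbit ϱ => C * orbitWeight (o : ℂ) ^ 2 * N ^ K)
    (f := fun (o : orbit ϱ) w => polePrimitive K γ (o : ℂ) w)
    (f' := fun (o : orbit ϱ) w => reMulCLM (I ^ K * (polePart (K + 1) (o : ℂ) w * Qpoly γ w ^ K)))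
    (((summable_orbitWeight_sq hϱ).mul_left C).mul_right (N ^ K)) isOpen_ball
    (convex_ball z r).isPreconnected
    (fun o w hw => hasFDerivAt_polePrimitive (orbit_subset_UH hϱ o.2) (hU hw)
      (hC w hw o o.2 (hne o o.2)).1) (fun o w hw => ?_) (mem_ball_self hr)
    (summable_polePrimitive hK hϱ hz hzo) (mem_ball_self hr)
  refine (norm_reMulCLM_le _).trans ?_
  rw [norm_mul, norm_pow, norm_I, one_pow, one_mul, norm_mul, norm_pow]
  gcongr
  · exact (hC w hw o o.2 (hne o o.2)).2
  · exact hN w hw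

end OrbitPrimitive

section PathIntegral

variable {U : Set ℂ} {P : ℂ → ℝ} {F : ℂ → ℂ} {c : ℂ} {σ : ℝ → ℂ} {a b : ℝ}

theorem intervalIntegrable_comp_mul_deriv (hF : ContinuousOn F U) (hab : a ≤ b)
    (hσ : ContDiffOn ℝ 1 σ (Icc a b)) (hU : MapsTo σ (Icc a b) U) :
    IntervalIntegrable (fun t => F (σ t) * deriv σ t) volume a b := by
  rcases hab.eq_or_lt with rfl | hlt
  · exact IntervalIntegrable.refl
  have hderiv : ContinuousOn (derivWithin σ (Icc a b)) (Icc a b) :=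
    hσ.continuousOn_derivWithin (uniqueDiffOn_Icc hlt) le_rfl
  have hint : IntervalIntegrable _ volume a b :=
    ((hF.comp hσ.continuousOn hU).mul hderiv).intervalIntegrable_of_Icc hab
  rw [intervalIntegrable_iff_integrableOn_Ioo_of_le hab] at hint ⊢
  refine hint.congr_fun (fun t ht => ?_) measurableSet_Ioo
  simp only [Pi.mul_apply, Function.comp_apply, derivWithin_of_mem_nhds (Icc_mem_nhds ht.1 ht.2)]

theorem re_mul_integral_comp_mul_deriv (hF : ContinuousOn F U)
    (hP : ∀ z ∈ U, HasFDerivAt P (reMulCLM (c * F z)) z) (hab : a ≤ b)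
    (hσ : ContDiffOn ℝ 1 σ (Icc a b)) (hU : MapsTo σ (Icc a b) U) :
    (c * ∫ t in a..b, F (σ t) * deriv σ t).re = P (σ b) - P (σ a) := by
  have hint := (intervalIntegrable_comp_mul_deriv hF hab hσ hU).const_mul c
  rw [← intervalIntegral.integral_const_mul, ← reCLM_apply,
    ← reCLM.intervalIntegral_comp_comm hint]
  refine intervalIntegral.integral_eq_sub_of_hasDerivAt_of_le (f := P ∘ σ) hab
    (fun t ht => (hP _ (hU ht)).continuousAt.comp_continuousWithinAt (hσ.continuousOn t ht))
    (fun t ht => ?_) ⟨reCLM.integrable_comp hint.1, reCLM.integrable_comp hint.2⟩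
  have hσt : HasDerivAt σ (deriv σ t) t :=
    ((hσ.differentiableOn one_ne_zero).differentiableAt (Icc_mem_nhds ht.1 ht.2)).hasDerivAt
  refine ((hP _ (hU (Ioo_subset_Icc_self ht))).comp_hasDerivAt t hσt).congr_deriv ?_
  rw [reMulCLM_apply, mul_assoc, reCLM_apply]

theorem re_mul_pathInt (hF : ContinuousOn F U)
    (hP : ∀ z ∈ U, HasFDerivAt P (reMulCLM (c * F z)) z) (hσ : PiecewiseC1 σ)
    (hU : MapsTo σ (Icc 0 1) U) : (c * pathInt F σ).re = P (σ 1) - P (σ 0) := by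
  obtain ⟨-, n, t, -, ht0, htn, hle, hC⟩ := hσ
  have hmono : MonotoneOn t (Iic n) :=
    monotoneOn_of_le_add_one ordConnected_Iic fun i _ _ hi => hle i hi
  have hmaps : ∀ i < n, MapsTo σ (Icc (t i) (t (i + 1))) U := fun i hi => hU.mono_left <|
    Icc_subset_Icc (ht0 ▸ hmono (mem_Iic.mpr n.zero_le) (mem_Iic.mpr hi.le) i.zero_le)
      (htn ▸ hmono (mem_Iic.mpr hi) self_mem_Iic hi)
  have hsum := intervalIntegral.sum_integral_adjacent_intervals fun i hi =>
    intervalIntegrable_comp_mul_deriv hF (hle i hi) (hC i hi) (hmaps i hi)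
  rw [ht0, htn] at hsum
  rw [pathInt, ← hsum, Finset.mul_sum, re_sum, Finset.sum_congr rfl fun i hi =>
      re_mul_integral_comp_mul_deriv hF hP (hle i (Finset.mem_range.mp hi))
        (hC i (Finset.mem_range.mp hi)) (hmaps i (Finset.mem_range.mp hi)),
    Finset.sum_range_sub fun i => P (σ (t i)), ht0, htn]

end PathIntegral

theorem geodFactor_eq (k : ℕ) (γ : SL2Z) :
    geodFactor k γ = (((√(discr γ))⁻¹ ^ (k - 1) : ℝ) : ℂ) * I ^ (k - 1) := by
  rw [geodFactor, div_eq_inv_mul, mul_pow]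
  push_cast
  rfl

section CanonicalForm

/-- The candidate for the canonical form: the combination of Poincaré series with coefficients
`α i`. -/
def canonicalForm (k : ℕ) {n : ℕ} (ϱ : Fin n → ℂ) (α : Fin n → ℝ) (z : ℂ) : ℂ :=
  ∑ i, (α i : ℂ) * poincareSeries k (ϱ i) z

variable {k n : ℕ} {ϱ : Fin n → ℂ} {α : Fin n → ℝ} {z : ℂ}

theorem notMem_orbit_of_notMem_orbitUnion (hz : z ∉ orbitUnion ϱ) (i : Fin n) :
    z ∉ orbit (ϱ i) := fun h => hz (mem_iUnion_of_mem i h)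

theorem differentiableAt_canonicalForm (hk : 2 ≤ k) (hϱ : ∀ i, ϱ i ∈ UH)
    (hz : z ∈ UH \ orbitUnion ϱ) : DifferentiableAt ℂ (canonicalForm k ϱ α) z :=
  DifferentiableAt.fun_sum fun i _ => (differentiableAt_poincareSeries hk (hϱ i) hz.1
    (notMem_orbit_of_notMem_orbitUnion hz.2 i)).const_mul _

theorem canonicalForm_moeb (hϱ : ∀ i, ϱ i ∈ UH) (hz : z ∈ UH) (γ : SL2Z) :
    canonicalForm k ϱ α (moeb γ z) = autFactor γ z ^ (2 * k) * canonicalForm k ϱ α z := by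
  rw [canonicalForm, canonicalForm, Finset.mul_sum]
  refine Finset.sum_congr rfl fun i _ => ?_
  rw [poincareSeries_moeb (hϱ i) hz, mul_left_comm]

open Filter in
theorem exists_forall_norm_canonicalForm_lt (hk : 2 ≤ k) (hϱ : ∀ i, ϱ i ∈ UH) {ε : ℝ}
    (hε : 0 < ε) : ∃ T, ∀ z ∈ UH, T < z.im → ‖canonicalForm k ϱ α z‖ < ε := by
  have hbasis := (atTop_basis_Ioi (α := ℝ)).comap im |>.inf_principal UH
  have hlim : ∀ i, Tendsto (poincareSeries k (ϱ i)) (comap im atTop ⊓ 𝓟 UH) (nhds 0) :=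
    fun i => hbasis.tendsto_iff nhds_basis_ball |>.mpr fun ε hε => by
      obtain ⟨T, hT⟩ := exists_forall_norm_poincareSeries_lt hk (hϱ i) hε
      exact ⟨T, trivial, fun z hz => mem_ball_zero_iff.mpr (hT z hz.2 hz.1)⟩
  have hsum : Tendsto (canonicalForm k ϱ α) (comap im atTop ⊓ 𝓟 UH) (nhds 0) := by
    simpa only [mul_zero, Finset.sum_const_zero, ← canonicalForm.eq_def] using
      tendsto_finsetSum Finset.univ fun i _ => (hlim i).const_mul (α i : ℂ)
  obtain ⟨T, -, hT⟩ := (hbasis.tendsto_iff nhds_basis_ball).mp hsum ε hε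
  exact ⟨T, fun z hz hzT => mem_ball_zero_iff.mp (hT z ⟨hzT, hz⟩)⟩

theorem exists_ball_norm_canonicalForm_sub_le (hk : 2 ≤ k) (hϱ : ∀ i, ϱ i ∈ UH)
    (hdist : ∀ i j, i ≠ j → ϱ j ∉ orbit (ϱ i)) (i : Fin n) :
    ∃ r > 0, ∃ B, ∀ z ∈ ball (ϱ i) r,
      ‖canonicalForm k ϱ α z - (α i : ℂ) * polePart k (ϱ i) z‖ ≤ B := by
  choose r hr B hB using fun j => exists_ball_norm_poincareSeries_sub_le hk (hϱ j) (hϱ i)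
  have : Nonempty (Fin n) := ⟨i⟩
  obtain ⟨j₀, hj₀⟩ := Finite.exists_min r
  refine ⟨r j₀, hr j₀, ∑ j, |α j| * B j, fun z hz => ?_⟩
  have hpole : (α i : ℂ) * polePart k (ϱ i) z =
      ∑ j, (α j : ℂ) * (orbit (ϱ j)).indicator (fun o => polePart k o z) (ϱ i) := by
    rw [Finset.sum_eq_single_of_mem i (Finset.mem_univ i) fun j _ hj => by
      rw [indicator_of_notMem (hdist j i hj), mul_zero], indicator_of_mem (mem_orbit_self _)]
  rw [hpole, canonicalForm, ← Finset.sum_sub_distrib]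
  refine norm_sum_le_of_le _ fun j _ => ?_
  rw [← mul_sub, norm_mul, norm_real, Real.norm_eq_abs]
  exact mul_le_mul_of_nonneg_left (hB j z (ball_subset_ball (hj₀ j) hz)) (abs_nonneg _)

theorem hasFDerivAt_sum_orbitPrimitive {K : ℕ} {γ : SL2Z} (hK : 1 ≤ K) (hϱ : ∀ i, ϱ i ∈ UH)
    (hz : z ∈ UH \ orbitUnion ϱ) :
    HasFDerivAt (fun z => ∑ i, α i * orbitPrimitive K γ (ϱ i) z)
      (reMulCLM (I ^ K * (canonicalForm (K + 1) ϱ α z * Qpoly γ z ^ K))) z := by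
  have hsum := HasFDerivAt.fun_sum (u := Finset.univ) fun i _ =>
    (hasFDerivAt_orbitPrimitive (γ := γ) hK (hϱ i) hz.1
      (notMem_orbit_of_notMem_orbitUnion hz.2 i)).const_mul (α i)
  refine hsum.congr_fderiv ?_
  simp only [canonicalForm, Finset.sum_mul, Finset.mul_sum, map_sum, ← map_smul, real_smul]
  exact Finset.sum_congr rfl fun i _ => by rw [mul_assoc, mul_left_comm]

theorem re_geodFactor_mul_pathInt_canonicalForm (hk : 2 ≤ k) (hϱ : ∀ i, ϱ i ∈ UH) (γ : SL2Z)
    {σ : ℝ → ℂ} (hσ : PiecewiseC1 σ) (hσ1 : σ 1 = moeb γ (σ 0))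
    (hU : MapsTo σ (Icc 0 1) (UH \ orbitUnion ϱ)) :
    (geodFactor k γ * pathInt (fun z => canonicalForm k ϱ α z * Qpoly γ z ^ (k - 1)) σ).re = 0 := by
  obtain ⟨K, rfl⟩ := Nat.exists_eq_add_of_le' (one_le_two.trans hk)
  have hF : ContinuousOn (fun z => canonicalForm (K + 1) ϱ α z * Qpoly γ z ^ K)
      (UH \ orbitUnion ϱ) := fun z hz => by
    refine ((differentiableAt_canonicalForm hk hϱ hz).continuousAt.mul ?_).continuousWithinAt
    unfold Qpoly
    fun_prop
  have hz₀ : σ 0 ∈ UH := (hU (left_mem_Icc.mpr zero_le_one)).1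
  rw [geodFactor_eq, Nat.add_sub_cancel, mul_assoc, re_ofReal_mul,
    re_mul_pathInt hF (fun z => hasFDerivAt_sum_orbitPrimitive (by lia) hϱ) hσ hU, hσ1]
  simp only [orbitPrimitive_moeb (hϱ _) hz₀, sub_self, mul_zero]

theorem isCanonicalForm_canonicalForm (hk : 2 ≤ k) (hϱ : ∀ i, ϱ i ∈ UH)
    (hdist : ∀ i j, i ≠ j → ϱ j ∉ orbit (ϱ i)) :
    IsCanonicalForm k ϱ α (canonicalForm k ϱ α) := by
  refine ⟨fun z hz => (differentiableAt_canonicalForm hk hϱ hz).differentiableWithinAt,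
    fun γ z hz => canonicalForm_moeb hϱ hz.1 γ, fun ε hε => ?_, fun i => ?_, ?_⟩
  · obtain ⟨T, hT⟩ := exists_forall_norm_canonicalForm_lt hk hϱ hε
    exact ⟨T, fun z hz => hT z hz.1⟩
  · obtain ⟨r, hr, B, hB⟩ := exists_ball_norm_canonicalForm_sub_le hk hϱ hdist i
    exact ⟨r, hr, B, fun z hz => hB z hz.1.1⟩
  · rintro γ - - _ - σ hσ rfl hσ1 hU
    exact re_geodFactor_mul_pathInt_canonicalForm hk hϱ γ hσ hσ1 hU

end CanonicalForm

/-! ### The difference of two canonical forms -/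

section BentSegment

/-- The path from `z₀` to `z₁` obtained by bending the straight segment sideways by the amount `s`;
it is used to avoid countably many points. -/
def bentSegment (z₀ z₁ : ℂ) (s t : ℝ) : ℂ := z₀ + (z₁ - z₀) * (t + I * s * t * (1 - t))

variable {z₀ z₁ : ℂ} {s : ℝ} {S : Set ℂ}

theorem bentSegment_zero (z₀ z₁ : ℂ) (s : ℝ) : bentSegment z₀ z₁ s 0 = z₀ := by simp [bentSegment]

theorem bentSegment_one (z₀ z₁ : ℂ) (s : ℝ) : bentSegment z₀ z₁ s 1 = z₁ := by simp [bentSegment]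

theorem bentSegment_mem_UH (hs : 0 ≤ s)
    (hlt : s * |(z₁ - z₀).re| < min z₀.im z₁.im) {t : ℝ} (ht : t ∈ Icc (0 : ℝ) 1) :
    bentSegment z₀ z₁ s t ∈ UH := by
  have him : (bentSegment z₀ z₁ s t).im =
      (1 - t) * z₀.im + t * z₁.im + t * (1 - t) * (s * (z₁ - z₀).re) := by
    simp [bentSegment]
    ring
  have ht' : 0 ≤ 1 - t := sub_nonneg.mpr ht.2
  have hmin : min z₀.im z₁.im ≤ (1 - t) * z₀.im + t * z₁.im := by
    nlinarith [mul_le_mul_of_nonneg_left (min_le_left z₀.im z₁.im) ht',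
      mul_le_mul_of_nonneg_left (min_le_right z₀.im z₁.im) ht.1]
  have hbend : |t * (1 - t) * (s * (z₁ - z₀).re)| ≤ s * |(z₁ - z₀).re| := by
    rw [abs_mul, abs_mul s, abs_of_nonneg hs, abs_of_nonneg (mul_nonneg ht.1 ht')]
    exact mul_le_of_le_one_left (by positivity) (mul_le_one₀ ht.2 ht' (by linarith [ht.1]))
  rw [UH, mem_ofPred, him]
  linarith [neg_le_of_abs_le hbend]

theorem subsingleton_setOf_mem_bentSegment {o : ℂ} (hne : z₀ ≠ z₁) (hz₀ : z₀ ≠ o) (hz₁ : z₁ ≠ o) :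
    {s | o ∈ range (bentSegment z₀ z₁ s)}.Subsingleton := by
  rintro s ⟨t, ht⟩ s' ⟨t', ht'⟩
  have heq : (t + I * s * t * (1 - t) : ℂ) = t' + I * s' * t' * (1 - t') :=
    mul_left_cancel₀ (sub_ne_zero.mpr hne.symm) (add_left_cancel (ht.trans ht'.symm))
  obtain rfl : t = t' := by simpa using congrArg re heq
  have him : s * t * (1 - t) = s' * t * (1 - t) := by simpa using congrArg im heq
  have ht0 : t ≠ 0 := fun h => hz₀ (by rw [← ht, h, bentSegment_zero])
  have ht1 : 1 - t ≠ 0 := fun h => hz₁ (by rw [← ht, ← sub_eq_zero.mp h, bentSegment_one])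
  exact mul_right_cancel₀ ht0 (mul_right_cancel₀ ht1 him)

theorem exists_contDiff_path_diff_countable (hS : S.Countable) (hz₀ : z₀ ∈ UH \ S)
    (hz₁ : z₁ ∈ UH \ S) : ∃ σ : ℝ → ℂ, ContDiff ℝ 1 σ ∧ σ 0 = z₀ ∧ σ 1 = z₁ ∧
      MapsTo σ (Icc 0 1) (UH \ S) := by
  rcases eq_or_ne z₀ z₁ with rfl | hne
  · exact ⟨fun _ => z₀, contDiff_const, rfl, rfl, fun _ _ => hz₀⟩
  have hbad : (⋃ o ∈ S, {s | o ∈ range (bentSegment z₀ z₁ s)}).Countable :=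
    hS.biUnion fun o ho => (subsingleton_setOf_mem_bentSegment hne
      (ne_of_mem_of_not_mem ho hz₀.2).symm (ne_of_mem_of_not_mem ho hz₁.2).symm).countable
  have hm : 0 < min z₀.im z₁.im := lt_min hz₀.1 hz₁.1
  obtain ⟨s, hs, hsbad⟩ := (hbad.dense_compl ℝ).inter_open_nonempty
    (Ioo 0 (min z₀.im z₁.im / (|(z₁ - z₀).re| + 1))) isOpen_Ioo (nonempty_Ioo.mpr (by positivity))
  have hlt : s * |(z₁ - z₀).re| < min z₀.im z₁.im := by
    linarith [(lt_div_iff₀ (by positivity)).mp hs.2, hs.1]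
  have hsmooth : ContDiff ℝ 1 (bentSegment z₀ z₁ s) := by
    have : ContDiff ℝ 1 fun t : ℝ => (t : ℂ) := ofRealCLM.contDiff
    unfold bentSegment
    fun_prop
  exact ⟨_, hsmooth, bentSegment_zero _ _ _, bentSegment_one _ _ _, fun t ht =>
    ⟨bentSegment_mem_UH hs.1.le hlt ht, fun ho => hsbad (mem_biUnion ho ⟨t, rfl⟩)⟩⟩

end BentSegment

section OrbitUnion

open Filter Topology

variable {n : ℕ} {ϱ : Fin n → ℂ} {z : ℂ}

theorem countable_orbitUnion (ϱ : Fin n → ℂ) : (orbitUnion ϱ).Countable := by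
  have : Countable (Matrix (Fin 2) (Fin 2) ℤ) := inferInstanceAs (Countable (Fin 2 → Fin 2 → ℤ))
  have : Countable SL2Z := Subtype.countable
  refine countable_iUnion fun i => (countable_range fun γ : SL2Z => moeb γ (ϱ i)).mono ?_
  rintro _ ⟨γ, rfl⟩
  exact mem_range_self γ

theorem moeb_mem_UH_diff_orbitUnion (hϱ : ∀ i, ϱ i ∈ UH) (hz : z ∈ UH \ orbitUnion ϱ) (γ : SL2Z) :
    moeb γ z ∈ UH \ orbitUnion ϱ := by
  refine ⟨moeb_mem_UH hz.1, fun h => ?_⟩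
  obtain ⟨i, hi⟩ := mem_iUnion.mp h
  exact hz.2 (mem_iUnion_of_mem i ((moeb_mem_orbit_iff (hϱ i) hz.1 γ).mp hi))

theorem eventually_mem_UH_diff_orbitUnion (hϱ : ∀ i, ϱ i ∈ UH) (hz : z ∈ UH) :
    ∀ᶠ w in 𝓝[≠] z, w ∈ UH \ orbitUnion ϱ := by
  have hpoles : ∀ᶠ w in 𝓝[≠] z, ∀ i, w ∉ orbit (ϱ i) :=
    eventually_all.mpr fun i => eventually_notMem_orbit (hϱ i) hz
  filter_upwards [nhdsWithin_le_nhds (isOpen_UH.mem_nhds hz), hpoles] with w hw hnot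
  exact ⟨hw, fun h => (mem_iUnion.mp h).elim hnot⟩

theorem UH_diff_orbitUnion_mem_nhds (hϱ : ∀ i, ϱ i ∈ UH) (hz : z ∈ UH \ orbitUnion ϱ) :
    UH \ orbitUnion ϱ ∈ 𝓝 z := by
  rw [← insert_eq_of_mem hz, insert_mem_nhds_iff]
  exact eventually_mem_UH_diff_orbitUnion hϱ hz.1

theorem continuous_autFactor (γ : SL2Z) : Continuous (autFactor γ) := by
  unfold autFactor
  fun_prop

theorem continuousAt_moeb (hz : z ∈ UH) (γ : SL2Z) : ContinuousAt (moeb γ) z :=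
  ContinuousAt.div (by fun_prop) (continuous_autFactor γ).continuousAt
    (autFactor_ne_zero (im_ne_zero_of_mem_UH hz))

theorem tendsto_moeb_nhdsNE (hz : z ∈ UH) (γ : SL2Z) :
    Tendsto (moeb γ) (𝓝[≠] z) (𝓝[≠] (moeb γ z)) := by
  refine tendsto_nhdsWithin_iff.mpr ⟨(continuousAt_moeb hz γ).mono_left nhdsWithin_le_nhds, ?_⟩
  filter_upwards [self_mem_nhdsWithin, nhdsWithin_le_nhds (isOpen_UH.mem_nhds hz)] with w hne hw heq
  exact hne (by rw [mem_singleton_iff, ← moeb_inv_moeb hw, mem_singleton_iff.mp heq,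
    moeb_inv_moeb hz])

end OrbitUnion

section Extension

open Filter Topology Asymptotics

theorem exists_differentiableAt_eqOn {f : ℂ → ℂ} {U V : Set ℂ}
    (hf : ∀ z ∈ V, DifferentiableAt ℂ f z) (hV : ∀ z ∈ U, V ∈ 𝓝[≠] z)
    (hb : ∀ z ∈ U, f =O[𝓝[≠] z] fun _ => (1 : ℝ)) :
    ∃ g : ℂ → ℂ, (∀ z ∈ U, DifferentiableAt ℂ g z) ∧ EqOn g f V := by
  have heq : EqOn (fun z => limUnder (𝓝[≠] z) f) f V := fun z hz =>
    ((hf z hz).continuousAt.tendsto.mono_left nhdsWithin_le_nhds).limUnder_eq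
  refine ⟨fun z => limUnder (𝓝[≠] z) f, fun z hz => ?_, heq⟩
  have hO : (fun w => f w - f z) =O[𝓝[≠] z] fun _ => (1 : ℝ) :=
    (hb z hz).sub (isBigO_const_const _ one_ne_zero _)
  have hlim := differentiableOn_update_limUnder_insert_of_isLittleO (hV z hz)
    (fun w hw => (hf w hw).differentiableWithinAt) ((isBigO_one_iff ℝ).mp hO).isLittleO_sub_self_inv
  have hnhds : insert z V ∈ 𝓝 z := insert_mem_nhds_iff.mpr (hV z hz)
  refine (hlim.differentiableAt hnhds).congr_of_eventuallyEq ?_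
  filter_upwards [hnhds] with w hw
  rcases eq_or_ne w z with rfl | hne
  · rw [Function.update_self]
  · rw [Function.update_of_ne hne]
    exact heq (hw.resolve_left hne)

/-- A cusp form `g` of weight `2(K + 1)` for `SL₂(ℤ)` for which the real parts of `i^K ∫ g Q_γ^K`
along closed geodesics vanish. The period is expressed through a primitive `E` of the integrand,
which makes the path of integration irrelevant. -/
structure IsPeriodFreeCuspForm (K : ℕ) (g : ℂ → ℂ) : Prop where
  differentiableAt : ∀ z ∈ UH, DifferentiableAt ℂ g z
  apply_moeb : ∀ γ : SL2Z, ∀ z ∈ UH, g (moeb γ z) = autFactor γ z ^ (2 * (K + 1)) * g z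
  tendsto_cusp : Tendsto g (comap im atTop) (𝓝 0)
  exists_period_eq_zero : ∀ γ : SL2Z, IsHyperbolic γ → IsPrimitive γ → ∀ E : ℂ → ℂ,
    (∀ z ∈ UH, HasDerivAt E (g z * Qpoly γ z ^ K) z) →
    ∃ z₀ ∈ UH, (I ^ K * (E (moeb γ z₀) - E z₀)).re = 0

theorem discr_pos {γ : SL2Z} (hγ : IsHyperbolic γ) : 0 < discr γ := by
  have htrace : (2 : ℝ) < |((γ.1 0 0 + γ.1 1 1 : ℤ) : ℝ)| := mod_cast hγ
  rw [discr, ← sq_abs]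
  nlinarith

variable {K n : ℕ} {ϱ : Fin n → ℂ} {α : Fin n → ℝ} {f₁ f₂ g : ℂ → ℂ}

theorem isBigO_sub_one (hϱ : ∀ i, ϱ i ∈ UH) (h₁ : IsCanonicalForm (K + 1) ϱ α f₁)
    (h₂ : IsCanonicalForm (K + 1) ϱ α f₂) (i : Fin n) :
    (fun z => f₁ z - f₂ z) =O[𝓝[≠] ϱ i] fun _ => (1 : ℝ) := by
  have hbounded : ∀ f, IsCanonicalForm (K + 1) ϱ α f →
      (fun z => f z - (α i : ℂ) * polePart (K + 1) (ϱ i) z) =O[𝓝[≠] ϱ i] fun _ => (1 : ℝ) := by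
    rintro f ⟨-, -, -, hf, -⟩
    obtain ⟨δ, hδ, C, hC⟩ := hf i
    refine IsBigO.of_bound C ?_
    filter_upwards [nhdsWithin_le_nhds (ball_mem_nhds _ hδ), self_mem_nhdsWithin,
      eventually_mem_UH_diff_orbitUnion hϱ (hϱ i)] with z hz hne hreg
    simpa only [norm_one, mul_one] using hC z ⟨⟨hz, hne⟩, hreg⟩
  simpa only [sub_sub_sub_cancel_right] using (hbounded f₁ h₁).sub (hbounded f₂ h₂)

theorem isBigO_one_of_apply_moeb {f : ℂ → ℂ} {m : ℕ} {z : ℂ} {γ : SL2Z} (hz : z ∈ UH)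
    (hf : ∀ᶠ w in 𝓝[≠] z, f (moeb γ w) = autFactor γ w ^ m * f w)
    (hO : f =O[𝓝[≠] z] fun _ => (1 : ℝ)) : f =O[𝓝[≠] (moeb γ z)] fun _ => (1 : ℝ) := by
  have haut : (fun w => autFactor γ w ^ m) =O[𝓝[≠] z] fun _ => (1 : ℝ) :=
    (((continuous_autFactor γ).pow m).continuousAt.isBigO_one ℝ).mono nhdsWithin_le_nhds
  have hmoeb : (fun w => f (moeb γ w)) =O[𝓝[≠] z] fun _ => (1 : ℝ) := by
    simpa only [mul_one] using (haut.mul hO).congr' (hf.mono fun w hw => hw.symm) .rfl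
  have hback := tendsto_moeb_nhdsNE (moeb_mem_UH (γ := γ) hz) γ⁻¹
  rw [moeb_inv_moeb hz] at hback
  refine (hmoeb.comp_tendsto hback).congr' ?_ .rfl
  filter_upwards [nhdsWithin_le_nhds (isOpen_UH.mem_nhds (moeb_mem_UH hz))] with w hw
  rw [Function.comp_apply, moeb_moeb_inv hw]

theorem exists_differentiableAt_eqOn_sub (hϱ : ∀ i, ϱ i ∈ UH)
    (h₁ : IsCanonicalForm (K + 1) ϱ α f₁) (h₂ : IsCanonicalForm (K + 1) ϱ α f₂) :
    ∃ g : ℂ → ℂ, (∀ z ∈ UH, DifferentiableAt ℂ g z) ∧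
      EqOn g (fun z => f₁ z - f₂ z) (UH \ orbitUnion ϱ) := by
  have hdiff : ∀ z ∈ UH \ orbitUnion ϱ, DifferentiableAt ℂ (fun z => f₁ z - f₂ z) z :=
    fun z hz => (h₁.1.sub h₂.1).differentiableAt (UH_diff_orbitUnion_mem_nhds hϱ hz)
  refine exists_differentiableAt_eqOn hdiff
    (fun z hz => eventually_mem_UH_diff_orbitUnion hϱ hz) fun z hz => ?_
  by_cases hpole : z ∈ orbitUnion ϱ
  · obtain ⟨i, γ, rfl⟩ := mem_iUnion.mp hpole
    refine isBigO_one_of_apply_moeb (hϱ i) (m := 2 * (K + 1)) ?_ (isBigO_sub_one hϱ h₁ h₂ i)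
    filter_upwards [eventually_mem_UH_diff_orbitUnion hϱ (hϱ i)] with w hw
    rw [h₁.2.1 γ w hw, h₂.2.1 γ w hw, ← mul_sub, autFactor]
  · exact ((hdiff z ⟨hz, hpole⟩).continuousAt.isBigO_one ℝ).mono nhdsWithin_le_nhds

theorem apply_moeb_of_eqOn_sub (hg : ∀ z ∈ UH, DifferentiableAt ℂ g z)
    (heq : EqOn g (fun z => f₁ z - f₂ z) (UH \ orbitUnion ϱ))
    (hϱ : ∀ i, ϱ i ∈ UH) (h₁ : IsCanonicalForm (K + 1) ϱ α f₁)
    (h₂ : IsCanonicalForm (K + 1) ϱ α f₂) (γ : SL2Z) {z : ℂ} (hz : z ∈ UH) :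
    g (moeb γ z) = autFactor γ z ^ (2 * (K + 1)) * g z := by
  have hleft : ContinuousAt (fun w => g (moeb γ w)) z :=
    (hg _ (moeb_mem_UH hz)).continuousAt.comp (continuousAt_moeb hz γ)
  have hright : ContinuousAt (fun w => autFactor γ w ^ (2 * (K + 1)) * g w) z :=
    ((continuous_autFactor γ).pow _).continuousAt.mul (hg z hz).continuousAt
  refine tendsto_nhds_unique_of_eventuallyEq (hleft.mono_left nhdsWithin_le_nhds)
    (hright.mono_left nhdsWithin_le_nhds) (l := 𝓝[≠] z) ?_
  filter_upwards [eventually_mem_UH_diff_orbitUnion hϱ hz] with w hw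
  simp only [heq hw, heq (moeb_mem_UH_diff_orbitUnion hϱ hw γ), h₁.2.1 γ w hw, h₂.2.1 γ w hw,
    autFactor, mul_sub]

theorem tendsto_cusp_of_eqOn_sub (hg : ∀ z ∈ UH, DifferentiableAt ℂ g z)
    (heq : EqOn g (fun z => f₁ z - f₂ z) (UH \ orbitUnion ϱ))
    (hϱ : ∀ i, ϱ i ∈ UH) (h₁ : IsCanonicalForm (K + 1) ϱ α f₁)
    (h₂ : IsCanonicalForm (K + 1) ϱ α f₂) : Tendsto g (comap im atTop) (𝓝 0) := by
  rw [((atTop_basis_Ioi (α := ℝ)).comap im).tendsto_iff nhds_basis_closedBall]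
  intro ε hε
  obtain ⟨T₁, hT₁⟩ := h₁.2.2.1 (ε / 2) (half_pos hε)
  obtain ⟨T₂, hT₂⟩ := h₂.2.2.1 (ε / 2) (half_pos hε)
  refine ⟨max (max T₁ T₂) 0, trivial, fun z hz => mem_closedBall_zero_iff.mpr ?_⟩
  have hzU : z ∈ UH := lt_of_le_of_lt (le_max_right (max T₁ T₂) 0) hz
  refine le_of_tendsto ((hg z hzU).continuousAt.norm.tendsto.mono_left nhdsWithin_le_nhds)
    (x := 𝓝[≠] z) ?_
  have hhigh : ∀ᶠ w in 𝓝[≠] z, max (max T₁ T₂) 0 < w.im :=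
    (continuous_im.continuousAt.eventually_const_lt hz).filter_mono nhdsWithin_le_nhds
  filter_upwards [eventually_mem_UH_diff_orbitUnion hϱ hzU, hhigh] with w hw hwT
  simp only [max_lt_iff] at hwT
  rw [heq hw]
  linarith [norm_sub_le (f₁ w) (f₂ w), hT₁ w hw hwT.1.1, hT₂ w hw hwT.1.2]

theorem re_pathInt_eq_zero_of_eqOn_sub
    (heq : EqOn g (fun z => f₁ z - f₂ z) (UH \ orbitUnion ϱ))
    (h₁ : IsCanonicalForm (K + 1) ϱ α f₁)
    (h₂ : IsCanonicalForm (K + 1) ϱ α f₂) {γ : SL2Z} (hγ : IsHyperbolic γ) (hprim : IsPrimitive γ)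
    {σ : ℝ → ℂ} (hσ : ContDiff ℝ 1 σ) (hpc : PiecewiseC1 σ) (hσ1 : σ 1 = moeb γ (σ 0))
    (hU : MapsTo σ (Icc 0 1) (UH \ orbitUnion ϱ)) :
    (I ^ K * pathInt (fun z => g z * Qpoly γ z ^ K) σ).re = 0 := by
  have hzero : ∀ f, IsCanonicalForm (K + 1) ϱ α f →
      (I ^ K * pathInt (fun z => f z * Qpoly γ z ^ K) σ).re = 0 := by
    intro f hf
    have hper := hf.2.2.2.2 γ hγ hprim (σ 0) (hU (left_mem_Icc.mpr zero_le_one)) σ hpc rfl hσ1 hU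
    rw [geodFactor_eq, Nat.add_sub_cancel, mul_assoc, re_ofReal_mul] at hper
    have := Real.sqrt_pos.mpr (discr_pos hγ)
    exact (mul_eq_zero.mp hper).resolve_left (by positivity)
  have hint : ∀ f, IsCanonicalForm (K + 1) ϱ α f → IntervalIntegrable
      (fun t => f (σ t) * Qpoly γ (σ t) ^ K * deriv σ t) volume 0 1 := fun f hf =>
    intervalIntegrable_comp_mul_deriv (F := fun z => f z * Qpoly γ z ^ K)
      (hf.1.continuousOn.mul (by unfold Qpoly; fun_prop)) zero_le_one hσ.contDiffOn hU
  have hsub : pathInt (fun z => g z * Qpoly γ z ^ K) σ =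
      pathInt (fun z => f₁ z * Qpoly γ z ^ K) σ - pathInt (fun z => f₂ z * Qpoly γ z ^ K) σ := by
    rw [pathInt, pathInt, pathInt, ← intervalIntegral.integral_sub (hint f₁ h₁) (hint f₂ h₂)]
    refine intervalIntegral.integral_congr fun t ht => ?_
    simp only [heq (hU (uIcc_of_le (zero_le_one' ℝ) ▸ ht)), sub_mul]
  rw [hsub, mul_sub, sub_re, hzero f₁ h₁, hzero f₂ h₂, sub_zero]

theorem exists_period_eq_zero_of_eqOn_sub (hg : ∀ z ∈ UH, DifferentiableAt ℂ g z)
    (heq : EqOn g (fun z => f₁ z - f₂ z) (UH \ orbitUnion ϱ))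
    (hϱ : ∀ i, ϱ i ∈ UH)
    (h₁ : IsCanonicalForm (K + 1) ϱ α f₁) (h₂ : IsCanonicalForm (K + 1) ϱ α f₂) {γ : SL2Z}
    (hγ : IsHyperbolic γ) (hprim : IsPrimitive γ) {E : ℂ → ℂ}
    (hE : ∀ z ∈ UH, HasDerivAt E (g z * Qpoly γ z ^ K) z) :
    ∃ z₀ ∈ UH, (I ^ K * (E (moeb γ z₀) - E z₀)).re = 0 := by
  obtain ⟨z₀, hz₀⟩ :=
    (eventually_mem_UH_diff_orbitUnion (z := I) hϱ (by simp [UH])).exists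
  obtain ⟨σ, hσ, hσ0, hσ1, hU⟩ := exists_contDiff_path_diff_countable (countable_orbitUnion ϱ) hz₀
    (moeb_mem_UH_diff_orbitUnion hϱ hz₀ γ)
  have hpc : PiecewiseC1 σ := ⟨hσ.continuous.continuousOn, 1, fun i => i, one_pos, Nat.cast_zero,
    Nat.cast_one, fun i _ => by simp, fun i _ => hσ.contDiffOn⟩
  have hcont : ContinuousOn (fun z => g z * Qpoly γ z ^ K) (UH \ orbitUnion ϱ) := fun z hz =>
    ((hg z hz.1).continuousAt.mul (by unfold Qpoly; fun_prop)).continuousWithinAt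
  refine ⟨z₀, hz₀.1, ?_⟩
  rw [← hσ0] at hσ1 ⊢
  have hzero := re_pathInt_eq_zero_of_eqOn_sub heq h₁ h₂ hγ hprim hσ hpc hσ1 hU
  rwa [re_mul_pathInt (P := fun z => (I ^ K * E z).re) hcont
    (fun z hz => hasFDerivAt_re_of_hasDerivAt ((hE z hz.1).const_mul _)) hpc hU, hσ1, ← sub_re,
    ← mul_sub] at hzero

theorem exists_isPeriodFreeCuspForm_eqOn_sub (hϱ : ∀ i, ϱ i ∈ UH)
    (h₁ : IsCanonicalForm (K + 1) ϱ α f₁) (h₂ : IsCanonicalForm (K + 1) ϱ α f₂) :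
    ∃ g, IsPeriodFreeCuspForm K g ∧ EqOn g (fun z => f₁ z - f₂ z) (UH \ orbitUnion ϱ) := by
  obtain ⟨g, hg, heq⟩ := exists_differentiableAt_eqOn_sub hϱ h₁ h₂
  exact ⟨g, ⟨hg, fun γ _ => apply_moeb_of_eqOn_sub hg heq hϱ h₁ h₂ γ,
    tendsto_cusp_of_eqOn_sub hg heq hϱ h₁ h₂,
    fun _ hγ hprim _ => exists_period_eq_zero_of_eqOn_sub hg heq hϱ h₁ h₂ hγ hprim⟩, heq⟩

end Extension

/-! ### Iterated primitives of periodic functions vanishing at the cusp -/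

section IteratedPrimitive

open Filter Topology Function.Periodic

/-- A holomorphic function on the upper half-plane with period `1` which tends to `0` at the cusp,
that is, a power series in `exp (2πiz)` without constant term. -/
structure IsCuspidal (g : ℂ → ℂ) : Prop where
  differentiableAt : ∀ z ∈ UH, DifferentiableAt ℂ g z
  apply_add_one : ∀ z ∈ UH, g (z + 1) = g z
  tendsto_cusp : Tendsto g (comap im atTop) (𝓝 0)

theorem eventually_cusp_mem_UH : ∀ᶠ z in comap im atTop, z ∈ UH :=
  (eventually_gt_atTop 0).comap im

theorem add_int_mem_UH {z : ℂ} (hz : z ∈ UH) (n : ℤ) : z + n ∈ UH := by simpa [UH] using hz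

theorem qParam_mem_ball {z : ℂ} (hz : z ∈ UH) : qParam 1 z ∈ ball (0 : ℂ) 1 :=
  mem_ball_zero_iff.mpr (norm_qParam_lt_one one_pos hz)

theorem exists_qParam_eq {q : ℂ} (hq : q ∈ ball (0 : ℂ) 1) (hq0 : q ≠ 0) :
    ∃ z ∈ UH, qParam 1 z = q := by
  refine ⟨invQParam 1 q, ?_, qParam_right_inv one_ne_zero hq0⟩
  rw [UH, mem_ofPred, im_invQParam, neg_div, neg_mul, neg_pos]
  exact mul_neg_of_pos_of_neg (by positivity)
    (Real.log_neg (norm_pos_iff.mpr hq0) (mem_ball_zero_iff.mp hq))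

theorem hasDerivAt_qParam (z : ℂ) : HasDerivAt (qParam 1) (2 * Real.pi * I * qParam 1 z) z := by
  have h := (((hasDerivAt_id' z).const_mul (2 * Real.pi * I : ℂ)).div_const ((1 : ℝ) : ℂ)).cexp
  refine h.congr_deriv ?_
  simp only [qParam, ofReal_one, div_one, mul_one]
  ring

theorem isCuspidal_comp_qParam {H : ℂ → ℂ} (hH : DifferentiableOn ℂ H (ball 0 1)) (h0 : H 0 = 0) :
    IsCuspidal (H ∘ qParam 1) where
  differentiableAt z hz := (hH.differentiableAt (isOpen_ball.mem_nhds (qParam_mem_ball hz))).comp z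
    (hasDerivAt_qParam z).differentiableAt
  apply_add_one z _ := by
    have hperiod : qParam 1 (z + 1) = qParam 1 z := by
      rw [qParam, qParam, ofReal_one, div_one, div_one, mul_add, mul_one]
      exact exp_periodic _
    rw [Function.comp_apply, hperiod, Function.comp_apply]
  tendsto_cusp := by
    have hcont := (hH.differentiableAt (ball_mem_nhds 0 one_pos)).continuousAt.tendsto
    rw [h0] at hcont
    exact hcont.comp ((qParam_tendsto one_pos).mono_right nhdsWithin_le_nhds)

variable {g : ℂ → ℂ}

theorem IsCuspidal.exists_eqOn_comp_qParam (hg : IsCuspidal g) :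
    ∃ H : ℂ → ℂ, DifferentiableOn ℂ H (ball 0 1) ∧ H 0 = 0 ∧ EqOn (H ∘ qParam 1) g UH := by
  classical
  have hindicator : ∀ z ∈ UH, UH.indicator g =ᶠ[𝓝 z] g := fun z hz =>
    (eqOn_indicator (s := UH)).eventuallyEq_of_mem (isOpen_UH.mem_nhds hz)
  have hperiodic : Function.Periodic (UH.indicator g) (1 : ℝ) := fun z => by
    have hmem : z + 1 ∈ UH ↔ z ∈ UH := by simp [UH]
    by_cases hz : z ∈ UH
    · simp [hz, hmem, hg.apply_add_one z hz]
    · simp [hz, hmem]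
  have hcusp : ZeroAtFilter (comap im atTop) (UH.indicator g) := hg.tendsto_cusp.congr' <| by
    filter_upwards [eventually_cusp_mem_UH] with z hz using (indicator_of_mem hz g).symm
  have hdiff : ∀ z ∈ UH, DifferentiableAt ℂ (UH.indicator g) z := fun z hz =>
    (hg.differentiableAt z hz).congr_of_eventuallyEq (hindicator z hz)
  refine ⟨cuspFunction 1 (UH.indicator g), fun q hq => ?_,
    cuspFunction_zero_of_zero_at_inf one_pos hcusp, fun z hz => ?_⟩
  · refine DifferentiableAt.differentiableWithinAt ?_
    rcases eq_or_ne q 0 with rfl | hq0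
    · exact differentiableAt_cuspFunction_zero one_pos hperiodic
        (eventually_cusp_mem_UH.mono hdiff) hcusp.boundedAtFilter
    · obtain ⟨z, hz, rfl⟩ := exists_qParam_eq hq hq0
      exact differentiableAt_cuspFunction one_ne_zero hperiodic (hdiff z hz)
  · exact (eq_cuspFunction one_ne_zero hperiodic z).trans (indicator_of_mem hz g)

theorem exists_hasDerivAt_div {H : ℂ → ℂ} (hH : DifferentiableOn ℂ H (ball 0 1)) (h0 : H 0 = 0)
    (c : ℂ) : ∃ G : ℂ → ℂ, DifferentiableOn ℂ G (ball 0 1) ∧ G 0 = 0 ∧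
      ∀ q ∈ ball (0 : ℂ) 1, q ≠ 0 → HasDerivAt G (H q / (c * q)) q := by
  have hslope : DifferentiableOn ℂ (fun q => dslope H 0 q / c) (ball 0 1) :=
    ((differentiableOn_dslope (ball_mem_nhds 0 one_pos)).mpr hH).div_const c
  obtain ⟨G, hG0, hG⟩ := hslope.isExactOn_ball.with_val_at 0 0
  refine ⟨G, fun q hq => (hG q hq).differentiableAt.differentiableWithinAt, hG0,
    fun q hq hq0 => (hG q hq).congr_deriv ?_⟩
  rw [dslope_of_ne _ hq0, slope_def_field, h0, sub_zero, sub_zero, div_div, mul_comm]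

theorem IsCuspidal.exists_primitive (hg : IsCuspidal g) :
    ∃ h, IsCuspidal h ∧ ∀ z ∈ UH, HasDerivAt h (g z) z := by
  obtain ⟨H, hH, hH0, hHg⟩ := hg.exists_eqOn_comp_qParam
  obtain ⟨G, hG, hG0, hderiv⟩ := exists_hasDerivAt_div hH hH0 (2 * Real.pi * I)
  refine ⟨G ∘ qParam 1, isCuspidal_comp_qParam hG hG0, fun z hz => ?_⟩
  have hne : 2 * Real.pi * I * qParam 1 z ≠ 0 := mul_ne_zero two_pi_I_ne_zero (qParam_ne_zero z)
  refine ((hderiv _ (qParam_mem_ball hz) (qParam_ne_zero z)).comp z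
    (hasDerivAt_qParam z)).congr_deriv ?_
  rw [div_mul_cancel₀ _ hne, ← hHg hz, Function.comp_apply]

/-- The `l`-th iterated primitive of `g` that vanishes at the cusp; it is meaningful when `g` is
cuspidal. -/
def iteratedPrimitive (g : ℂ → ℂ) : ℕ → ℂ → ℂ
  | 0 => g
  | l + 1 => Classical.epsilon fun h => IsCuspidal h ∧
      ∀ z ∈ UH, HasDerivAt h (iteratedPrimitive g l z) z

theorem iteratedPrimitive_zero (g : ℂ → ℂ) : iteratedPrimitive g 0 = g := rfl

theorem isCuspidal_iteratedPrimitive (hg : IsCuspidal g) (l : ℕ) :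
    IsCuspidal (iteratedPrimitive g l) := by
  induction l with
  | zero => exact hg
  | succ l ih => exact (Classical.epsilon_spec ih.exists_primitive).1

theorem hasDerivAt_iteratedPrimitive (hg : IsCuspidal g) (l : ℕ) {z : ℂ} (hz : z ∈ UH) :
    HasDerivAt (iteratedPrimitive g (l + 1)) (iteratedPrimitive g l z) z :=
  (Classical.epsilon_spec (isCuspidal_iteratedPrimitive hg l).exists_primitive).2 z hz

theorem eqOn_zero_of_iteratedPrimitive (hg : IsCuspidal g) {l : ℕ}
    (h : EqOn (iteratedPrimitive g l) 0 UH) : EqOn g 0 UH := by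
  induction l with
  | zero => exact h
  | succ l ih =>
    refine ih fun z hz => (hasDerivAt_iteratedPrimitive hg l hz).unique ?_
    exact (hasDerivAt_const z 0).congr_of_eventuallyEq
      (h.eventuallyEq_of_mem (isOpen_UH.mem_nhds hz))

theorem IsCuspidal.apply_add_int (hg : IsCuspidal g) {z : ℂ} (hz : z ∈ UH) (n : ℤ) :
    g (z + n) = g z := by
  induction n with
  | zero => simp
  | succ n ih =>
    rw [← ih, ← hg.apply_add_one _ (add_int_mem_UH hz n)]
    push_cast
    rw [add_assoc]
  | pred n ih =>
    rw [← ih, ← hg.apply_add_one _ (add_int_mem_UH hz _)]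
    push_cast
    ring_nf

end IteratedPrimitive

/-! ### Eichler integrals and period polynomials -/

section QuadPow

open Polynomial

variable {S S' : Type*} [CommRing S] [CommRing S'] (K : ℕ) (A B D : S)

/-- The `K`-th power of the quadratic polynomial `A X² + B X + D`. -/
def quadPow : S[X] := (C A * X ^ 2 + C B * X + C D) ^ K

theorem natDegree_quadPow_le : (quadPow K A B D).natDegree ≤ 2 * K :=
  (natDegree_pow_le_of_le K natDegree_quadratic_le).trans_eq (mul_comm K 2)

theorem eval_quadPow (x : S) : (quadPow K A B D).eval x = (A * x ^ 2 + B * x + D) ^ K := by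
  simp [quadPow]

theorem map_quadPow (φ : S →+* S') :
    (quadPow K A B D).map φ = quadPow K (φ A) (φ B) (φ D) := by
  simp [quadPow]

theorem quadPow_comp_X_add_C (x : S) : (quadPow K A B D).comp (X + C x) =
    quadPow K A (B + 2 * A * x) (D + B * x + A * x ^ 2) := by
  simp only [quadPow, pow_comp, add_comp, mul_comp, C_comp, X_comp, C_add, C_mul, C_pow,
    map_ofNat]
  ring

theorem quadPow_mul_left (t : S) :
    quadPow K (t * A) (t * B) (t * D) = C (t ^ K) * quadPow K A B D := by
  simp only [quadPow, C_mul, C_pow, ← mul_pow]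
  ring

theorem eval_quadPow_neg_inv {F : Type*} [Field F] (a b d : F) {x : F} (hx : x ≠ 0) :
    (quadPow K d (-b) a).eval x = x ^ (2 * K) * (quadPow K a b d).eval (-1 / x) := by
  rw [eval_quadPow, eval_quadPow, pow_mul, ← mul_pow]
  field_simp
  ring

theorem quadPow_eq_sum :
    quadPow K A B D = ∑ j ∈ Finset.range (2 * K + 1), (quadPow K A B D).coeff j • X ^ j := by
  simp only [smul_eq_C_mul]
  exact as_sum_range_C_mul_X_pow' _ (Nat.lt_succ_of_le (natDegree_quadPow_le K A B D))

theorem quadPow_neg_inv_eq_sum {F : Type*} [Field F] [Infinite F] (a b d : F) :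
    quadPow K d (-b) a = ∑ j ∈ Finset.range (2 * K + 1),
      (quadPow K a b d).coeff j • (-1 : F) ^ j • X ^ (2 * K - j) := by
  refine eq_of_infinite_eval_eq _ _ ((Set.finite_singleton (0 : F)).infinite_compl.mono ?_)
  intro x (hx : x ≠ 0)
  rw [mem_ofPred, eval_quadPow_neg_inv K a b d hx, quadPow_eq_sum K a b d, eval_finsetSum,
    eval_finsetSum, Finset.mul_sum, ← quadPow_eq_sum]
  refine Finset.sum_congr rfl fun j hj => ?_
  have hpow : x ^ (2 * K) = x ^ (2 * K - j) * x ^ j := by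
    rw [← pow_add, Nat.sub_add_cancel (Finset.mem_range_succ_iff.mp hj)]
  simp only [eval_smul, eval_pow, eval_X, smul_eq_mul, hpow, div_pow]
  field_simp

end QuadPow

section QuadPowPairing

open Polynomial

variable {S S' : Type*} [CommRing S] [Algebra ℝ S] [CommRing S'] [Algebra ℝ S']
  (ρ : ℕ → ℝ) (K : ℕ)

/-- The value at `(A X² + B X + D) ^ K` of the linear functional with `X ^ j ↦ ρ j`. The
coefficients live in an arbitrary `ℝ`-algebra, so that they may be indeterminates. -/
def quadPowPairing (A B D : S) : S :=
  ∑ j ∈ Finset.range (2 * K + 1), (quadPow K A B D).coeff j * algebraMap ℝ S (ρ j)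

theorem map_quadPowPairing (φ : S →ₐ[ℝ] S') (A B D : S) :
    φ (quadPowPairing ρ K A B D) = quadPowPairing ρ K (φ A) (φ B) (φ D) := by
  have hmap := map_quadPow K A B D (φ : S →+* S')
  simp only [RingHom.coe_coe] at hmap
  simp only [quadPowPairing, map_sum, map_mul, AlgHom.commutes, ← hmap, coeff_map, RingHom.coe_coe]

theorem quadPowPairing_mul_left (t A B D : S) :
    quadPowPairing ρ K (t * A) (t * B) (t * D) = t ^ K * quadPowPairing ρ K A B D := by
  simp only [quadPowPairing, quadPow_mul_left, coeff_C_mul, Finset.mul_sum, mul_assoc]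

end QuadPowPairing

section EichlerIntegral

open Polynomial

variable {g : ℂ → ℂ} {K : ℕ} {z : ℂ}

theorem ne_zero_of_mem_UH (hz : z ∈ UH) : z ≠ 0 := fun h => im_ne_zero_of_mem_UH hz (by simp [h])

theorem neg_inv_mem_UH (hz : z ∈ UH) : -1 / z ∈ UH := by
  rw [UH, mem_ofPred, div_eq_mul_inv, neg_one_mul, neg_im, inv_im, neg_div, neg_neg]
  exact div_pos hz (normSq_pos.mpr (ne_zero_of_mem_UH hz))

theorem I_mem_UH : I ∈ UH := by simp [UH]

theorem eq_of_hasDerivAt_zero {f : ℂ → ℂ} (hf : ∀ z ∈ UH, HasDerivAt f 0 z) {w : ℂ} (hz : z ∈ UH)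
    (hw : w ∈ UH) : f z = f w :=
  isOpen_UH.is_const_of_deriv_eq_zero (convex_halfSpace_im_gt 0).isPreconnected
    (fun x hx => (hf x hx).differentiableAt.differentiableWithinAt) (fun x hx => (hf x hx).deriv)
    hz hw

/-- The primitive of `R g` obtained by integrating by parts against the iterated primitives of
`g`, as a linear function of the polynomial `R` of degree at most `2K`. -/
def eichlerIntegral (g : ℂ → ℂ) (K : ℕ) (z : ℂ) : ℂ[X] →ₗ[ℂ] ℂ :=
  ∑ j ∈ Finset.range (2 * K + 1),
    ((-1) ^ j * iteratedPrimitive g (j + 1) z) • (leval z ∘ₗ derivative ^ j)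

theorem eichlerIntegral_apply (g : ℂ → ℂ) (K : ℕ) (R : ℂ[X]) (z : ℂ) : eichlerIntegral g K z R =
    ∑ j ∈ Finset.range (2 * K + 1),
      (-1) ^ j * (derivative^[j] R).eval z * iteratedPrimitive g (j + 1) z := by
  simp only [eichlerIntegral, LinearMap.sum_apply, LinearMap.smul_apply, LinearMap.comp_apply,
    leval_apply, Module.End.pow_apply, smul_eq_mul]
  exact Finset.sum_congr rfl fun j _ => by ring

theorem hasDerivAt_eichlerIntegral (hg : IsCuspidal g) {R : ℂ[X]} (hR : R.natDegree ≤ 2 * K)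
    (hz : z ∈ UH) : HasDerivAt (fun z => eichlerIntegral g K z R) (g z * R.eval z) z := by
  simp only [eichlerIntegral_apply]
  let boundary (j : ℕ) : ℂ := (-1) ^ j * (derivative^[j] R).eval z * iteratedPrimitive g j z
  have hterm : ∀ j ∈ Finset.range (2 * K + 1), HasDerivAt
      (fun z => (-1) ^ j * (derivative^[j] R).eval z * iteratedPrimitive g (j + 1) z)
      (boundary j - boundary (j + 1)) z := fun j _ => by
    refine ((((derivative^[j] R).hasDerivAt z).const_mul _).fun_mul
      (hasDerivAt_iteratedPrimitive hg j hz)).congr_deriv ?_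
    simp only [boundary, pow_succ, Function.iterate_succ_apply']
    ring
  refine (HasDerivAt.fun_sum hterm).congr_deriv ?_
  rw [Finset.sum_range_sub']
  simp only [boundary, iterate_derivative_eq_zero (Nat.lt_succ_of_le hR), iteratedPrimitive_zero,
    Function.iterate_zero_apply, eval_zero, pow_zero]
  ring

theorem iterate_derivative_comp_X_add_C {S : Type*} [CommRing S] (R : S[X]) (x : S) (j : ℕ) :
    derivative^[j] (R.comp (X + C x)) = (derivative^[j] R).comp (X + C x) := by
  induction j with
  | zero => rfl
  | succ j ih => rw [Function.iterate_succ_apply', ih, derivative_comp,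
      Function.iterate_succ_apply', derivative_X_add_C, one_mul]

theorem eichlerIntegral_add_int (hg : IsCuspidal g) (R : ℂ[X]) (n : ℤ) (hz : z ∈ UH) :
    eichlerIntegral g K (z + n) R = eichlerIntegral g K z (R.comp (X + C (n : ℂ))) := by
  simp only [eichlerIntegral_apply, iterate_derivative_comp_X_add_C, eval_comp, eval_add, eval_X,
    eval_C, (isCuspidal_iteratedPrimitive hg _).apply_add_int hz]

theorem hasDerivAt_neg_inv (hz : z ≠ 0) : HasDerivAt (fun w : ℂ => -1 / w) (1 / z ^ 2) z := by
  have h := (hasDerivAt_inv hz).const_mul (-1)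
  simpa only [← div_eq_mul_inv, neg_one_mul, neg_neg, one_div] using h

theorem eichlerIntegral_neg_inv_sub (hg : IsCuspidal g)
    (hS : ∀ z ∈ UH, g (-1 / z) = z ^ (2 * (K + 1)) * g z) {R R' : ℂ[X]}
    (hR : R.natDegree ≤ 2 * K) (hR' : R'.natDegree ≤ 2 * K)
    (h : ∀ z ∈ UH, R'.eval z = z ^ (2 * K) * R.eval (-1 / z)) (hz : z ∈ UH) :
    eichlerIntegral g K (-1 / z) R - eichlerIntegral g K z R' =
      eichlerIntegral g K I R - eichlerIntegral g K I R' := by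
  have hderiv : ∀ w ∈ UH, HasDerivAt
      (fun w => eichlerIntegral g K (-1 / w) R - eichlerIntegral g K w R') 0 w := fun w hw => by
    have hw0 := ne_zero_of_mem_UH hw
    refine (((hasDerivAt_eichlerIntegral hg hR (neg_inv_mem_UH hw)).comp w
      (hasDerivAt_neg_inv hw0)).sub (hasDerivAt_eichlerIntegral hg hR' hw)).congr_deriv ?_
    rw [h w hw, hS w hw]
    field_simp
    ring
  have hI : -1 / I = I := by simp [neg_div]
  simpa only [hI] using eq_of_hasDerivAt_zero hderiv hz I_mem_UH

/-- The real part of the `j`-th coefficient of the period polynomial of `g` for `z ↦ -1/z`. -/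
def periodCoeff (g : ℂ → ℂ) (K j : ℕ) : ℝ :=
  (I ^ K * (eichlerIntegral g K I (X ^ j) -
    (-1) ^ j * eichlerIntegral g K I (X ^ (2 * K - j)))).re

/-- The real part of the Eichler integral of `(A z² + B z + D) ^ K g(z)`, normalised by `I ^ K`. -/
def reEichlerIntegral (g : ℂ → ℂ) (K : ℕ) (A B D : ℝ) (z : ℂ) : ℝ :=
  (I ^ K * eichlerIntegral g K z (quadPow K (A : ℂ) B D)).re

theorem reEichlerIntegral_add_int (hg : IsCuspidal g) (A B D : ℝ) (n : ℤ) (hz : z ∈ UH) :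
    reEichlerIntegral g K A B D (z + n) =
      reEichlerIntegral g K A (B + 2 * A * n) (D + B * n + A * n ^ 2) z := by
  rw [reEichlerIntegral, eichlerIntegral_add_int hg _ n hz, quadPow_comp_X_add_C,
    reEichlerIntegral]
  push_cast
  rfl

theorem re_eichlerIntegral_I_sub (g : ℂ → ℂ) (K : ℕ) (A B D : ℝ) :
    (I ^ K * (eichlerIntegral g K I (quadPow K (A : ℂ) B D) -
      eichlerIntegral g K I (quadPow K (D : ℂ) (-B) A))).re =
    quadPowPairing (periodCoeff g K) K A B D := by
  have hcoeff (j : ℕ) : (quadPow K (A : ℂ) B D).coeff j = ((quadPow K A B D).coeff j : ℝ) := by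
    have hmap := map_quadPow K A B D ofRealHom
    simp only [ofRealHom_eq_coe] at hmap
    rw [← hmap, coeff_map, ofRealHom_eq_coe]
  rw [quadPow_neg_inv_eq_sum, quadPow_eq_sum K (A : ℂ) B D, map_sum, map_sum, ← quadPow_eq_sum,
    ← Finset.sum_sub_distrib, Finset.mul_sum, re_sum]
  refine Finset.sum_congr rfl fun j _ => ?_
  rw [map_smul, map_smul, map_smul, ← smul_sub, hcoeff, smul_eq_mul, smul_eq_mul, mul_left_comm,
    re_ofReal_mul]
  rfl

theorem reEichlerIntegral_neg_inv (hg : IsCuspidal g)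
    (hS : ∀ z ∈ UH, g (-1 / z) = z ^ (2 * (K + 1)) * g z) (A B D : ℝ) (hz : z ∈ UH) :
    reEichlerIntegral g K A B D (-1 / z) =
      reEichlerIntegral g K D (-B) A z + quadPowPairing (periodCoeff g K) K A B D := by
  have hinv := eichlerIntegral_neg_inv_sub hg hS (natDegree_quadPow_le K (A : ℂ) B D)
    (natDegree_quadPow_le K (D : ℂ) (-B) A)
    (fun w hw => eval_quadPow_neg_inv K _ _ _ (ne_zero_of_mem_UH hw)) hz
  rw [← re_eichlerIntegral_I_sub, ← hinv, reEichlerIntegral, reEichlerIntegral, ofReal_neg,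
    ← add_re, ← mul_add, add_sub_cancel]

end EichlerIntegral

/-! ### Primitive hyperbolic words in the generators -/

section PrimitiveHyperbolic

open Polynomial.Chebyshev (S S_add_two)
open ModularGroup (T)

theorem pow_succ_eq_eval_chebyshevS {R : Type*} [CommRing R] {M : Matrix (Fin 2) (Fin 2) R}
    (hM : M.det = 1) (n : ℕ) :
    M ^ (n + 1) = (S R n).eval M.trace • M - (S R (n - 1)).eval M.trace • 1 := by
  have hsq : M * M = M.trace • M - 1 := by
    rw [Matrix.det_fin_two] at hM
    ext i j
    fin_cases i <;> fin_cases j <;>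
      simp [Matrix.mul_apply, Fin.sum_univ_two, Matrix.trace_fin_two, ← hM] <;> ring
  induction n with
  | zero => simp
  | succ n ih =>
    have hrec := S_add_two R (n - 1)
    rw [sub_add_cancel, show (n - 1 + 2 : ℤ) = n + 1 by ring] at hrec
    rw [pow_succ, ih, sub_mul, smul_mul_assoc, smul_mul_assoc, one_mul, hsq]
    push_cast
    rw [hrec, add_sub_cancel_right, Polynomial.eval_sub, Polynomial.eval_mul, Polynomial.eval_X]
    module

theorem abs_eval_chebyshevS_lt {t : ℤ} (ht : 2 ≤ |t|) (n : ℕ) :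
    |(S ℤ (n - 1)).eval t| < |(S ℤ n).eval t| := by
  induction n with
  | zero => simp
  | succ n ih =>
    have hrec := S_add_two ℤ (n - 1)
    rw [sub_add_cancel, show (n - 1 + 2 : ℤ) = n + 1 by ring] at hrec
    push_cast
    rw [add_sub_cancel_right, hrec, Polynomial.eval_sub, Polynomial.eval_mul, Polynomial.eval_X]
    have htri := abs_sub_abs_le_abs_sub (t * (S ℤ n).eval t) ((S ℤ (n - 1)).eval t)
    rw [abs_mul] at htri
    nlinarith [abs_nonneg ((S ℤ n).eval t)]

theorem isPrimitive_of_isCoprime {γ : SL2Z} (hγ : IsHyperbolic γ)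
    (hcop : IsCoprime (γ.1 1 0) (γ.1 0 1)) : IsPrimitive γ := by
  rintro ⟨δ, m, hm, rfl⟩
  obtain ⟨n, rfl⟩ := Nat.exists_eq_add_of_le' hm
  set t := δ.1.trace with ht
  set u := (S ℤ (n + 1 : ℕ)).eval t
  set v := (S ℤ ((n + 1 : ℕ) - 1)).eval t
  have hpow : (δ ^ (n + 2)).1 = u • δ.1 - v • 1 := pow_succ_eq_eval_chebyshevS δ.2 (n + 1)
  have hdisc : ((δ ^ (n + 2)).1 0 0 + (δ ^ (n + 2)).1 1 1) ^ 2 - 4 = u ^ 2 * (t ^ 2 - 4) := by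
    have h₁ := SL2Z_det (δ ^ (n + 2))
    have h₂ := SL2Z_det δ
    rw [ht, Matrix.trace_fin_two]
    simp only [hpow, Matrix.sub_apply, Matrix.smul_apply, Matrix.one_apply, smul_eq_mul] at h₁ ⊢
    norm_num at h₁ ⊢
    linear_combination 4 * h₁ - 4 * u ^ 2 * h₂
  have ht2 : 2 ≤ |t| := by
    have hpos : 0 < u ^ 2 * (t ^ 2 - 4) := by
      rw [← hdisc, sub_pos, ← sq_abs]
      exact lt_of_eq_of_lt (by norm_num) (pow_lt_pow_left₀ hγ zero_le_two two_ne_zero)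
    have := pos_of_mul_pos_right hpos (sq_nonneg u)
    refine le_of_sq_le_sq ?_ (abs_nonneg t)
    rw [sq_abs]
    linarith
  have hunit : IsUnit u := by
    simp only [hpow, Matrix.sub_apply, Matrix.smul_apply, Matrix.one_apply, smul_eq_mul] at hcop
    norm_num at hcop
    exact isCoprime_self.mp hcop.of_mul_left_left.of_mul_right_left
  have h₁ := abs_eval_chebyshevS_lt ht2 (n + 1)
  have h₂ := abs_eval_chebyshevS_lt ht2 n
  rw [Int.isUnit_iff_abs_eq.mp hunit] at h₁
  push_cast at h₁
  rw [add_sub_cancel_right] at h₁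
  linarith [abs_nonneg ((S ℤ (n - 1)).eval t)]

/-- The word `S Tᵃ S Tᵇ S Tᶜ` in the standard generators of `SL₂(ℤ)`. -/
def wordMatrix (a b c : ℤ) : SL2Z :=
  ModularGroup.S * T ^ a * (ModularGroup.S * T ^ b) * (ModularGroup.S * T ^ c)

theorem coe_wordMatrix (a b c : ℤ) :
    (wordMatrix a b c).1 = !![-b, 1 - b * c; a * b - 1, a * b * c - a - c] := by
  have h : (wordMatrix a b c).1 = ModularGroup.S.1 * (T ^ a).1 * (ModularGroup.S.1 * (T ^ b).1) *
      (ModularGroup.S.1 * (T ^ c).1) := rfl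
  rw [h, ModularGroup.coe_T_zpow, ModularGroup.coe_T_zpow, ModularGroup.coe_T_zpow,
    ModularGroup.coe_S]
  ext i j
  fin_cases i <;> fin_cases j <;> simp [Matrix.mul_apply, Fin.sum_univ_two] <;> ring

theorem isHyperbolic_wordMatrix {a b c : ℤ} (ha : 3 ≤ a) (hb : 3 ≤ b) (hc : 3 ≤ c) :
    IsHyperbolic (wordMatrix a b c) := by
  have htrace : (wordMatrix a b c).1 0 0 + (wordMatrix a b c).1 1 1 = a * b * c - a - b - c := by
    simp [coe_wordMatrix]
    ring
  rw [IsHyperbolic, htrace]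
  refine lt_of_lt_of_le ?_ (le_abs_self _)
  nlinarith [mul_nonneg (sub_nonneg.mpr ha) (sub_nonneg.mpr hb), mul_nonneg (mul_nonneg
    (sub_nonneg.mpr ha) (sub_nonneg.mpr hb)) (sub_nonneg.mpr hc), mul_nonneg (sub_nonneg.mpr ha)
    (sub_nonneg.mpr hc), mul_nonneg (sub_nonneg.mpr hb) (sub_nonneg.mpr hc)]

theorem isPrimitive_wordMatrix {a b c s : ℤ} (ha : 3 ≤ a) (hb : 3 ≤ b) (hc : 3 ≤ c)
    (h : c = a + 1 + (a * b - 1) * s) : IsPrimitive (wordMatrix a b c) := by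
  refine isPrimitive_of_isCoprime (isHyperbolic_wordMatrix ha hb hc)
    ⟨-a * (1 + b * s) - 1, -a, ?_⟩
  simp only [coe_wordMatrix, Matrix.of_apply, Matrix.cons_val', Matrix.cons_val_zero,
    Matrix.cons_val_one, Matrix.cons_val_fin_one, h]
  ring

theorem moeb_S (z : ℂ) : moeb ModularGroup.S z = -1 / z := by simp [moeb, ModularGroup.S]

theorem autFactor_S (z : ℂ) : autFactor ModularGroup.S z = z := by
  simp [autFactor, ModularGroup.S]

theorem moeb_wordMatrix {z : ℂ} (hz : z ∈ UH) (a b c : ℤ) :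
    moeb (wordMatrix a b c) z = -1 / (-1 / (-1 / (z + c) + b) + a) := by
  have hST {w : ℂ} (hw : w ∈ UH) (n : ℤ) :
      moeb (ModularGroup.S * T ^ n) w = -1 / (w + n) := by
    rw [moeb_mul hw, moeb_T_zpow, moeb_S]
  have hmem {w : ℂ} (hw : w ∈ UH) (n : ℤ) : -1 / (w + n) ∈ UH :=
    neg_inv_mem_UH (add_int_mem_UH hw n)
  rw [wordMatrix, moeb_mul hz, hST hz, moeb_mul (hmem hz c), hST (hmem hz c),
    hST (hmem (hmem hz c) b)]

end PrimitiveHyperbolic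

/-! ### The period polynomial of a form with vanishing real periods -/

section WordPairing

open Polynomial

variable {S S' : Type*} [CommRing S] [Algebra ℝ S] [CommRing S'] [Algebra ℝ S']

/-- The value of the period functional on `S Tᵃ S Tᵇ S Tᶜ`, divided by `c ^ K` and expressed
through `t = 1 / c`, so that `t = 0` is the limit as `c → ∞`. -/
def wordPairing (ρ : ℕ → ℝ) (K : ℕ) (a b t : S) : S :=
  quadPowPairing ρ K (t * (a * b - 1)) (a * b - 1 + t * (b - a)) (b - t) +
    quadPowPairing ρ K (b - t) (a * b + 1 - t * (a + b)) (a - t) +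
    quadPowPairing ρ K (a - t) (a * b - 1 + t * (a - b)) (t * (a * b - 1))

theorem map_wordPairing (ρ : ℕ → ℝ) (K : ℕ) (φ : S →ₐ[ℝ] S') (a b t : S) :
    φ (wordPairing ρ K a b t) = wordPairing ρ K (φ a) (φ b) (φ t) := by
  simp only [wordPairing, map_add, map_quadPowPairing, map_sub, map_mul, map_one]

theorem eval_wordPairing (ρ : ℕ → ℝ) (K : ℕ) (a b t : ℝ[X]) (x : ℝ) :
    (wordPairing ρ K a b t).eval x = wordPairing ρ K (a.eval x) (b.eval x) (t.eval x) := by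
  simp only [← coe_aeval_eq_eval, map_wordPairing]

theorem eval_eq_zero_of_injective {F : Type*} [Field F] {P : F[X]} {u : ℕ → F}
    (hu : Function.Injective u) (h : ∀ n, P.eval (u n) = 0) (x : F) : P.eval x = 0 := by
  rw [eq_zero_of_infinite_isRoot P ((infinite_range_of_injective hu).mono
    (range_subset_iff.mpr h)), eval_zero]

end WordPairing

namespace IsPeriodFreeCuspForm

variable {K : ℕ} {g : ℂ → ℂ}

theorem isCuspidal (hg : IsPeriodFreeCuspForm K g) : IsCuspidal g where
  differentiableAt := hg.differentiableAt
  apply_add_one z hz := by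
    have h := hg.apply_moeb (ModularGroup.T ^ (1 : ℤ)) z hz
    rwa [moeb_T_zpow, autFactor_T_zpow, one_pow, one_mul, Int.cast_one] at h
  tendsto_cusp := hg.tendsto_cusp

theorem apply_neg_inv (hg : IsPeriodFreeCuspForm K g) {z : ℂ} (hz : z ∈ UH) :
    g (-1 / z) = z ^ (2 * (K + 1)) * g z := by
  rw [← moeb_S, hg.apply_moeb _ z hz, autFactor_S]

theorem sum_quadPowPairing_eq_zero (hg : IsPeriodFreeCuspForm K g) {a b c s : ℤ}
    (ha : 3 ≤ a) (hb : 3 ≤ b) (hc : 3 ≤ c) (h : c = a + 1 + (a * b - 1) * s) :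
    quadPowPairing (periodCoeff g K) K ((a : ℝ) * b - 1) (a * b * c - a - c + b) (b * c - 1) +
    quadPowPairing (periodCoeff g K) K ((b : ℝ) * c - 1) (a * b * c - b - a + c) (c * a - 1) +
    quadPowPairing (periodCoeff g K) K ((c : ℝ) * a - 1) (a * b * c - c - b + a) (a * b - 1) =
      0 := by
  obtain ⟨z, hz, hperiod⟩ := hg.exists_period_eq_zero _ (isHyperbolic_wordMatrix ha hb hc)
    (isPrimitive_wordMatrix ha hb hc h)
    (fun z => eichlerIntegral g K z (quadPow K (((a : ℝ) * b - 1 : ℝ) : ℂ)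
      ((a * b * c - a - c + b : ℝ) : ℂ) ((b * c - 1 : ℝ) : ℂ))) fun z hz => by
    refine (hasDerivAt_eichlerIntegral hg.isCuspidal
      (natDegree_quadPow_le K _ _ _) hz).congr_deriv ?_
    simp only [eval_quadPow, Qpoly, coe_wordMatrix, Matrix.of_apply, Matrix.cons_val',
      Matrix.cons_val_zero, Matrix.cons_val_one, Matrix.cons_val_fin_one]
    push_cast
    ring
  have hmem₁ := add_int_mem_UH hz c
  have hmem₂ := add_int_mem_UH (neg_inv_mem_UH hmem₁) b
  have hmem₃ := add_int_mem_UH (neg_inv_mem_UH hmem₂) a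
  have hinv (A B D : ℝ) {w : ℂ} (hw : w ∈ UH) :=
    reEichlerIntegral_neg_inv hg.isCuspidal (fun _ => hg.apply_neg_inv) A B D hw
  have hadd (A B D : ℝ) (n : ℤ) {w : ℂ} (hw : w ∈ UH) :=
    reEichlerIntegral_add_int (K := K) hg.isCuspidal A B D n hw
  rw [moeb_wordMatrix hz, mul_sub, sub_re] at hperiod
  change reEichlerIntegral g K _ _ _ _ - reEichlerIntegral g K _ _ _ _ = 0 at hperiod
  rw [hinv _ _ _ hmem₃, hadd _ _ _ _ (neg_inv_mem_UH hmem₂), hinv _ _ _ hmem₂,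
    hadd _ _ _ _ (neg_inv_mem_UH hmem₁), hinv _ _ _ hmem₁, hadd _ _ _ _ hz] at hperiod
  ring_nf at hperiod ⊢
  linarith

theorem wordPairing_one_div_eq_zero (hg : IsPeriodFreeCuspForm K g) {a b c s : ℤ}
    (ha : 3 ≤ a) (hb : 3 ≤ b) (hc : 3 ≤ c) (h : c = a + 1 + (a * b - 1) * s) :
    wordPairing (periodCoeff g K) K (a : ℝ) b (1 / c) = 0 := by
  have hc0 : (c : ℝ) ≠ 0 := by
    norm_cast
    lia
  rw [← mul_eq_zero_iff_left (pow_ne_zero K hc0), wordPairing, mul_add, mul_add,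
    ← quadPowPairing_mul_left, ← quadPowPairing_mul_left, ← quadPowPairing_mul_left]
  rw [← hg.sum_quadPowPairing_eq_zero ha hb hc h]
  congr 2 <;> congr 1 <;> field_simp <;> ring

theorem wordPairing_intCast_eq_zero (hg : IsPeriodFreeCuspForm K g) {a b : ℤ}
    (ha : 3 ≤ a) (hb : 3 ≤ b) (t : ℝ) : wordPairing (periodCoeff g K) K (a : ℝ) b t = 0 := by
  have hab : 0 < a * b - 1 := by nlinarith
  let c (n : ℕ) : ℤ := a + 1 + (a * b - 1) * n
  have hc (n : ℕ) : 3 ≤ c n := by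
    have : 0 ≤ (a * b - 1) * (n : ℤ) := mul_nonneg hab.le (Int.natCast_nonneg n)
    lia
  have hinj : Function.Injective fun n => 1 / (c n : ℝ) := fun m n hmn => by
    have hab0 : (a : ℝ) * b - 1 ≠ 0 := by exact_mod_cast hab.ne'
    simpa [c, hab0] using hmn
  have heval := eval_eq_zero_of_injective
    (P := wordPairing (periodCoeff g K) K (Polynomial.C (a : ℝ)) (Polynomial.C (b : ℝ))
      Polynomial.X) hinj (fun n => by
        rw [eval_wordPairing, Polynomial.eval_C, Polynomial.eval_C, Polynomial.eval_X]
        exact hg.wordPairing_one_div_eq_zero ha hb (hc n) rfl) t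
  rwa [eval_wordPairing, Polynomial.eval_C, Polynomial.eval_C, Polynomial.eval_X] at heval

theorem wordPairing_eq_zero (hg : IsPeriodFreeCuspForm K g) (a b t : ℝ) :
    wordPairing (periodCoeff g K) K a b t = 0 := by
  have hinj : Function.Injective fun n : ℕ => (((n : ℤ) + 3 : ℤ) : ℝ) := fun m n hmn => by
    simpa using hmn
  have hb (m : ℕ) : wordPairing (periodCoeff g K) K (((m : ℤ) + 3 : ℤ) : ℝ) b t = 0 := by
    have heval := eval_eq_zero_of_injective (P := wordPairing (periodCoeff g K) K
      (Polynomial.C (((m : ℤ) + 3 : ℤ) : ℝ)) Polynomial.X (Polynomial.C t)) hinj (fun n => by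
        rw [eval_wordPairing, Polynomial.eval_C, Polynomial.eval_C, Polynomial.eval_X]
        exact hg.wordPairing_intCast_eq_zero (by lia) (by lia) t) b
    rwa [eval_wordPairing, Polynomial.eval_C, Polynomial.eval_C, Polynomial.eval_X] at heval
  have heval := eval_eq_zero_of_injective (P := wordPairing (periodCoeff g K) K Polynomial.X
    (Polynomial.C b) (Polynomial.C t)) hinj (fun n => by
      rw [eval_wordPairing, Polynomial.eval_C, Polynomial.eval_C, Polynomial.eval_X]
      exact hb n) a
  rwa [eval_wordPairing, Polynomial.eval_C, Polynomial.eval_C, Polynomial.eval_X] at heval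

end IsPeriodFreeCuspForm

section PeriodPolynomial

open Polynomial

variable {ρ : ℕ → ℝ} {K : ℕ}

theorem quadPowPairing_constant (ρ : ℕ → ℝ) (K : ℕ) (d : ℝ) :
    quadPowPairing ρ K 0 0 d = d ^ K * ρ 0 := by
  have h : quadPow K 0 0 d = C (d ^ K) := by simp [quadPow]
  simp [quadPowPairing, h, -map_pow, coeff_C]

theorem quadPowPairing_leading (ρ : ℕ → ℝ) (K : ℕ) (a : ℝ) :
    quadPowPairing ρ K a 0 0 = a ^ K * ρ (2 * K) := by
  have h : quadPow K a 0 0 = C (a ^ K) * X ^ (2 * K) := by simp [quadPow, mul_pow, pow_mul]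
  simp [quadPowPairing, h, -map_pow, coeff_X_pow]

theorem quadPowPairing_square (ρ : ℕ → ℝ) (K : ℕ) (b : ℝ) :
    quadPowPairing ρ K (b ^ 2) (2 * b) 1 =
      ∑ j ∈ Finset.range (2 * K + 1), ((2 * K).choose j : ℝ) * ρ j * b ^ j := by
  have h : quadPow K (b ^ 2) (2 * b) 1 = ((X + 1) ^ (2 * K)).comp (C b * X) := by
    rw [quadPow, pow_mul, pow_comp, pow_comp, add_comp, X_comp, one_comp, C_mul, C_pow, map_ofNat,
      C_1]
    ring
  refine Finset.sum_congr rfl fun j _ => ?_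
  rw [h, comp_C_mul_X_coeff, coeff_X_add_one_pow, Algebra.algebraMap_self_apply]
  ring

theorem choose_mul_add_eq_zero (hρ : ∀ a b : ℝ, wordPairing ρ K a b 0 = 0) {j : ℕ}
    (hj : j ≤ 2 * K) :
    ((2 * K).choose j : ℝ) * ρ j + (if j = 2 * K then ρ 0 else 0) +
      (if j = 0 then ρ (2 * K) else 0) = 0 := by
  let P : ℝ[X] := ∑ j ∈ Finset.range (2 * K + 1), C ((2 * K).choose j * ρ j) * X ^ j +
    C (ρ 0) * X ^ (2 * K) + C (ρ (2 * K))
  have hroot (b : ℝ) (hb : b ≠ 0) : P.eval b = 0 := by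
    have h := hρ (1 / b) b
    rw [wordPairing, one_div_mul_cancel hb, sub_self, zero_mul, zero_mul, zero_mul, zero_mul,
      sub_zero, sub_zero, sub_zero, add_zero, quadPowPairing_constant, quadPowPairing_leading] at h
    have hmul := quadPowPairing_mul_left ρ K b b (1 + 1) (1 / b)
    rw [show b * (1 + 1) = 2 * b by ring, mul_one_div_cancel hb, ← sq, quadPowPairing_square]
      at hmul
    have hpow : b ^ K * (1 / b) ^ K = 1 := by rw [← mul_pow, mul_one_div_cancel hb, one_pow]
    simp only [P, eval_add, eval_finsetSum, eval_mul, eval_C, eval_pow, eval_X, hmul]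
    linear_combination b ^ K * h - ρ (2 * K) * hpow
  have hP : P = 0 := eq_zero_of_infinite_isRoot P
    ((Set.finite_singleton (0 : ℝ)).infinite_compl.mono hroot)
  have hcoeff : P.coeff j = 0 := by rw [hP, coeff_zero]
  simpa [P, -map_mul, coeff_X_pow, coeff_C, Nat.lt_succ_of_le hj] using hcoeff

theorem quadPowPairing_eq (hK : 1 ≤ K) (hρ : ∀ a b : ℝ, wordPairing ρ K a b 0 = 0) (A B D : ℝ) :
    quadPowPairing ρ K A B D = ρ 0 * (D ^ K - A ^ K) := by
  have hmiddle (j : ℕ) (hj : j ∈ Finset.range (2 * K)) (hj0 : j ≠ 0) : ρ j = 0 := by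
    rw [Finset.mem_range] at hj
    have h := choose_mul_add_eq_zero hρ hj.le
    rw [if_neg hj.ne, if_neg hj0, add_zero, add_zero] at h
    exact (mul_eq_zero.mp h).resolve_left (Nat.cast_ne_zero.mpr (Nat.choose_pos hj.le).ne')
  have hlast : ρ (2 * K) = -ρ 0 := by
    have h := choose_mul_add_eq_zero hρ (Nat.zero_le (2 * K))
    rw [if_neg (by lia), if_pos rfl, Nat.choose_zero_right, Nat.cast_one, one_mul, add_zero] at h
    linarith
  have hcoeff_zero : (quadPow K A B D).coeff 0 = D ^ K := by
    simp [coeff_zero_eq_eval_zero, eval_quadPow]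
  have hcoeff_last : (quadPow K A B D).coeff (2 * K) = A ^ K := by
    rw [quadPow, mul_comm 2 K, coeff_pow_of_natDegree_le natDegree_quadratic_le]
    simp
  rw [quadPowPairing, Finset.sum_range_succ, Finset.sum_eq_single_of_mem 0
    (Finset.mem_range.mpr (by lia)) fun j hj hj0 => by rw [hmiddle j hj hj0, map_zero, mul_zero],
    hcoeff_zero, hcoeff_last, hlast, Algebra.algebraMap_self_apply, Algebra.algebraMap_self_apply]
  ring

end PeriodPolynomial

/-! ### The maximum principle for Laplace eigenfunctions -/

section HasSecondDerivAt

open Filter Topology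

/-- `f : ℝ → ℂ` is differentiable near `x`, its derivative takes the value `f₁` at `x` and is
itself differentiable at `x` with derivative `f₂`. -/
def HasSecondDerivAt (f : ℝ → ℂ) (f₁ f₂ : ℂ) (x : ℝ) : Prop :=
  ∃ f' : ℝ → ℂ, (∀ᶠ t in 𝓝 x, HasDerivAt f (f' t) t) ∧ HasDerivAt f' f₂ x ∧ f' x = f₁

variable {f g : ℝ → ℂ} {f₁ f₂ g₁ g₂ c : ℂ} {x : ℝ}

namespace HasSecondDerivAt

theorem const (c : ℂ) (x : ℝ) : HasSecondDerivAt (fun _ => c) 0 0 x :=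
  ⟨fun _ => 0, Eventually.of_forall fun t => hasDerivAt_const t c, hasDerivAt_const x 0, rfl⟩

theorem add (hf : HasSecondDerivAt f f₁ f₂ x) (hg : HasSecondDerivAt g g₁ g₂ x) :
    HasSecondDerivAt (fun t => f t + g t) (f₁ + g₁) (f₂ + g₂) x := by
  obtain ⟨f', hf', hf₂, rfl⟩ := hf
  obtain ⟨g', hg', hg₂, rfl⟩ := hg
  exact ⟨fun t => f' t + g' t, by filter_upwards [hf', hg'] with t h h' using h.fun_add h',
    hf₂.fun_add hg₂, rfl⟩

theorem mul (hf : HasSecondDerivAt f f₁ f₂ x) (hg : HasSecondDerivAt g g₁ g₂ x) :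
    HasSecondDerivAt (fun t => f t * g t) (f₁ * g x + f x * g₁)
      (f₂ * g x + 2 * (f₁ * g₁) + f x * g₂) x := by
  obtain ⟨f', hf', hf₂, rfl⟩ := hf
  obtain ⟨g', hg', hg₂, rfl⟩ := hg
  refine ⟨fun t => f' t * g t + f t * g' t,
    by filter_upwards [hf', hg'] with t h h' using h.fun_mul h', ?_, rfl⟩
  exact ((hf₂.fun_mul hg'.self_of_nhds).fun_add (hf'.self_of_nhds.fun_mul hg₂)).congr_deriv
    (by ring)

theorem const_mul (hf : HasSecondDerivAt f f₁ f₂ x) (c : ℂ) :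
    HasSecondDerivAt (fun t => c * f t) (c * f₁) (c * f₂) x := by
  obtain ⟨f', hf', hf₂, rfl⟩ := hf
  exact ⟨fun t => c * f' t, hf'.mono fun t h => h.const_mul c, hf₂.const_mul c, rfl⟩

theorem re_nonpos_of_isLocalMax (hf : HasSecondDerivAt f f₁ f₂ x)
    (hmax : IsLocalMax (fun t => (f t).re) x) : f₂.re ≤ 0 := by
  obtain ⟨f', hf', hf₂, -⟩ := hf
  have hre {f : ℝ → ℂ} {c : ℂ} {t : ℝ} (h : HasDerivAt f c t) :
      HasDerivAt (fun t => (f t).re) c.re t := reCLM.hasFDerivAt.comp_hasDerivAt t h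
  have hderiv : deriv (fun t => (f t).re) =ᶠ[𝓝 x] fun t => (f' t).re :=
    hf'.mono fun t ht => (hre ht).deriv
  have hderiv₂ : deriv (deriv fun t => (f t).re) x = f₂.re :=
    hderiv.deriv_eq.trans (hre hf₂).deriv
  by_contra! hpos
  have hmin := isLocalMin_of_deriv_deriv_pos (hderiv₂.symm ▸ hpos) hmax.deriv_eq_zero
    (hre hf'.self_of_nhds).continuousAt
  have hconst : (fun t => (f t).re) =ᶠ[𝓝 x] fun _ => (f x).re := by
    filter_upwards [hmax, hmin] with t h h' using le_antisymm h h'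
  rw [hconst.deriv.deriv_eq, deriv_const', deriv_const] at hderiv₂
  exact hpos.ne hderiv₂

end HasSecondDerivAt

end HasSecondDerivAt

section HasLaplacianAt

open Filter Topology

/-- `u : ℂ → ℂ` has second derivatives at `z` in the real and the imaginary direction, and their
sum, the Laplacian of `u` at `z`, is `c`. -/
def HasLaplacianAt (u : ℂ → ℂ) (c z : ℂ) : Prop :=
  ∃ u₁ u₂ v₁ v₂, HasSecondDerivAt (fun t : ℝ => u (z + t)) u₁ u₂ 0 ∧
    HasSecondDerivAt (fun t : ℝ => u (z + t * I)) v₁ v₂ 0 ∧ u₂ + v₂ = c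

variable {u v : ℂ → ℂ} {c d z : ℂ}

namespace HasLaplacianAt

theorem add (hu : HasLaplacianAt u c z) (hv : HasLaplacianAt v d z) :
    HasLaplacianAt (fun w => u w + v w) (c + d) z := by
  obtain ⟨_, _, _, _, hx, hy, rfl⟩ := hu
  obtain ⟨_, _, _, _, hx', hy', rfl⟩ := hv
  exact ⟨_, _, _, _, hx.add hx', hy.add hy', by ring⟩

theorem const_mul (hu : HasLaplacianAt u c z) (a : ℂ) :
    HasLaplacianAt (fun w => a * u w) (a * c) z := by
  obtain ⟨_, _, _, _, hx, hy, rfl⟩ := hu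
  exact ⟨_, _, _, _, hx.const_mul a, hy.const_mul a, by ring⟩

theorem sum {ι : Type*} (s : Finset ι) {u : ι → ℂ → ℂ} {c : ι → ℂ}
    (hu : ∀ i ∈ s, HasLaplacianAt (u i) (c i) z) :
    HasLaplacianAt (fun w => ∑ i ∈ s, u i w) (∑ i ∈ s, c i) z := by
  classical
  induction s using Finset.induction_on with
  | empty =>
    simp only [Finset.sum_empty]
    exact ⟨0, 0, 0, 0, .const 0 0, .const 0 0, add_zero 0⟩
  | insert i s hi ih =>
    simp only [Finset.sum_insert hi]
    exact (hu i (Finset.mem_insert_self i s)).add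
      (ih fun j hj => hu j (Finset.mem_insert_of_mem hj))

theorem re_nonpos_of_isLocalMax (hu : HasLaplacianAt u c z)
    (hmax : IsLocalMax (fun w => (u w).re) z) : c.re ≤ 0 := by
  obtain ⟨_, _, _, _, hx, hy, rfl⟩ := hu
  have hline (a : ℂ) : IsLocalMax (fun t : ℝ => (u (z + t * a)).re) 0 := by
    have ht : Tendsto (fun t : ℝ => z + t * a) (𝓝 0) (𝓝 z) :=
      Continuous.tendsto' (by fun_prop) _ _ (by simp)
    filter_upwards [ht.eventually hmax] with t h
    simpa using h
  rw [add_re]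
  exact add_nonpos (hx.re_nonpos_of_isLocalMax (by simpa using hline 1))
    (hy.re_nonpos_of_isLocalMax (hline I))

end HasLaplacianAt

theorem hasSecondDerivAt_comp_add_mul {h h' : ℂ → ℂ} {h₂ z : ℂ} (a : ℂ)
    (hh : ∀ᶠ w in 𝓝 z, HasDerivAt h (h' w) w) (hh' : HasDerivAt h' h₂ z) :
    HasSecondDerivAt (fun t : ℝ => h (z + t * a)) (a * h' z) (a * (a * h₂)) 0 := by
  have hline (t : ℝ) : HasDerivAt (fun t : ℝ => z + t * a) a t := by
    simpa using (ofRealCLM.hasDerivAt.mul_const a).const_add z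
  have hlim : Tendsto (fun t : ℝ => z + t * a) (𝓝 0) (𝓝 z) :=
    Continuous.tendsto' (by fun_prop) _ _ (by simp)
  refine ⟨fun t => a * h' (z + t * a), ?_, ?_, by simp⟩
  · filter_upwards [hlim.eventually hh] with t ht using ht.scomp t (hline t)
  · have hh'₀ : HasDerivAt h' h₂ (z + (0 : ℝ) * a) := by simpa using hh'
    exact (hh'₀.scomp (0 : ℝ) (hline 0)).const_mul a

theorem hasDerivAt_inv_ofReal_pow (i : ℕ) {y : ℝ} (hy : y ≠ 0) :
    HasDerivAt (fun t : ℝ => (t : ℂ)⁻¹ ^ i) (-i * (y : ℂ)⁻¹ ^ (i + 1)) y := by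
  have h := (((hasDerivAt_id y).ofReal_comp).inv (ofReal_ne_zero.mpr hy)).fun_pow i
  refine h.congr_deriv ?_
  cases i with
  | zero => simp
  | succ i =>
    simp only [Nat.add_sub_cancel, Pi.inv_apply, id, ofReal_one, div_eq_mul_inv, ← inv_pow]
    ring

theorem hasSecondDerivAt_inv_add_pow (i : ℕ) {y : ℝ} (hy : y ≠ 0) :
    HasSecondDerivAt (fun t : ℝ => ((y + t : ℝ) : ℂ)⁻¹ ^ i) (-i * (y : ℂ)⁻¹ ^ (i + 1))
      (i * (i + 1) * (y : ℂ)⁻¹ ^ (i + 2)) 0 := by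
  refine ⟨fun t => -i * ((y + t : ℝ) : ℂ)⁻¹ ^ (i + 1), ?_, ?_, by simp⟩
  · have hlim : Tendsto (fun t : ℝ => y + t) (𝓝 0) (𝓝 y) :=
      Continuous.tendsto' (by fun_prop) _ _ (by simp)
    filter_upwards [hlim.eventually_ne hy] with t ht
    exact (hasDerivAt_inv_ofReal_pow i ht).comp_const_add y t
  · have h := hasDerivAt_inv_ofReal_pow (i + 1) (y := y + 0) (by simpa using hy)
    refine ((h.comp_const_add y 0).const_mul (-i : ℂ)).congr_deriv ?_
    push_cast
    ring_nf

theorem hasLaplacianAt_inv_im_pow_mul {h h' : ℂ → ℂ} {h₂ : ℂ} (i : ℕ) (hz : z.im ≠ 0)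
    (hh : ∀ᶠ w in 𝓝 z, HasDerivAt h (h' w) w) (hh' : HasDerivAt h' h₂ z) :
    HasLaplacianAt (fun w => (w.im : ℂ)⁻¹ ^ i * h w)
      (i * (i + 1) * (z.im : ℂ)⁻¹ ^ (i + 2) * h z - 2 * i * I * (z.im : ℂ)⁻¹ ^ (i + 1) * h' z)
      z := by
  have hx := (HasSecondDerivAt.const ((z.im : ℂ)⁻¹ ^ i) 0).mul
    (hasSecondDerivAt_comp_add_mul 1 hh hh')
  have hy := (hasSecondDerivAt_inv_add_pow i hz).mul (hasSecondDerivAt_comp_add_mul I hh hh')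
  refine ⟨_, _, _, _, by simpa using hx, by simpa using hy, ?_⟩
  linear_combination (z.im : ℂ)⁻¹ ^ i * h₂ * I_mul_I

end HasLaplacianAt

section MaximumPrinciple

open Filter Topology

variable {u : ℂ → ℝ}

theorem apply_smul_eq_of_add_one_of_neg_inv (hT : ∀ z ∈ UH, u (z + 1) = u z)
    (hS : ∀ z ∈ UH, u (-1 / z) = u z) (γ : SL2Z) (z : UpperHalfPlane) :
    u ((γ • z : UpperHalfPlane) : ℂ) = u z := by
  have hγ : γ ∈ Subgroup.closure {ModularGroup.S, ModularGroup.T} := by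
    rw [SpecialLinearGroup.SL2Z_generators]
    exact Subgroup.mem_top γ
  induction hγ using Subgroup.closure_induction generalizing z with
  | mem γ hγ =>
    rcases hγ with rfl | rfl
    · rw [UpperHalfPlane.modular_S_smul, ← hS z z.2]
      congr 1
      simp [neg_div, inv_neg]
    · rw [UpperHalfPlane.modular_T_smul, ← hT z z.2]
      congr 1
      simp [add_comm]
  | one => rw [one_smul]
  | mul γ δ _ _ hγ hδ => rw [mul_smul, hγ, hδ]
  | inv γ _ hγ => rw [← hγ, smul_inv_smul]

theorem exists_mem_box_apply_eq_or_lt_im (hT : ∀ z ∈ UH, u (z + 1) = u z)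
    (hS : ∀ z ∈ UH, u (-1 / z) = u z) (M : ℝ) {z : ℂ} (hz : z ∈ UH) :
    ∃ w : ℂ, u w = u z ∧ (M < w.im ∨ w ∈ Icc (-1) 1 ×ℂ Icc (1 / 2) M) := by
  obtain ⟨γ, hγ⟩ := ModularGroup.exists_smul_mem_fd (⟨z, hz⟩ : UpperHalfPlane)
  set w := γ • (⟨z, hz⟩ : UpperHalfPlane)
  refine ⟨w, apply_smul_eq_of_add_one_of_neg_inv hT hS γ ⟨z, hz⟩, ?_⟩
  refine (lt_or_ge M w.im).imp_right fun hM => mem_reProdIm.mpr ⟨?_, ?_, hM⟩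
  · have hre : |w.re| ≤ 1 / 2 := hγ.2
    exact abs_le.mp (hre.trans (by norm_num))
  · have him := ModularGroup.three_le_four_mul_im_sq_of_mem_fd hγ
    have hpos := w.im_pos
    change 1 / 2 ≤ w.im
    nlinarith

theorem nonpos_of_isLocalMax_nonpos (hu : ContinuousOn u UH) (hT : ∀ z ∈ UH, u (z + 1) = u z)
    (hS : ∀ z ∈ UH, u (-1 / z) = u z) (hcusp : Tendsto u (comap im atTop) (𝓝 0))
    (hmax : ∀ z ∈ UH, IsLocalMax u z → u z ≤ 0) {z : ℂ} (hz : z ∈ UH) : u z ≤ 0 := by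
  by_contra! hpos
  obtain ⟨M, hM⟩ := eventually_atTop.mp (eventually_comap.mp (hcusp.eventually_lt_const hpos))
  have hbox : Icc (-1) 1 ×ℂ Icc (1 / 2) M ⊆ UH := fun w hw =>
    one_half_pos.trans_le (mem_reProdIm.mp hw).2.1
  have hreduce {w : ℂ} (hw : w ∈ UH) (hle : u z ≤ u w) :
      ∃ w' ∈ Icc (-1) 1 ×ℂ Icc (1 / 2) M, u w' = u w := by
    obtain ⟨w', heq, him | hmem⟩ := exists_mem_box_apply_eq_or_lt_im hT hS M hw
    · exact absurd (hM _ him.le w' rfl) (heq ▸ hle).not_gt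
    · exact ⟨w', hmem, heq⟩
  obtain ⟨z', hz', heq⟩ := hreduce hz le_rfl
  obtain ⟨m, hm, hmle⟩ := (isCompact_Icc.reProdIm isCompact_Icc).exists_isMaxOn ⟨z', hz'⟩
    (hu.mono hbox)
  have hzm : u z ≤ u m := heq ▸ hmle hz'
  refine (hpos.trans_le hzm).not_ge (hmax m (hbox hm) ?_)
  filter_upwards [isOpen_UH.mem_nhds (hbox hm)] with w hw
  rcases le_total (u w) (u z) with hle | hle
  · exact hle.trans hzm
  · obtain ⟨w', hw', heq'⟩ := hreduce hw hle
    exact heq' ▸ hmle hw'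

theorem re_nonpos_of_hasLaplacianAt {U : ℂ → ℂ} {c : ℝ} (hc : 0 < c)
    (hU : ContinuousOn U UH) (hT : ∀ z ∈ UH, (U (z + 1)).re = (U z).re)
    (hS : ∀ z ∈ UH, (U (-1 / z)).re = (U z).re) (hcusp : Tendsto U (comap im atTop) (𝓝 0))
    (hlap : ∀ z ∈ UH, HasLaplacianAt U (c * (z.im : ℂ)⁻¹ ^ 2 * U z) z) {z : ℂ} (hz : z ∈ UH) :
    (U z).re ≤ 0 := by
  refine nonpos_of_isLocalMax_nonpos (continuous_re.comp_continuousOn hU) hT hS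
    (continuous_re.tendsto' 0 0 zero_re |>.comp hcusp) (fun w hw hmax => ?_) hz
  have hle := (hlap w hw).re_nonpos_of_isLocalMax hmax
  rw [← ofReal_inv, ← ofReal_pow, ← ofReal_mul, re_ofReal_mul] at hle
  have hw' : 0 < w.im⁻¹ := inv_pos.mpr hw
  exact nonpos_of_mul_nonpos_right hle (by positivity)

theorem re_eq_zero_of_hasLaplacianAt {U : ℂ → ℂ} {c : ℝ} (hc : 0 < c)
    (hU : ContinuousOn U UH) (hT : ∀ z ∈ UH, (U (z + 1)).re = (U z).re)
    (hS : ∀ z ∈ UH, (U (-1 / z)).re = (U z).re) (hcusp : Tendsto U (comap im atTop) (𝓝 0))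
    (hlap : ∀ z ∈ UH, HasLaplacianAt U (c * (z.im : ℂ)⁻¹ ^ 2 * U z) z) {z : ℂ} (hz : z ∈ UH) :
    (U z).re = 0 := by
  refine le_antisymm (re_nonpos_of_hasLaplacianAt hc hU hT hS hcusp hlap hz) ?_
  have hneg := re_nonpos_of_hasLaplacianAt (U := fun w => -1 * U w) hc (hU.const_mul (-1))
    (by simpa using hT) (by simpa using hS) (by simpa using hcusp.const_mul (-1))
    (fun w hw => by simpa [mul_left_comm] using (hlap w hw).const_mul (-1)) hz
  simpa using hneg

end MaximumPrinciple

/-! ### The Laplace eigenfunction attached to a cusp form -/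

section EigenCoeff

/-- The coefficients of the iterated primitives in the Eichler integral of
`((X - z) (X - conj z) / im z) ^ K`; they solve the two-term recursion of a Laplace eigenfunction
with eigenvalue `K (K + 1)`. -/
def eigenCoeff (K i : ℕ) : ℂ :=
  (-1) ^ (K + i) * (K + i).factorial * K.choose i * (2 * I) ^ (K - i)

theorem eigenCoeff_zero_ne_zero (K : ℕ) : eigenCoeff K 0 ≠ 0 := by
  simp [eigenCoeff, Nat.factorial_ne_zero]

theorem eigenCoeff_succ {K i : ℕ} (hi : i ≤ K) :
    2 * I * (i + 1) * eigenCoeff K (i + 1) =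
      eigenCoeff K i * (i * (i + 1) - K * (K + 1)) := by
  obtain ⟨m, rfl⟩ := Nat.exists_eq_add_of_le hi
  rcases m with _ | m
  · simp [eigenCoeff]
  · have hchoose : ((i + (m + 1)).choose (i + 1) : ℂ) * (i + 1) =
        (i + (m + 1)).choose i * (m + 1) := by
      have h := Nat.choose_succ_right_eq (i + (m + 1)) i
      rw [Nat.add_sub_cancel_left] at h
      exact_mod_cast h
    rw [eigenCoeff, eigenCoeff, Nat.add_sub_cancel_left, show i + (m + 1) - (i + 1) = m by lia,
      ← add_assoc _ i 1, Nat.factorial_succ, pow_succ (-1 : ℂ), pow_succ (2 * I)]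
    push_cast
    linear_combination (-(2 * I) * (2 * I) ^ m * (-1) ^ (i + (m + 1) + i) *
      (i + (m + 1) + i + 1) * (i + (m + 1) + i).factorial) * hchoose

end EigenCoeff

section TaylorExpansion

open Polynomial

variable {g : ℂ → ℂ} {K : ℕ} {z : ℂ}

theorem eval_iterate_derivative_eq_factorial_mul_coeff_taylor {R : Type*} [CommRing R] (P : R[X])
    (r : R) (j : ℕ) : (derivative^[j] P).eval r = j.factorial * (taylor r P).coeff j := by
  rw [taylor_coeff, ← factorial_smul_hasseDeriv, LinearMap.smul_apply, eval_smul, nsmul_eq_mul]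

theorem taylor_quadPow_normSq (K : ℕ) (hz : z.im ≠ 0) :
    taylor z (quadPow K ((1 / z.im : ℝ) : ℂ) ((-2 * z.re / z.im : ℝ) : ℂ)
      ((normSq z / z.im : ℝ) : ℂ)) =
      C ((z.im : ℂ)⁻¹ ^ K) * ((X + C (2 * I * z.im)) ^ K * X ^ K) := by
  have hz' : (z.im : ℂ) ≠ 0 := ofReal_ne_zero.mpr hz
  rw [taylor_apply, quadPow_comp_X_add_C, quadPow, ← mul_pow, C_pow, ← mul_pow]
  congr 1
  refine Polynomial.funext fun w => ?_
  simp only [eval_add, eval_mul, eval_C, eval_pow, eval_X, normSq_apply]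
  push_cast
  have hdecomp := re_add_im z
  generalize (z.re : ℂ) = x at *
  generalize (z.im : ℂ) = y at *
  subst hdecomp
  field_simp
  linear_combination y ^ 2 * I_sq

theorem eichlerIntegral_quadPow_normSq (g : ℂ → ℂ) (K : ℕ) (hz : z.im ≠ 0) :
    eichlerIntegral g K z (quadPow K ((1 / z.im : ℝ) : ℂ) ((-2 * z.re / z.im : ℝ) : ℂ)
      ((normSq z / z.im : ℝ) : ℂ)) =
      ∑ i ∈ Finset.range (K + 1),
        eigenCoeff K i * ((z.im : ℂ)⁻¹ ^ i * iteratedPrimitive g (K + 1 + i) z) := by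
  have hz' : (z.im : ℂ) ≠ 0 := ofReal_ne_zero.mpr hz
  rw [eichlerIntegral_apply, show 2 * K + 1 = K + (K + 1) by lia, Finset.sum_range_add,
    Finset.sum_eq_zero, zero_add]
  · refine Finset.sum_congr rfl fun i hi => ?_
    obtain ⟨m, rfl⟩ := Nat.exists_eq_add_of_le (Finset.mem_range_succ_iff.mp hi)
    rw [eval_iterate_derivative_eq_factorial_mul_coeff_taylor, taylor_quadPow_normSq _ hz,
      coeff_C_mul, coeff_mul_X_pow', if_pos (by lia), Nat.add_sub_cancel_left,
      coeff_X_add_C_pow, eigenCoeff, Nat.add_sub_cancel_left, add_right_comm _ i 1]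
    have hpow : (z.im : ℂ)⁻¹ ^ (i + m) * (z.im : ℂ) ^ m = (z.im : ℂ)⁻¹ ^ i := by
      rw [pow_add, mul_assoc, ← mul_pow, inv_mul_cancel₀ hz', one_pow, mul_one]
    rw [← hpow]
    ring
  · intro j hj
    rw [eval_iterate_derivative_eq_factorial_mul_coeff_taylor, taylor_quadPow_normSq _ hz,
      coeff_C_mul, coeff_mul_X_pow', if_neg (by simpa using hj)]
    simp

end TaylorExpansion

section Eigenfunction

open Filter Topology

variable {g : ℂ → ℂ} {K : ℕ} {z : ℂ}

theorem hasLaplacianAt_sum_inv_im_pow_mul {h : ℕ → ℂ → ℂ} {a : ℕ → ℂ} (hz : z ∈ UH)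
    (hh : ∀ n, ∀ w ∈ UH, HasDerivAt (h (n + 1)) (h n w) w)
    (ha : ∀ i ≤ K, 2 * I * (i + 1) * a (i + 1) = a i * (i * (i + 1) - K * (K + 1))) :
    HasLaplacianAt (fun w => ∑ i ∈ Finset.range (K + 1), a i * ((w.im : ℂ)⁻¹ ^ i * h (i + 2) w))
      (K * (K + 1) * (z.im : ℂ)⁻¹ ^ 2 *
        ∑ i ∈ Finset.range (K + 1), a i * ((z.im : ℂ)⁻¹ ^ i * h (i + 2) z)) z := by
  have hlap := HasLaplacianAt.sum (Finset.range (K + 1)) fun i _ =>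
    (hasLaplacianAt_inv_im_pow_mul i (im_ne_zero_of_mem_UH hz)
      ((isOpen_UH.eventually_mem hz).mono (hh (i + 1))) (hh i z hz)).const_mul (a i)
  convert hlap using 1
  set Y : ℂ := (z.im : ℂ)⁻¹
  have hlast : a (K + 1) = 0 := by
    have h := ha K le_rfl
    rw [sub_self, mul_zero] at h
    exact (mul_eq_zero.mp h).resolve_left
      (mul_ne_zero (mul_ne_zero two_ne_zero I_ne_zero) (Nat.cast_add_one_ne_zero K))
  have hshift : ∑ i ∈ Finset.range (K + 1), i * a i * Y ^ (i + 1) * h (i + 1) z =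
      ∑ i ∈ Finset.range (K + 1), (i + 1) * a (i + 1) * Y ^ (i + 2) * h (i + 2) z := by
    rw [Finset.sum_range_succ', Finset.sum_range_succ _ K, hlast]
    simp
  calc K * (K + 1) * Y ^ 2 * ∑ i ∈ Finset.range (K + 1), a i * (Y ^ i * h (i + 2) z)
      = ∑ i ∈ Finset.range (K + 1), a i * (i * (i + 1)) * Y ^ (i + 2) * h (i + 2) z -
        2 * I * ∑ i ∈ Finset.range (K + 1), (i + 1) * a (i + 1) * Y ^ (i + 2) * h (i + 2) z := by
        rw [Finset.mul_sum, Finset.mul_sum, ← Finset.sum_sub_distrib]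
        refine Finset.sum_congr rfl fun i hi => ?_
        linear_combination Y ^ (i + 2) * h (i + 2) z * ha i (Finset.mem_range_succ_iff.mp hi)
    _ = _ := by
        rw [← hshift, Finset.mul_sum, ← Finset.sum_sub_distrib]
        exact Finset.sum_congr rfl fun i _ => by ring

/-- The Eichler integral of `((X - z) (X - conj z) / im z) ^ K g`, normalised by `I ^ K` and
corrected by a multiple of `(im z)⁻¹ ^ K` so that its real part becomes modular invariant when the
real periods of `g` vanish. -/
def eichlerEigenfunction (g : ℂ → ℂ) (K : ℕ) (z : ℂ) : ℂ :=
  I ^ K * ∑ i ∈ Finset.range (K + 1),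
    eigenCoeff K i * ((z.im : ℂ)⁻¹ ^ i * iteratedPrimitive g (K + 1 + i) z) +
    periodCoeff g K 0 * (z.im : ℂ)⁻¹ ^ K

theorem re_eichlerEigenfunction (g : ℂ → ℂ) (K : ℕ) (hz : z.im ≠ 0) :
    (eichlerEigenfunction g K z).re =
      reEichlerIntegral g K (1 / z.im) (-2 * z.re / z.im) (normSq z / z.im) z +
        periodCoeff g K 0 * (1 / z.im) ^ K := by
  rw [eichlerEigenfunction, ← eichlerIntegral_quadPow_normSq g K hz, add_re, ← ofReal_inv,
    ← ofReal_pow, re_ofReal_mul, ofReal_re, one_div]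
  rfl

theorem hasLaplacianAt_eichlerEigenfunction (hg : IsCuspidal g) (hK : 1 ≤ K) (hz : z ∈ UH) :
    HasLaplacianAt (eichlerEigenfunction g K)
      (K * (K + 1) * (z.im : ℂ)⁻¹ ^ 2 * eichlerEigenfunction g K z) z := by
  obtain ⟨N, rfl⟩ := Nat.exists_eq_add_of_le' hK
  have hsum := (hasLaplacianAt_sum_inv_im_pow_mul (K := N + 1)
    (h := fun n => iteratedPrimitive g (N + n)) hz
    (fun n _ => hasDerivAt_iteratedPrimitive hg (N + n)) fun _ => eigenCoeff_succ).const_mul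
      (I ^ (N + 1))
  have hpow := (hasLaplacianAt_inv_im_pow_mul (N + 1) (im_ne_zero_of_mem_UH hz)
    (Eventually.of_forall fun w => hasDerivAt_const w (1 : ℂ))
    (hasDerivAt_const z 0)).const_mul (periodCoeff g (N + 1) 0 : ℂ)
  have hindex (i : ℕ) : N + (i + 2) = N + 1 + 1 + i := by lia
  simp only [hindex, mul_one] at hsum hpow
  convert hsum.add hpow using 1
  · rfl
  · rw [eichlerEigenfunction]
    ring

theorem continuousOn_eichlerEigenfunction (hg : IsCuspidal g) (K : ℕ) :
    ContinuousOn (eichlerEigenfunction g K) UH := by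
  have hinv : ContinuousOn (fun z : ℂ => (z.im : ℂ)⁻¹) UH :=
    ContinuousOn.inv₀ (by fun_prop) fun z hz => ofReal_ne_zero.mpr (im_ne_zero_of_mem_UH hz)
  refine (continuousOn_const.mul (continuousOn_finsetSum _ fun i _ =>
    continuousOn_const.mul ((hinv.pow i).mul fun z hz => ?_))).add
      (continuousOn_const.mul (hinv.pow K))
  exact ((isCuspidal_iteratedPrimitive hg _).differentiableAt z hz).continuousAt.continuousWithinAt

theorem tendsto_eichlerEigenfunction (hg : IsCuspidal g) (hK : K ≠ 0) :
    Tendsto (eichlerEigenfunction g K) (comap im atTop) (𝓝 0) := by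
  have hinv : Tendsto (fun z : ℂ => (z.im : ℂ)⁻¹) (comap im atTop) (𝓝 0) := by
    simpa [Function.comp_def] using
      (continuous_ofReal.tendsto 0).comp (tendsto_inv_atTop_zero.comp tendsto_comap)
  have hterm (i : ℕ) (_ : i ∈ Finset.range (K + 1)) :=
    ((hinv.pow i).mul (isCuspidal_iteratedPrimitive hg (K + 1 + i)).tendsto_cusp).const_mul
      (eigenCoeff K i)
  unfold eichlerEigenfunction
  simpa [hK] using ((tendsto_finsetSum _ hterm).const_mul (I ^ K)).add
    ((hinv.pow K).const_mul (periodCoeff g K 0 : ℂ))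

theorem re_eichlerEigenfunction_add_one (hg : IsCuspidal g) (K : ℕ) (hz : z ∈ UH) :
    (eichlerEigenfunction g K (z + 1)).re = (eichlerEigenfunction g K z).re := by
  have hz0 := im_ne_zero_of_mem_UH hz
  have hz1 : (z + 1).im = z.im := by simp
  rw [re_eichlerEigenfunction g K (hz1 ▸ hz0), re_eichlerEigenfunction g K hz0, hz1]
  have h := reEichlerIntegral_add_int (K := K) hg (1 / z.im) (-2 * (z + 1).re / z.im)
    (normSq (z + 1) / z.im) 1 hz
  rw [Int.cast_one] at h
  rw [h, normSq_apply, normSq_apply, add_re, add_im, one_re, one_im, Int.cast_one]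
  congr 2 <;> field_simp <;> ring

theorem IsPeriodFreeCuspForm.re_eichlerEigenfunction_neg_inv (hg : IsPeriodFreeCuspForm K g)
    (hK : 1 ≤ K) (hz : z ∈ UH) :
    (eichlerEigenfunction g K (-1 / z)).re = (eichlerEigenfunction g K z).re := by
  have hz0 := im_ne_zero_of_mem_UH hz
  have hnorm : normSq z ≠ 0 := (normSq_pos.mpr (ne_zero_of_mem_UH hz)).ne'
  have hinv : -1 / z = -z⁻¹ := by rw [neg_div, one_div]
  have hre : (-1 / z).re = -z.re / normSq z := by rw [hinv, neg_re, inv_re, neg_div]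
  have him : (-1 / z).im = z.im / normSq z := by rw [hinv, neg_im, inv_im, neg_div, neg_neg]
  have hnormSq : normSq (-1 / z) = (normSq z)⁻¹ := by rw [hinv, normSq_neg, normSq_inv]
  rw [re_eichlerEigenfunction g K (im_ne_zero_of_mem_UH (neg_inv_mem_UH hz)),
    re_eichlerEigenfunction g K hz0,
    reEichlerIntegral_neg_inv hg.isCuspidal (fun _ => hg.apply_neg_inv) _ _ _ hz,
    quadPowPairing_eq hK (fun a b => hg.wordPairing_eq_zero a b 0), hre, him, hnormSq,
    show (normSq z)⁻¹ / (z.im / normSq z) = 1 / z.im by field_simp,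
    show -(-2 * (-z.re / normSq z) / (z.im / normSq z)) = -2 * z.re / z.im by field_simp,
    show 1 / (z.im / normSq z) = normSq z / z.im by field_simp]
  ring

theorem IsPeriodFreeCuspForm.re_eichlerEigenfunction_eq_zero (hg : IsPeriodFreeCuspForm K g)
    (hK : 1 ≤ K) (hz : z ∈ UH) : (eichlerEigenfunction g K z).re = 0 :=
  re_eq_zero_of_hasLaplacianAt (c := K * (K + 1)) (by positivity)
    (continuousOn_eichlerEigenfunction hg.isCuspidal K)
    (fun _ => re_eichlerEigenfunction_add_one hg.isCuspidal K)
    (fun _ => hg.re_eichlerEigenfunction_neg_inv hK)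
    (tendsto_eichlerEigenfunction hg.isCuspidal (Nat.one_le_iff_ne_zero.mp hK))
    (fun w hw => by simpa using hasLaplacianAt_eichlerEigenfunction hg.isCuspidal hK hw) hz

end Eigenfunction

/-! ### Vanishing of cusp forms with vanishing real periods -/

section ReEqConst

open Function.Periodic

theorem eq_of_forall_mem_sphere_re_eq {f : ℂ → ℂ} {c z : ℂ} {r a : ℝ} (hr : 0 < r)
    (hf : DiffContOnCl ℂ f (ball c r)) (ha : ∀ w ∈ sphere c r, (f w).re = a)
    (hz : z ∈ closedBall c r) : f z = f c := by
  have hexp (s : ℝ) {w : ℂ} (hw : w ∈ closedBall c r) : s * ((f w).re - a) ≤ 0 := by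
    have hle := norm_le_of_forall_mem_frontier_norm_le (C := 1) isBounded_ball
      (f := fun w => cexp (s * (f w - a)))
      (differentiable_exp.comp_diffContOnCl ((hf.sub_const (a : ℂ)).const_smul (s : ℂ)))
      (fun w hw => by
        rw [frontier_ball _ hr.ne'] at hw
        simp [norm_exp, ha w hw])
      (by rwa [closure_ball _ hr.ne'])
    simpa [norm_exp] using hle
  have hre (w : ℂ) (hw : w ∈ closedBall c r) : (f w).re = a := by
    have h₁ := hexp 1 hw
    have h₂ := hexp (-1) hw
    linarith
  obtain ⟨b, hb⟩ := AnalyticOnNhd.eq_const_of_re_eq_const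
    (hf.differentiableOn.analyticOnNhd isOpen_ball)
    (fun w hw => hre w (ball_subset_closedBall hw)) isOpen_ball
    ⟨nonempty_ball.mpr hr, (convex_ball c r).isPreconnected⟩
  have hclosed : EqOn f (fun _ => b) (closure (ball c r)) :=
    Set.EqOn.of_subset_closure hb hf.continuousOn continuousOn_const subset_closure subset_rfl
  rw [closure_ball _ hr.ne'] at hclosed
  rw [hclosed hz, hclosed (mem_closedBall_self hr.le)]

theorem IsCuspidal.eq_zero_of_re_eq_const {f : ℂ → ℂ} (hf : IsCuspidal f) {y a : ℝ} (hy : 0 < y)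
    (ha : ∀ z, z.im = y → (f z).re = a) {z : ℂ} (hz : y ≤ z.im) : f z = 0 := by
  obtain ⟨H, hH, hH0, hHf⟩ := hf.exists_eqOn_comp_qParam
  have hnorm (w : ℂ) : ‖qParam 1 w‖ = Real.exp (-2 * Real.pi * w.im) := by
    rw [norm_qParam, div_one]
  have hr : Real.exp (-2 * Real.pi * y) < 1 := by
    rw [Real.exp_lt_one_iff]
    nlinarith [Real.pi_pos]
  have hsub : closedBall (0 : ℂ) (Real.exp (-2 * Real.pi * y)) ⊆ ball 0 1 :=
    closedBall_subset_ball hr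
  rw [← hHf (hy.trans_le hz), Function.comp_apply, ← hH0]
  refine eq_of_forall_mem_sphere_re_eq (a := a) (Real.exp_pos _)
    (hH.diffContOnCl_ball hsub) (fun q hq => ?_) ?_
  · rw [mem_sphere_zero_iff_norm] at hq
    obtain ⟨w, hw, rfl⟩ := exists_qParam_eq (hsub (mem_closedBall_zero_iff.mpr hq.le))
      (norm_pos_iff.mp (hq ▸ Real.exp_pos _))
    rw [hnorm, Real.exp_eq_exp] at hq
    have hwy : w.im = y := mul_left_cancel₀ (by simp [Real.pi_ne_zero]) hq
    rw [← Function.comp_apply (f := H), hHf hw, ha w hwy]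
  · rw [mem_closedBall_zero_iff, hnorm, Real.exp_le_exp]
    nlinarith [Real.pi_pos]

end ReEqConst

section Vanishing

open Filter Topology

variable {g : ℂ → ℂ} {K : ℕ}

theorem isCuspidal_sum_mul {ι : Type*} (s : Finset ι) {h : ι → ℂ → ℂ}
    (hh : ∀ i ∈ s, IsCuspidal (h i)) (c : ι → ℂ) : IsCuspidal fun z => ∑ i ∈ s, c i * h i z where
  differentiableAt z hz :=
    DifferentiableAt.fun_sum fun i hi => ((hh i hi).differentiableAt z hz).const_mul (c i)
  apply_add_one z hz := Finset.sum_congr rfl fun i hi => by rw [(hh i hi).apply_add_one z hz]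
  tendsto_cusp := by
    simpa using tendsto_finsetSum s fun i hi => (hh i hi).tendsto_cusp.const_mul (c i)

namespace IsPeriodFreeCuspForm

theorem sum_eigenCoeff_mul_eq_zero (hg : IsPeriodFreeCuspForm K g) (hK : 1 ≤ K) {y : ℝ}
    (hy : 0 < y) {z : ℂ} (hz : y ≤ z.im) :
    ∑ i ∈ Finset.range (K + 1),
      eigenCoeff K i * iteratedPrimitive g (K + 1 + i) z * (y : ℂ)⁻¹ ^ i = 0 := by
  have hcusp := isCuspidal_sum_mul (Finset.range (K + 1))
    (fun i _ => isCuspidal_iteratedPrimitive hg.isCuspidal (K + 1 + i))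
    fun i => I ^ K * (eigenCoeff K i * (y : ℂ)⁻¹ ^ i)
  have hzero := hcusp.eq_zero_of_re_eq_const (a := -(periodCoeff g K 0 * y⁻¹ ^ K)) hy
    (fun w hw => ?_) hz
  · have hI : I ^ K ≠ 0 := pow_ne_zero K I_ne_zero
    refine (mul_eq_zero.mp (Eq.trans ?_ hzero)).resolve_left hI
    rw [Finset.mul_sum]
    exact Finset.sum_congr rfl fun i _ => by ring
  · have hre := hg.re_eichlerEigenfunction_eq_zero hK (z := w) (hw.symm ▸ hy :)
    rw [eichlerEigenfunction, hw, add_re, ← ofReal_inv, ← ofReal_pow, re_ofReal_mul, ofReal_re,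
      Finset.mul_sum] at hre
    rw [← eq_neg_of_add_eq_zero_left hre]
    congr 1
    exact Finset.sum_congr rfl fun i _ => by push_cast; ring

theorem eqOn_zero (hg : IsPeriodFreeCuspForm K g) (hK : 1 ≤ K) : EqOn g 0 UH := by
  refine eqOn_zero_of_iteratedPrimitive hg.isCuspidal (l := K + 1) fun z hz => ?_
  have hz' : 0 < z.im := hz
  let P : Polynomial ℂ := ∑ i ∈ Finset.range (K + 1),
    Polynomial.monomial i (eigenCoeff K i * iteratedPrimitive g (K + 1 + i) z)
  have hroot (t : ℝ) (ht : z.im⁻¹ ≤ t) : P.eval (t : ℂ) = 0 := by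
    have ht0 : 0 < t := (inv_pos.mpr hz').trans_le ht
    have h := hg.sum_eigenCoeff_mul_eq_zero hK (inv_pos.mpr ht0) (inv_le_of_inv_le₀ hz' ht)
    rw [ofReal_inv, inv_inv] at h
    simpa only [P, Polynomial.eval_finsetSum, Polynomial.eval_monomial] using h
  have hP : P = 0 := P.eq_zero_of_infinite_isRoot <|
    ((Ici_infinite z.im⁻¹).image ofReal_injective.injOn).mono (image_subset_iff.mpr hroot)
  have hcoeff : P.coeff 0 = 0 := by rw [hP, Polynomial.coeff_zero]
  simp only [P, Polynomial.finsetSum_coeff, Polynomial.coeff_monomial, Finset.sum_ite_eq',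
    Finset.mem_range, Nat.zero_lt_succ, if_true] at hcoeff
  exact (mul_eq_zero.mp hcoeff).resolve_left (eigenCoeff_zero_ne_zero K)

end IsPeriodFreeCuspForm

end Vanishing

/-- Existence and uniqueness of the canonical meromorphic modular form of weight `2k`
associated with the divisor `∑ᵢ αᵢ[ϱᵢ]`, for points `ϱᵢ ∈ ℍ` in pairwise distinct
`SL₂(ℤ)`-orbits and real coefficients `αᵢ`; uniqueness means any two such functions agree
on `ℍ ∖ ⋃ᵢ SL₂(ℤ)ϱᵢ` (off the poles, where the properties constrain them). -/
theorem canonical_meromorphic_modular_form_exists_unique (k : ℕ) (hk : 2 ≤ k)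
    (n : ℕ) (ϱ : Fin n → ℂ) (hϱ : ∀ i, ϱ i ∈ UH)
    (hdist : ∀ i j, i ≠ j → ∀ γ : SL2Z, moeb γ (ϱ i) ≠ ϱ j) (α : Fin n → ℝ) :
    ∃ f : ℂ → ℂ, IsCanonicalForm k ϱ α f ∧
      ∀ g : ℂ → ℂ, IsCanonicalForm k ϱ α g → Set.EqOn g f (UH \ orbitUnion ϱ) := by
  have hf : IsCanonicalForm k ϱ α (canonicalForm k ϱ α) :=
    isCanonicalForm_canonicalForm hk hϱ fun i j hij ⟨γ, h⟩ => hdist i j hij γ h.symm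
  refine ⟨canonicalForm k ϱ α, hf, fun g hg z hz => ?_⟩
  obtain ⟨K, rfl⟩ := Nat.exists_eq_add_of_le' (one_le_two.trans hk)
  obtain ⟨d, hd, heq⟩ := exists_isPeriodFreeCuspForm_eqOn_sub hϱ hg hf
  exact sub_eq_zero.mp ((heq hz).symm.trans (hd.eqOn_zero (by lia) hz.1))
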